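/- For the six-vertex model with weights a = b = 1 and c = 2, the free energy exists and equals f(1,1,2) = 2·log(2·Γ(5/4)/Γ(3/4)), where Γ denotes the Gamma function. -/

import Mathlib

open MeasureTheory Filter
open scoped Real BigOperators

noncomputable section

namespace SixVertexFE

/-- Configurations on the `N × M` torus: each vertex `v` carries a horizontal edge
(from `v` to `v+(1,0)`) and a vertical edge (from `v` to `v+(0,1)`).
First component: `true` = the horizontal edge points East.
Second component: `true` = the vertical edge points North. -/
abbrev Cfg (N M : ℕ) := ((Fin N × Fin M) → Bool) × ((Fin N × Fin M) → Bool)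

/-- the predecessor (`i - 1`) on the discrete circle `Fin N`. -/
def predF {N : ℕ} (i : Fin N) : Fin N := ⟨(i.1 + (N - 1)) % N, Nat.mod_lt _ i.pos⟩

/-- number of edges incident to `v` that point towards `v`. -/
abbrev inArrows {N M : ℕ} (ω : Cfg N M) (v : Fin N × Fin M) : ℕ :=
  (if ω.1 (predF v.1, v.2) = true then 1 else 0) +
  (if ω.1 v = false then 1 else 0) +
  (if ω.2 (v.1, predF v.2) = true then 1 else 0) +
  (if ω.2 v = false then 1 else 0)

/-- the ice rule: exactly two incoming arrows at every vertex. -/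
abbrev IsSixVertex {N M : ℕ} (ω : Cfg N M) : Prop := ∀ v, inArrows ω v = 2

/-- weight of a vertex: `c` if the two horizontal edges at `v` point in opposite
directions, `a` for all-East-all-North or all-West-all-South, `b` for
all-East-all-South or all-West-all-North. -/
def vWeight (a b c : ℝ) {N M : ℕ} (ω : Cfg N M) (v : Fin N × Fin M) : ℝ :=
  if ω.1 (predF v.1, v.2) ≠ ω.1 v then c
  else if (ω.1 (predF v.1, v.2) = true ∧ ω.1 v = true ∧
            ω.2 (v.1, predF v.2) = true ∧ ω.2 v = true) ∨
          (ω.1 (predF v.1, v.2) = false ∧ ω.1 v = false ∧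
            ω.2 (v.1, predF v.2) = false ∧ ω.2 v = false) then a
  else if (ω.1 (predF v.1, v.2) = true ∧ ω.1 v = true ∧
            ω.2 (v.1, predF v.2) = false ∧ ω.2 v = false) ∨
          (ω.1 (predF v.1, v.2) = false ∧ ω.1 v = false ∧
            ω.2 (v.1, predF v.2) = true ∧ ω.2 v = true) then b
  else 0

/-- weight of a configuration. -/
def W (a b c : ℝ) {N M : ℕ} (ω : Cfg N M) : ℝ := ∏ v, vWeight a b c ω v

/-- partition function of the six-vertex model on the `N × M` torus. -/
def Z (N M : ℕ) (a b c : ℝ) : ℝ :=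
  ∑ ω : Cfg N M, if IsSixVertex ω then W a b c ω else 0

/-- number of North-pointing vertical edges in row `j`. -/
abbrev RowCount {N M : ℕ} (ω : Cfg N M) (j : Fin M) : ℕ :=
  (Finset.univ.filter fun i : Fin N => ω.2 (i, j) = true).card

/-- partition function restricted to configurations with exactly `n` up arrows per row. -/
def Zn (N M n : ℕ) (a b c : ℝ) : ℝ :=
  ∑ ω : Cfg N M, if IsSixVertex ω ∧ (∀ j, RowCount ω j = n) then W a b c ω else 0

/-- `F` is the per-site free energy of the six-vertex model with weights `a, b, c`:
the inner limit in `M` exists for every even `N ≥ 2`, and the resulting quantities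
converge to `F` as `N → ∞` along even `N`. -/
def FreeEnergyIs (a b c F : ℝ) : Prop :=
  ∃ g : ℕ → ℝ,
    (∀ N : ℕ, Even N → 2 ≤ N →
      Tendsto (fun M : ℕ => Real.log (Z N M a b c) / (M * N)) atTop (nhds (g N))) ∧
    Tendsto g (atTop ⊓ Filter.principal {N | Even N}) (nhds F)

/-- `L = f_N^{(n)}(a,b,c)`, the free energy of the six-vertex model in the sector
with `n` up arrows per row. -/
def SectorFE (N n : ℕ) (a b c L : ℝ) : Prop :=
  Tendsto (fun M : ℕ => Real.log (Zn N M n a b c) / (N * M)) atTop (nhds L)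

end SixVertexFE

namespace SixVertexFE

/-- row-to-row transfer matrix of a local tensor. -/
def TM {R κ : Type*} [CommRing R] [Fintype κ] (m : Bool → Bool → Matrix κ κ R) (N : ℕ) :
    Matrix (Fin N → Bool) (Fin N → Bool) R :=
  fun x y => ∑ h : Fin N → κ, ∏ i, m (x i) (y i) (h (predF i)) (h i)

theorem sum_cons {κ α : Type*} [Fintype κ] [AddCommMonoid α] {n : ℕ}
    (F : (Fin (n+1) → κ) → α) :
    ∑ x, F x = ∑ s, ∑ x' : Fin n → κ, F (Fin.cons s x') := by
  rw [← (Fin.consEquiv (fun _ : Fin (n+1) => κ)).sum_comp, Fintype.sum_prod_type]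
  rfl

theorem predF_zero {n : ℕ} : predF (0 : Fin (n+1)) = Fin.last n := by
  ext; simp [predF]

theorem predF_succ {n : ℕ} (i : Fin n) : predF (i.succ) = i.castSucc := by
  ext
  have : (i : ℕ) + 1 + n = i + (n+1) := by ring
  simp only [predF, Fin.val_succ, Fin.val_castSucc, Nat.add_sub_cancel]
  rw [this, Nat.add_mod_right, Nat.mod_eq_of_lt (by omega)]

theorem path_prod {R κ : Type*} [CommRing R] [Fintype κ] [DecidableEq κ] :
    ∀ {n : ℕ} (A : Fin n → Matrix κ κ R) (α β : κ),
    (List.ofFn A).prod α β = ∑ p : Fin (n+1) → κ,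
      if p 0 = α ∧ p (Fin.last n) = β then ∏ i, A i (p i.castSucc) (p i.succ) else 0 := by
  intro n
  induction n with
  | zero =>
    intro A α β
    rw [sum_cons]
    simp only [List.ofFn_zero, List.prod_nil, Matrix.one_apply]
    simp [ite_and]
  | succ n ih =>
    intro A α β
    rw [List.ofFn_succ, List.prod_cons, Matrix.mul_apply, sum_cons]
    simp only [ih, Finset.mul_sum]
    rw [Finset.sum_comm, Finset.sum_comm (s := (Finset.univ : Finset κ))]
    refine Finset.sum_congr rfl fun p _ => ?_
    have h1 : ∀ δ, (Fin.cons δ p : Fin (n+1+1) → κ) (Fin.last (n+1)) = p (Fin.last n) := by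
      intro δ; rw [← Fin.succ_last, Fin.cons_succ]
    simp only [Fin.cons_zero, h1, Fin.prod_univ_succ, Fin.cons_succ, Fin.castSucc_zero,
      ← Fin.succ_castSucc]
    by_cases hb : p (Fin.last n) = β
    · simp [hb]
    · simp [hb]

theorem trace_prod {R κ : Type*} [CommRing R] [Fintype κ] [DecidableEq κ] {n : ℕ} (hn : 0 < n)
    (A : Fin n → Matrix κ κ R) :
    (List.ofFn A).prod.trace = ∑ h : Fin n → κ, ∏ i, A i (h (predF i)) (h i) := by
  obtain ⟨n, rfl⟩ : ∃ k, n = k + 1 := ⟨n-1, by omega⟩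
  simp only [Matrix.trace, Matrix.diag, path_prod]
  rw [Finset.sum_comm, sum_cons, Finset.sum_comm]
  refine Finset.sum_congr rfl fun h _ => ?_
  have h1 : ∀ δ, (Fin.cons δ h : Fin (n+1+1) → κ) (Fin.last (n+1)) = h (Fin.last n) := by
    intro δ; rw [← Fin.succ_last, Fin.cons_succ]
  simp only [Fin.cons_zero, h1, Fin.cons_succ]
  have h2 : ∀ δ, (∑ j, if δ = j ∧ h (Fin.last n) = j then
      ∏ i : Fin (n+1), A i ((Fin.cons δ h : Fin (n+1+1) → κ) i.castSucc) (h i) else 0)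
      = if δ = h (Fin.last n) then ∏ i : Fin (n+1), A i (h (predF i)) (h i) else 0 := by
    intro δ
    by_cases hd : δ = h (Fin.last n)
    · subst hd
      simp only [and_self, Finset.sum_ite_eq, Finset.mem_univ, if_true]
      refine Finset.prod_congr rfl fun i _ => ?_
      congr 1
      refine Fin.cases ?_ (fun j => ?_) i
      · simp [predF_zero]
      · rw [predF_succ, ← Fin.succ_castSucc, Fin.cons_succ]
    · rw [if_neg hd]
      refine Finset.sum_eq_zero fun j _ => if_neg ?_
      rintro ⟨rfl, h3⟩
      exact hd h3.symm
  simp only [h2]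
  simp

theorem TM_eq_trace {R κ : Type*} [CommRing R] [Fintype κ] [DecidableEq κ] {N : ℕ} (hN : 0 < N)
    (m : Bool → Bool → Matrix κ κ R) (x y : Fin N → Bool) :
    TM m N x y = (List.ofFn fun i => m (x i) (y i)).prod.trace := by
  rw [trace_prod hN]; rfl

theorem trace_pow_eq {R κ : Type*} [CommRing R] [Fintype κ] [DecidableEq κ] {n : ℕ} (hn : 0 < n)
    (A : Matrix κ κ R) :
    (A ^ n).trace = ∑ h : Fin n → κ, ∏ i, A (h (predF i)) (h i) := by
  rw [← trace_prod hn (fun _ => A)]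
  simp

theorem TM_mul {R κ κ' : Type*} [CommRing R] [Fintype κ] [Fintype κ'] {N : ℕ}
    (m : Bool → Bool → Matrix κ κ R) (m' : Bool → Bool → Matrix κ' κ' R) :
    TM m N * TM m' N =
      TM (fun s s'' => ∑ s', Matrix.kroneckerMap (· * ·) (m s s') (m' s' s'')) N := by
  ext x z
  simp only [Matrix.mul_apply, TM, Finset.sum_mul_sum, Matrix.sum_apply,
    Matrix.kroneckerMap_apply]
  rw [← (Equiv.arrowProdEquivProdArrow (Fin N) (fun _ => κ) (fun _ => κ')).symm.sum_comp,
    Fintype.sum_prod_type, Finset.sum_comm]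
  refine Finset.sum_congr rfl fun h _ => ?_
  rw [Finset.sum_comm]
  refine Finset.sum_congr rfl fun h' _ => ?_
  simp only [Equiv.arrowProdEquivProdArrow_symm_apply, Finset.prod_univ_sum,
    Fintype.piFinset_univ, Finset.prod_mul_distrib]

theorem list_intertwine {R κ κ' : Type*} [CommRing R] [Fintype κ] [Fintype κ'] [DecidableEq κ]
    [DecidableEq κ'] (P : Matrix κ κ' R) :
    ∀ {n : ℕ} (A : Fin n → Matrix κ κ R) (B : Fin n → Matrix κ' κ' R)
    (_ : ∀ i, A i * P = P * B i),
    (List.ofFn A).prod * P = P * (List.ofFn B).prod := by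
  intro n
  induction n with
  | zero => intro A B _; simp
  | succ n ih =>
    intro A B h
    rw [List.ofFn_succ, List.prod_cons, List.ofFn_succ, List.prod_cons, Matrix.mul_assoc,
      ih _ _ (fun i => h i.succ), ← Matrix.mul_assoc, h 0, Matrix.mul_assoc]

theorem TM_similar {R κ κ' : Type*} [CommRing R] [Fintype κ] [Fintype κ'] [DecidableEq κ]
    [DecidableEq κ'] {N : ℕ} (hN : 0 < N) (m : Bool → Bool → Matrix κ κ R)
    (m' : Bool → Bool → Matrix κ' κ' R)
    (P : Matrix κ κ' R) (P' : Matrix κ' κ R) (hP : P * P' = 1)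
    (h : ∀ s s', m s s' * P = P * m' s s') (hP' : P' * P = 1) :
    TM m N = TM m' N := by
  ext x y
  rw [TM_eq_trace hN, TM_eq_trace hN]
  have := list_intertwine P (fun i => m (x i) (y i)) (fun i => m' (x i) (y i)) (fun i => h _ _)
  calc _ = ((List.ofFn fun i => m (x i) (y i)).prod * P * P').trace := by
        rw [Matrix.mul_assoc, hP, Matrix.mul_one]
    _ = _ := by rw [this, Matrix.mul_assoc, Matrix.trace_mul_comm, Matrix.mul_assoc, hP', Matrix.mul_one]

theorem list_blocks {R κ κ' : Type*} [CommRing R] [Fintype κ] [Fintype κ'] [DecidableEq κ]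
    [DecidableEq κ'] :
    ∀ {n : ℕ} (A : Fin n → Matrix κ κ R) (B : Fin n → Matrix κ' κ R) (D : Fin n → Matrix κ' κ' R),
    ∃ E, (List.ofFn fun i => Matrix.fromBlocks (A i) 0 (B i) (D i)).prod =
      Matrix.fromBlocks (List.ofFn A).prod 0 E (List.ofFn D).prod := by
  intro n
  induction n with
  | zero => intro A B D; exact ⟨0, by simp⟩
  | succ n ih =>
    intro A B D
    obtain ⟨E, hE⟩ := ih (fun i => A i.succ) (fun i => B i.succ) (fun i => D i.succ)
    rw [List.ofFn_succ, List.prod_cons, hE, Matrix.fromBlocks_multiply]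
    simp only [List.ofFn_succ, List.prod_cons]
    exact ⟨_, by simp; rfl⟩

theorem TM_blocks {R κ κ' : Type*} [CommRing R] [Fintype κ] [Fintype κ'] [DecidableEq κ]
    [DecidableEq κ'] {N : ℕ} (hN : 0 < N) (A : Bool → Bool → Matrix κ κ R)
    (B : Bool → Bool → Matrix κ' κ R) (D : Bool → Bool → Matrix κ' κ' R) :
    TM (fun s s' => Matrix.fromBlocks (A s s') 0 (B s s') (D s s')) N = TM A N + TM D N := by
  ext x y
  rw [Matrix.add_apply, TM_eq_trace hN, TM_eq_trace hN, TM_eq_trace hN]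
  obtain ⟨E, hE⟩ := list_blocks (fun i => A (x i) (y i)) (fun i => B (x i) (y i))
    (fun i => D (x i) (y i))
  rw [hE]
  simp [Matrix.trace, Fintype.sum_sum_type]

theorem TM_scalar {R : Type*} [CommRing R] {N : ℕ} (φ : R) :
    TM (fun s s' => (if s = s' then φ else 0) • (1 : Matrix Unit Unit R)) N
      = φ ^ N • (1 : Matrix (Fin N → Bool) (Fin N → Bool) R) := by
  ext x y
  simp only [TM, Matrix.smul_apply, Matrix.one_apply, smul_eq_mul, Finset.univ_unique,
    Finset.sum_singleton, if_true, mul_one]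
  by_cases h : x = y
  · subst h; simp
  · rw [if_neg h, mul_zero]
    obtain ⟨i, hi⟩ := Function.ne_iff.mp h
    exact Finset.prod_eq_zero (Finset.mem_univ i) (if_neg hi)

theorem TM_smul {R κ : Type*} [CommRing R] [Fintype κ] {N : ℕ} (φ : R)
    (m : Bool → Bool → Matrix κ κ R) :
    TM (fun s s' => φ • m s s') N = φ ^ N • TM m N := by
  ext x y
  simp [TM, Finset.prod_mul_distrib, Finset.mul_sum]

theorem mon_bound {κ : Type*} [Fintype κ] [DecidableEq κ] (m : Bool → Bool → Matrix κ κ ℂ)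
    (C : ℝ)
    (H : ∀ f : κ → Bool → ℂ, ∑ β, ∑ s', ‖∑ α, ∑ s, f α s * m s s' α β‖^2
      ≤ C^2 * ∑ α, ∑ s, ‖f α s‖^2) :
    ∀ (n : ℕ) (f : κ → (Fin n → Bool) → ℂ),
    ∑ β, ∑ y : Fin n → Bool, ‖∑ α, ∑ x : Fin n → Bool,
      f α x * (List.ofFn fun i => m (x i) (y i)).prod α β‖^2
      ≤ (C^n)^2 * ∑ α, ∑ x, ‖f α x‖^2 := by
  intro n
  induction n with
  | zero =>
    intro f
    simp [Matrix.one_apply]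
  | succ n ih =>
    intro f
    set g : Bool → κ → (Fin n → Bool) → ℂ := fun s' γ x' =>
      ∑ α, ∑ s, f α (Fin.cons s x') * m s s' α γ with hg
    have e1 : ∀ (β : κ) (s' : Bool) (y' : Fin n → Bool),
        (∑ α, ∑ x : Fin (n+1) → Bool,
          f α x * (List.ofFn fun i => m (x i) ((Fin.cons s' y' : Fin (n+1) → Bool) i)).prod α β)
        = ∑ γ, ∑ x', g s' γ x' * (List.ofFn fun i => m (x' i) (y' i)).prod γ β := by
      intro β s' y'
      simp only [sum_cons, List.ofFn_succ, Fin.cons_zero, Fin.cons_succ, List.prod_cons,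
        Matrix.mul_apply, hg, Finset.sum_mul, Finset.mul_sum]
      calc _ = ∑ α, ∑ x', ∑ s, ∑ γ, f α (Fin.cons s x') * (m s s' α γ *
              (List.ofFn fun i => m (x' i) (y' i)).prod γ β) := by
            refine Finset.sum_congr rfl fun α _ => ?_
            rw [Finset.sum_comm]
        _ = ∑ α, ∑ x', ∑ γ, ∑ s, f α (Fin.cons s x') * (m s s' α γ *
              (List.ofFn fun i => m (x' i) (y' i)).prod γ β) := by
            refine Finset.sum_congr rfl fun α _ => Finset.sum_congr rfl fun x' _ => ?_
            rw [Finset.sum_comm]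
        _ = ∑ α, ∑ γ, ∑ x', ∑ s, f α (Fin.cons s x') * (m s s' α γ *
              (List.ofFn fun i => m (x' i) (y' i)).prod γ β) := by
            refine Finset.sum_congr rfl fun α _ => ?_
            rw [Finset.sum_comm]
        _ = ∑ γ, ∑ α, ∑ x', ∑ s, f α (Fin.cons s x') * (m s s' α γ *
              (List.ofFn fun i => m (x' i) (y' i)).prod γ β) := by
            rw [Finset.sum_comm]
        _ = _ := by
            refine Finset.sum_congr rfl fun γ _ => ?_
            rw [Finset.sum_comm]
            simp only [mul_assoc]
    calc _ = ∑ s', ∑ β, ∑ y' : Fin n → Bool, ‖∑ γ, ∑ x', g s' γ x' *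
            (List.ofFn fun i => m (x' i) (y' i)).prod γ β‖^2 := by
          rw [Finset.sum_comm (s := (Finset.univ : Finset Bool))]
          refine Finset.sum_congr rfl fun β _ => ?_
          rw [sum_cons]
          refine Finset.sum_congr rfl fun s' _ => Finset.sum_congr rfl fun y' _ => ?_
          rw [e1]
      _ ≤ ∑ s', (C^n)^2 * ∑ γ, ∑ x', ‖g s' γ x'‖^2 := Finset.sum_le_sum fun s' _ => ih (g s')
      _ = (C^n)^2 * ∑ x', ∑ γ, ∑ s', ‖g s' γ x'‖^2 := by
          rw [← Finset.mul_sum]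
          congr 1
          rw [Finset.sum_comm, Finset.sum_comm (s := (Finset.univ : Finset (Fin n → Bool)))]
          refine Finset.sum_congr rfl fun γ _ => Finset.sum_comm
      _ ≤ (C^n)^2 * ∑ x' : Fin n → Bool, (C^2 * ∑ α, ∑ s, ‖f α (Fin.cons s x')‖^2) := by
          refine mul_le_mul_of_nonneg_left (Finset.sum_le_sum fun x' _ => ?_) (by positivity)
          exact H (fun α s => f α (Fin.cons s x'))
      _ = _ := by
          rw [← Finset.mul_sum, ← mul_assoc, ← mul_pow, ← pow_succ]
          congr 1
          rw [Finset.sum_comm]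
          refine Finset.sum_congr rfl fun α _ => ?_
          rw [sum_cons, Finset.sum_comm]

/-- quadratic form of a complex matrix on a real vector. -/
def QF {X : Type*} [Fintype X] (T : Matrix X X ℂ) (ψ : X → ℝ) : ℂ :=
  ∑ x, ∑ y, (ψ x : ℂ) * T x y * (ψ y : ℂ)

theorem QF_transpose {X : Type*} [Fintype X] (T : Matrix X X ℂ) (ψ : X → ℝ) :
    QF (fun x y => T y x) ψ = QF T ψ := by
  unfold QF
  rw [Finset.sum_comm]
  refine Finset.sum_congr rfl fun x _ => Finset.sum_congr rfl fun y _ => by ring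

theorem QF_bound {κ : Type*} [Fintype κ] [DecidableEq κ] {N : ℕ} (hN : 0 < N)
    (m : Bool → Bool → Matrix κ κ ℂ) (C : ℝ) (hC : 0 ≤ C)
    (H : ∀ f : κ → Bool → ℂ, ∑ β, ∑ s', ‖∑ α, ∑ s, f α s * m s s' α β‖^2
      ≤ C^2 * ∑ α, ∑ s, ‖f α s‖^2) (ψ : (Fin N → Bool) → ℝ) (hψ : ∑ x, ψ x ^ 2 = 1) :
    ‖QF (TM m N) ψ‖ ≤ Fintype.card κ * C ^ N := by
  have key : ∀ α : κ, ‖∑ y, (∑ x, (ψ x : ℂ) * (List.ofFn fun i => m (x i) (y i)).prod α α) * ψ y‖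
      ≤ C ^ N := by
    intro α
    have h1 := mon_bound m C H N (fun γ x => if γ = α then (ψ x : ℂ) else 0)
    have h2 : ∑ γ, ∑ x, ‖(if γ = α then (ψ x : ℂ) else 0)‖^2 = 1 := by
      rw [Finset.sum_eq_single α]
      · simpa using hψ
      · intro b _ hb; simp [hb]
      · simp
    rw [h2, mul_one] at h1
    have h3 : ∑ y : Fin N → Bool, ‖∑ x, (ψ x : ℂ) *
        (List.ofFn fun i => m (x i) (y i)).prod α α‖^2 ≤ (C^N)^2 := by
      refine le_trans ?_ h1
      refine le_trans (le_of_eq ?_) (Finset.single_le_sum (f := fun β => ∑ y : Fin N → Bool, ‖∑ γ, ∑ x : Fin N → Bool,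
        (if γ = α then (ψ x : ℂ) else 0) * (List.ofFn fun i => m (x i) (y i)).prod γ β‖^2)
        (fun β _ => by positivity) (Finset.mem_univ α))
      refine Finset.sum_congr rfl fun y _ => ?_
      congr 2
      rw [Finset.sum_eq_single α]
      · simp
      · intro b _ hb; simp [hb]
      · simp
    set v : (Fin N → Bool) → ℂ := fun y => ∑ x, (ψ x : ℂ) *
        (List.ofFn fun i => m (x i) (y i)).prod α α with hv
    calc ‖∑ y, v y * ψ y‖ ≤ ∑ y, ‖v y‖ * |ψ y| := by
          refine (norm_sum_le _ _).trans (Finset.sum_le_sum fun y _ => ?_)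
          rw [norm_mul, Complex.norm_real, Real.norm_eq_abs]
      _ ≤ C^N := by
          have := Finset.sum_mul_sq_le_sq_mul_sq Finset.univ (fun y => ‖v y‖) (fun y => |ψ y|)
          simp only [sq_abs, hψ, mul_one] at this
          exact abs_le_of_sq_le_sq' (this.trans h3) (by positivity) |>.2
  have e : QF (TM m N) ψ = ∑ α, ∑ y, (∑ x, (ψ x : ℂ) *
      (List.ofFn fun i => m (x i) (y i)).prod α α) * ψ y := by
    unfold QF
    simp only [TM_eq_trace hN, Matrix.trace, Matrix.diag, Finset.mul_sum, Finset.sum_mul]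
    rw [Finset.sum_comm, Finset.sum_comm (s := (Finset.univ : Finset κ))]
    refine Finset.sum_congr rfl fun y _ => ?_
    rw [Finset.sum_comm]
  rw [e]
  refine (norm_sum_le _ _).trans ?_
  refine (Finset.sum_le_sum fun α _ => key α).trans ?_
  simp

/-- local six-vertex tensor. -/
def lt {R : Type*} [CommRing R] (a b c : R) : Bool → Bool → Matrix Bool Bool R :=
  fun s s' h h' => if s = s' then (if h = h' then (if h = s then a else b) else 0)
    else (if h = s' ∧ h' = s then c else 0)

theorem Z_eq_trace {N M : ℕ} (hM : 0 < M) (a b c : ℝ) :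
    Z N M a b c = ((TM (lt a b c) N) ^ M).trace := by
  rw [trace_pow_eq hM]
  simp only [TM, Finset.prod_univ_sum, Fintype.piFinset_univ]
  unfold Z
  have h1 : ∀ ω : Cfg N M, (if IsSixVertex ω then W a b c ω else 0)
      = ∏ v : Fin N × Fin M, lt a b c (ω.2 (v.1, predF v.2)) (ω.2 v) (ω.1 (predF v.1, v.2)) (ω.1 v) := by
    intro ω
    have h2 : ∀ v, lt a b c (ω.2 (v.1, predF v.2)) (ω.2 v) (ω.1 (predF v.1, v.2)) (ω.1 v)
        = if inArrows ω v = 2 then vWeight a b c ω v else 0 := by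
      intro v
      unfold lt vWeight inArrows
      cases ω.2 (v.1, predF v.2) <;> cases ω.2 v <;> cases ω.1 (predF v.1, v.2) <;>
        cases ω.1 v <;> simp
    simp only [h2, W]
    by_cases h : IsSixVertex ω
    · rw [if_pos h]
      exact Finset.prod_congr rfl fun v _ => (if_pos (h v)).symm
    · rw [if_neg h]
      obtain ⟨v, hv⟩ := not_forall.mp h
      exact (Finset.prod_eq_zero (Finset.mem_univ v) (if_neg hv)).symm
  simp only [h1]
  let e : (Fin N × Fin M → Bool) ≃ (Fin M → Fin N → Bool) :=
    { toFun := fun f j i => f (i, j)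
      invFun := fun g v => g v.2 v.1
      left_inv := fun f => rfl
      right_inv := fun g => rfl }
  rw [Fintype.sum_prod_type, ← e.symm.sum_comp]
  simp only [← e.symm.sum_comp (fun y => ∏ v : Fin N × Fin M, lt a b c (y (v.1, predF v.2)) (y v) _ _)]
  rw [Finset.sum_comm]
  refine Finset.sum_congr rfl fun H _ => Finset.sum_congr rfl fun h _ => ?_
  rw [Fintype.prod_prod_type, Finset.prod_comm]
  rfl

/-- real quadratic form. -/
def rq {X : Type*} [Fintype X] (A : Matrix X X ℝ) (v : X → ℝ) : ℝ :=
  ∑ x, ∑ y, v x * A x y * v y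

theorem rq_eq {X : Type*} [Fintype X] (A : Matrix X X ℝ) (v : X → ℝ) :
    rq A v = v ⬝ᵥ A.mulVec v := by
  simp [rq, dotProduct, Matrix.mulVec, Finset.mul_sum, mul_assoc]

theorem rq_smul {X : Type*} [Fintype X] (A : Matrix X X ℝ) (v : X → ℝ) (t : ℝ) :
    rq A (t • v) = t^2 * rq A v := by
  simp only [rq_eq, Matrix.mulVec_smul, smul_dotProduct, dotProduct_smul, smul_eq_mul]; ring

theorem bil_symm {X : Type*} [Fintype X] {A : Matrix X X ℝ} (hA : A.transpose = A) (v w : X → ℝ) :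
    v ⬝ᵥ A.mulVec w = w ⬝ᵥ A.mulVec v := by
  rw [Matrix.dotProduct_mulVec, dotProduct_comm, ← Matrix.mulVec_transpose, hA]

theorem rq_add_smul {X : Type*} [Fintype X] {A : Matrix X X ℝ} (hA : A.transpose = A)
    (v w : X → ℝ) (t : ℝ) :
    rq A (v + t • w) = rq A v + 2 * t * (w ⬝ᵥ A.mulVec v) + t^2 * rq A w := by
  simp only [rq_eq, Matrix.mulVec_add, Matrix.mulVec_smul, add_dotProduct, dotProduct_add,
    smul_dotProduct, dotProduct_smul, smul_eq_mul, bil_symm hA v w]; ring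

theorem dp_add_smul {X : Type*} [Fintype X] (v w : X → ℝ) (t : ℝ) :
    (v + t • w) ⬝ᵥ (v + t • w) = v ⬝ᵥ v + 2 * t * (w ⬝ᵥ v) + t^2 * (w ⬝ᵥ w) := by
  simp only [add_dotProduct, dotProduct_add,
    smul_dotProduct, dotProduct_smul, smul_eq_mul, dotProduct_comm v w]; ring

theorem dp_sq {X : Type*} [Fintype X] (v : X → ℝ) : v ⬝ᵥ v = ∑ x, v x ^ 2 := by
  simp [dotProduct, sq]

theorem rq_abs_le {X : Type*} [Fintype X] {A : Matrix X X ℝ} (h0 : ∀ x y, 0 ≤ A x y) (v : X → ℝ) :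
    |rq A v| ≤ rq A (fun x => |v x|) := by
  unfold rq
  refine (Finset.abs_sum_le_sum_abs _ _).trans (Finset.sum_le_sum fun x _ => ?_)
  refine (Finset.abs_sum_le_sum_abs _ _).trans (Finset.sum_le_sum fun y _ => ?_)
  rw [abs_mul, abs_mul, abs_of_nonneg (h0 x y)]

theorem sphere_compact {X : Type*} [Fintype X] : IsCompact {v : X → ℝ | ∑ x, v x ^ 2 = 1} := by
  refine Metric.isCompact_of_isClosed_isBounded
    (isClosed_eq (by fun_prop) continuous_const) ?_
  refine (Metric.isBounded_closedBall (x := (0 : X → ℝ)) (r := 1)).subset fun v hv => ?_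
  rw [mem_closedBall_zero_iff, pi_norm_le_iff_of_nonneg zero_le_one]
  intro x
  have : v x ^ 2 ≤ 1 := by
    rw [← hv.out]; exact Finset.single_le_sum (f := fun x => v x ^ 2) (fun _ _ => sq_nonneg _) (Finset.mem_univ x)
  rw [Real.norm_eq_abs]; exact (sq_le_one_iff_abs_le_one _).mp this

theorem rayleigh {X : Type*} [Fintype X] [Nonempty X] [DecidableEq X] {A : Matrix X X ℝ}
    (hA : A.transpose = A) (h0 : ∀ x y, 0 ≤ A x y) :
    ∃ (μ : ℝ) (ψ : X → ℝ), (∀ x, 0 ≤ ψ x) ∧ ∑ x, ψ x ^ 2 = 1 ∧ A.mulVec ψ = μ • ψ ∧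
      rq A ψ = μ ∧ ∀ v : X → ℝ, rq A v ≤ μ * ∑ x, v x ^ 2 := by
  obtain ⟨x0⟩ := ‹Nonempty X›
  obtain ⟨v, hv, hmax⟩ := (sphere_compact (X := X)).exists_isMaxOn (f := rq A)
    ⟨Pi.single x0 1, by simp [Pi.single_apply, Finset.sum_ite_eq']⟩
    (by unfold rq; fun_prop)
  set ψ : X → ℝ := fun x => |v x| with hψ
  have hψ1 : ∑ x, ψ x ^ 2 = 1 := by simpa [hψ, sq_abs] using hv
  have hle : ∀ w : X → ℝ, rq A w ≤ rq A ψ * ∑ x, w x ^ 2 := by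
    intro w
    by_cases hw : ∑ x, w x ^ 2 = 0
    · have : w = 0 := by
        ext x
        have := (Finset.sum_eq_zero_iff_of_nonneg (fun x _ => sq_nonneg (w x))).mp hw x (Finset.mem_univ x)
        simpa using this
      subst this; simp [rq]
    · have hpos : 0 < ∑ x, w x ^ 2 := lt_of_le_of_ne (Finset.sum_nonneg fun x _ => sq_nonneg _) (Ne.symm hw)
      set s := ∑ x, w x ^ 2
      have h1 : ∑ x, ((Real.sqrt s)⁻¹ • w) x ^ 2 = 1 := by
        simp only [Pi.smul_apply, smul_eq_mul, mul_pow, ← Finset.mul_sum, inv_pow, Real.sq_sqrt hpos.le]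
        exact inv_mul_cancel₀ hw
      have h2 : rq A ((Real.sqrt s)⁻¹ • w) ≤ rq A v := hmax h1
      rw [rq_smul, inv_pow, Real.sq_sqrt hpos.le, inv_mul_le_iff₀ hpos] at h2
      have h3 := (le_abs_self _).trans (rq_abs_le h0 v)
      nlinarith
  refine ⟨rq A ψ, ψ, fun x => abs_nonneg _, hψ1, ?_, rfl, hle⟩
  set μ := rq A ψ
  set r := A.mulVec ψ - μ • ψ with hr
  have h3 : ∀ t : ℝ, 2 * t * (r ⬝ᵥ r) + t^2 * (rq A r - μ * (r ⬝ᵥ r)) ≤ 0 := by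
    intro t
    have h4 := hle (ψ + t • r)
    rw [← dp_sq, rq_add_smul hA, dp_add_smul, dp_sq ψ, hψ1] at h4
    have h5 : r ⬝ᵥ r = r ⬝ᵥ A.mulVec ψ - μ * (r ⬝ᵥ ψ) := by
      conv_lhs => rw [hr, dotProduct_sub, dotProduct_smul, smul_eq_mul, ← hr]
    have h6 : r ⬝ᵥ A.mulVec ψ = r ⬝ᵥ r + μ * (r ⬝ᵥ ψ) := by linarith
    rw [h6] at h4
    change μ + _ + _ ≤ _ at h4
    nlinarith
  have h5 : r ⬝ᵥ r = 0 := by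
    have hn : 0 ≤ r ⬝ᵥ r := by rw [dp_sq]; positivity
    by_contra hne
    have hp : 0 < r ⬝ᵥ r := lt_of_le_of_ne hn (Ne.symm hne)
    set K := rq A r - μ * (r ⬝ᵥ r)
    have h7 := h3 ((r ⬝ᵥ r) / (|K| + 1))
    have hK : 0 < |K| + 1 := by positivity
    set ρ := r ⬝ᵥ r
    have h8 : 2 * (ρ / (|K|+1)) * ρ + (ρ / (|K|+1))^2 * K = ρ^2 / (|K|+1)^2 * (2 * (|K|+1) + K) := by
      field_simp
    rw [h8] at h7
    have : 0 < 2 * (|K|+1) + K := by have := neg_abs_le K; linarith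
    have : 0 < ρ^2 / (|K|+1)^2 * (2 * (|K|+1) + K) := by positivity
    linarith
  have := dotProduct_self_eq_zero.mp h5
  exact sub_eq_zero.mp this

theorem mulVec_bound {X : Type*} [Fintype X] {A : Matrix X X ℝ}
    (hA : A.transpose = A) (h0 : ∀ x y, 0 ≤ A x y) {μ : ℝ} (hμ : 0 < μ)
    (hq : ∀ v : X → ℝ, rq A v ≤ μ * ∑ x, v x ^ 2) (v : X → ℝ) :
    A.mulVec v ⬝ᵥ A.mulVec v ≤ μ^2 * (v ⬝ᵥ v) := by
  have hq' : ∀ v : X → ℝ, |rq A v| ≤ μ * (v ⬝ᵥ v) := by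
    intro v
    refine (rq_abs_le h0 v).trans ((hq _).trans ?_)
    simp [dp_sq, sq_abs]
  set u := A.mulVec v with hu
  have h1 := (abs_le.mp (hq' (u + μ • v))).2
  have h2 := (abs_le.mp (hq' (u + (-μ) • v))).1
  rw [rq_add_smul hA, dp_add_smul] at h1 h2
  have h3 : v ⬝ᵥ A.mulVec u = u ⬝ᵥ u := by rw [bil_symm hA]
  rw [h3] at h1 h2
  have : μ * (u ⬝ᵥ u) ≤ μ * (μ^2 * (v ⬝ᵥ v)) := by nlinarith
  exact le_of_mul_le_mul_left this hμ

theorem pow_symm {X : Type*} [Fintype X] [DecidableEq X] {A : Matrix X X ℝ}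
    (hA : A.transpose = A) (k : ℕ) : (A^k).transpose = A^k := by
  rw [Matrix.transpose_pow, hA]

theorem trace_even {X : Type*} [Fintype X] [DecidableEq X] {A : Matrix X X ℝ}
    (hA : A.transpose = A) (k : ℕ) : (A^(2*k)).trace = ∑ x, ∑ y, (A^k) x y ^ 2 := by
  rw [two_mul, pow_add]
  simp only [Matrix.trace, Matrix.diag, Matrix.mul_apply]
  refine Finset.sum_congr rfl fun x _ => Finset.sum_congr rfl fun y _ => ?_
  conv_lhs => rw [← pow_symm hA k]
  rw [Matrix.transpose_apply, sq]
  nth_rewrite 1 [← pow_symm hA k]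
  rw [Matrix.transpose_apply]

theorem trace_upper {X : Type*} [Fintype X] [DecidableEq X] {A : Matrix X X ℝ}
    (hA : A.transpose = A) (h0 : ∀ x y, 0 ≤ A x y) {μ : ℝ} (hμ : 0 < μ)
    (hq : ∀ v : X → ℝ, rq A v ≤ μ * ∑ x, v x ^ 2) (k : ℕ) :
    (A^(2*k)).trace ≤ Fintype.card X * μ^(2*k) := by
  have h1 : ∀ (k : ℕ) (v : X → ℝ), (A^k).mulVec v ⬝ᵥ (A^k).mulVec v ≤ μ^(2*k) * (v ⬝ᵥ v) := by
    intro k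
    induction k with
    | zero => intro v; simp
    | succ k ih =>
      intro v
      rw [pow_succ, ← Matrix.mulVec_mulVec]
      refine (ih _).trans ?_
      have := mulVec_bound hA h0 hμ hq v
      calc _ ≤ μ^(2*k) * (μ^2 * (v ⬝ᵥ v)) := by gcongr
        _ = _ := by ring
  rw [trace_even hA, Finset.sum_comm]
  have h2 : ∀ y, ∑ x, (A^k) x y ^ 2 ≤ μ^(2*k) := by
    intro y
    have := h1 k (Pi.single y 1)
    rw [dp_sq] at this
    simpa using this
  refine (Finset.sum_le_sum fun y _ => h2 y).trans ?_
  simp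

theorem trace_lower {X : Type*} [Fintype X] [DecidableEq X] {A : Matrix X X ℝ}
    (hA : A.transpose = A) {μ : ℝ} (ψ : X → ℝ) (h1 : ∑ x, ψ x ^ 2 = 1)
    (he : A.mulVec ψ = μ • ψ) (k : ℕ) : μ^(2*k) ≤ (A^(2*k)).trace := by
  have h2 : ∀ k, (A^k).mulVec ψ = μ^k • ψ := by
    intro k
    induction k with
    | zero => simp
    | succ k ih => rw [pow_succ, ← Matrix.mulVec_mulVec, he, Matrix.mulVec_smul, ih, smul_smul]; ring_nf
  rw [trace_even hA]
  calc μ^(2*k) = ∑ x, ((A^k).mulVec ψ) x ^ 2 := by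
        rw [h2]; simp only [Pi.smul_apply, smul_eq_mul, mul_pow, ← Finset.mul_sum, h1]; ring
    _ ≤ _ := by
        refine Finset.sum_le_sum fun x _ => ?_
        have := Finset.sum_mul_sq_le_sq_mul_sq Finset.univ (fun y => (A^k) x y) ψ
        rw [h1, mul_one] at this
        exact this

theorem pow_nonneg' {X : Type*} [Fintype X] [DecidableEq X] {A : Matrix X X ℝ}
    (h0 : ∀ x y, 0 ≤ A x y) (k : ℕ) : ∀ x y, 0 ≤ (A^k) x y := by
  induction k with
  | zero => intro x y; simp only [pow_zero, Matrix.one_apply]; split_ifs <;> norm_num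
  | succ k ih =>
    intro x y
    rw [pow_succ, Matrix.mul_apply]
    exact Finset.sum_nonneg fun z _ => mul_nonneg (ih _ _) (h0 _ _)

theorem trace_mono {X : Type*} [Fintype X] [DecidableEq X] {A : Matrix X X ℝ}
    (h0 : ∀ x y, 0 ≤ A x y) (hd : ∀ x, 1 ≤ A x x) : Monotone fun k => (A^k).trace := by
  refine monotone_nat_of_le_succ fun k => ?_
  refine Finset.sum_le_sum fun x _ => ?_
  simp only [Matrix.diag]
  rw [pow_succ, Matrix.mul_apply]
  refine le_trans ?_ (Finset.single_le_sum (f := fun z => (A^k) x z * A z x)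
    (fun z _ => mul_nonneg (pow_nonneg' h0 k _ _) (h0 _ _)) (Finset.mem_univ x))
  have := pow_nonneg' h0 k x x
  nlinarith [hd x]

theorem trace_lim {X : Type*} [Fintype X] [DecidableEq X] [Nonempty X] {A : Matrix X X ℝ}
    (hA : A.transpose = A) (h0 : ∀ x y, 0 ≤ A x y) (hd : ∀ x, 1 ≤ A x x) {μ : ℝ} (ψ : X → ℝ)
    (h1 : ∑ x, ψ x ^ 2 = 1) (he : A.mulVec ψ = μ • ψ)
    (hq : ∀ v : X → ℝ, rq A v ≤ μ * ∑ x, v x ^ 2) (N : ℕ) :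
    Tendsto (fun M : ℕ => Real.log ((A^M).trace) / (M * N)) atTop (nhds (Real.log μ / N)) := by
  have hμ : 1 ≤ μ := by
    obtain ⟨x⟩ := ‹Nonempty X›
    have := hq (Pi.single x 1)
    rw [rq_eq, ← dp_sq] at this
    simp at this
    exact (hd x).trans this
  have hl : ∀ M : ℕ, ((M:ℝ) - 1) * Real.log μ ≤ Real.log ((A^M).trace) := by
    intro M
    have h2 := trace_lower hA ψ h1 he (M/2)
    have h3 := trace_mono h0 hd (show 2*(M/2) ≤ M by omega)
    have h4 := Real.log_le_log (by positivity) (h2.trans h3)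
    refine le_trans ?_ h4
    rw [Real.log_pow]
    refine mul_le_mul_of_nonneg_right ?_ (Real.log_nonneg hμ)
    have : M ≤ 2 * (M/2) + 1 := by omega
    have : (M:ℝ) ≤ ((2*(M/2) + 1 : ℕ) : ℝ) := by exact_mod_cast this
    push_cast at this ⊢; linarith
  have hu : ∀ M : ℕ, Real.log ((A^M).trace) ≤ Real.log (Fintype.card X) + ((M:ℝ) + 1) * Real.log μ := by
    intro M
    have h2 := trace_upper hA h0 (by linarith) hq ((M+1)/2)
    have h3 := trace_mono h0 hd (show M ≤ 2*((M+1)/2) by omega)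
    have hp : 0 < (A^M).trace :=
      lt_of_lt_of_le (by positivity) ((trace_lower hA ψ h1 he (M/2)).trans
        (trace_mono h0 hd (show 2*(M/2) ≤ M by omega)))
    have h4 := Real.log_le_log hp (h3.trans h2)
    refine h4.trans ?_
    rw [Real.log_mul (by simp) (by positivity), Real.log_pow]
    refine add_le_add_right (mul_le_mul_of_nonneg_right ?_ (Real.log_nonneg hμ)) _
    have : 2 * ((M+1)/2) ≤ M+1 := by omega
    exact_mod_cast this
  have hinv : Tendsto (fun M : ℕ => (1:ℝ)/M) atTop (nhds 0) := tendsto_one_div_atTop_nhds_zero_nat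
  have hL : Tendsto (fun M : ℕ => (1 - 1/(M:ℝ)) * (Real.log μ / N)) atTop (nhds (Real.log μ / N)) := by
    have := ((tendsto_const_nhds (x := (1:ℝ))).sub hinv).mul_const (Real.log μ / N)
    simpa using this
  have hU : Tendsto (fun M : ℕ => (1/(M:ℝ)) * (Real.log (Fintype.card X)/N) +
      (1 + 1/(M:ℝ)) * (Real.log μ / N)) atTop (nhds (Real.log μ / N)) := by
    have := (hinv.mul_const (Real.log (Fintype.card X)/N)).add
      (((tendsto_const_nhds (x := (1:ℝ))).add hinv).mul_const (Real.log μ / N))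
    simpa using this
  refine tendsto_of_tendsto_of_tendsto_of_le_of_le' hL hU ?_ ?_
  · filter_upwards [eventually_gt_atTop 0] with M hM
    have hM' : (0:ℝ) < M := by exact_mod_cast hM
    calc _ = (((M:ℝ) - 1) * Real.log μ) / (M*N) := by field_simp
      _ ≤ _ := by gcongr; exact hl M
  · filter_upwards [eventually_gt_atTop 0] with M hM
    have hM' : (0:ℝ) < M := by exact_mod_cast hM
    calc _ ≤ (Real.log (Fintype.card X) + ((M:ℝ) + 1) * Real.log μ) / (M*N) := by gcongr; exact hu M
      _ = _ := by field_simp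

theorem pl_strip (f : ℂ → ℂ) (l C : ℝ)
    (hd : ∀ z : ℂ, l ≤ z.re → z.re ≤ l + 1 → DifferentiableAt ℂ f z)
    (hg : ∃ K B : ℝ, ∀ z : ℂ, l ≤ z.re → z.re ≤ l + 1 → 1 ≤ |z.im| → ‖f z‖ ≤ K * Real.exp (B * |z.im|))
    (h1 : ∀ z : ℂ, z.re = l → ‖f z‖ ≤ C) (h2 : ∀ z : ℂ, z.re = l + 1 → ‖f z‖ ≤ C)
    (z : ℂ) (hz1 : l ≤ z.re) (hz2 : z.re ≤ l + 1) : ‖f z‖ ≤ C := by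
  refine PhragmenLindelof.vertical_strip (a := l) (b := l+1) ?_ ?_ h1 h2 hz1 hz2
  · have hcl : closure (Complex.re ⁻¹' Set.Ioo l (l+1)) = Complex.re ⁻¹' Set.Icc l (l+1) := by
      rw [Complex.closure_preimage_re, closure_Ioo (by linarith)]
    refine ⟨fun z hz => (hd z hz.1.le hz.2.le).differentiableWithinAt, ?_⟩
    rw [hcl]
    exact fun z hz => (hd z hz.1 hz.2).continuousAt.continuousWithinAt
  · obtain ⟨K, B, h⟩ := hg
    refine ⟨1, by rw [add_sub_cancel_left, div_one]; linarith [Real.pi_gt_three], |B|, ?_⟩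
    refine Asymptotics.IsBigO.of_bound |K| ?_
    rw [eventually_inf_principal]
    have : ∀ᶠ y : ℝ in atTop, 1 ≤ y := eventually_ge_atTop 1
    filter_upwards [tendsto_comap.eventually this] with z hz hz2
    refine (h z hz2.1.le hz2.2.le hz).trans ?_
    rw [Real.norm_eq_abs, Real.abs_exp]
    refine mul_le_mul (le_abs_self K) (Real.exp_le_exp.mpr ?_) (Real.exp_pos _).le (abs_nonneg K)
    rw [one_mul]
    have h3 : |z.im| ≤ Real.exp |z.im| := by linarith [Real.add_one_le_exp |z.im|]
    calc B * |z.im| ≤ |B| * |z.im| := by gcongr; exact le_abs_self B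
      _ ≤ _ := by gcongr

theorem TM_lt_swap {R : Type*} [CommRing R] (a b c : R) (N : ℕ) (x y : Fin N → Bool) :
    TM (lt a b c) N x y = TM (lt b a c) N y x := by
  unfold TM
  let e : (Fin N → Bool) ≃ (Fin N → Bool) :=
    { toFun := fun h i => !(h i)
      invFun := fun h i => !(h i)
      left_inv := fun h => by ext; simp
      right_inv := fun h => by ext; simp }
  rw [← e.sum_comp]
  refine Finset.sum_congr rfl fun h _ => Finset.prod_congr rfl fun i _ => ?_
  simp only [e, Equiv.coe_fn_mk]
  unfold lt
  cases x i <;> cases y i <;> cases h (predF i) <;> cases h i <;> simp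

theorem QF_lt_swap (a b c : ℂ) (N : ℕ) (ψ : (Fin N → Bool) → ℝ) :
    QF (TM (lt a b c) N) ψ = QF (TM (lt b a c) N) ψ := by
  rw [← QF_transpose (TM (lt b a c) N)]
  congr 1
  ext x y
  exact TM_lt_swap a b c N x y

theorem two_block (b x y : ℂ) (hb : b.re = 0) :
    ‖b * x + y‖^2 + ‖x + b * y‖^2 = (‖b‖^2 + 1) * (‖x‖^2 + ‖y‖^2) := by
  simp only [← Complex.normSq_eq_norm_sq, Complex.normSq_apply, Complex.add_re, Complex.add_im,
    Complex.mul_re, Complex.mul_im, hb]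
  ring

theorem QF_lt_bound {N : ℕ} (hN : 0 < N) (a b : ℂ) (C : ℝ) (hC : 0 ≤ C) (hb : b.re = 0)
    (h1 : ‖a‖^2 ≤ C^2) (h2 : ‖b‖^2 + 1 ≤ C^2) (ψ : (Fin N → Bool) → ℝ) (hψ : ∑ x, ψ x ^ 2 = 1) :
    ‖QF (TM (lt a b 1) N) ψ‖ ≤ 2 * C ^ N := by
  have := QF_bound hN (lt a b 1) C hC ?_ ψ hψ
  · simpa using this
  · intro f
    have e := two_block b (f true false) (f false true) hb
    simp only [Fintype.sum_bool, lt]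
    simp
    rw [mul_comm (f true false) b, mul_comm (f false true) b, mul_pow, mul_pow]
    have e1 := mul_le_mul_of_nonneg_right h1 (sq_nonneg ‖f true true‖)
    have e2 := mul_le_mul_of_nonneg_right h1 (sq_nonneg ‖f false false‖)
    have e3 := mul_le_mul_of_nonneg_right h2 (add_nonneg (sq_nonneg ‖f true false‖) (sq_nonneg ‖f false true‖))
    linarith

theorem lt_diff {a b : ℂ → ℂ} {z : ℂ} (ha : DifferentiableAt ℂ a z) (hb : DifferentiableAt ℂ b z) (s s' h h' : Bool) :
    DifferentiableAt ℂ (fun w => lt (a w) (b w) 1 s s' h h') z := by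
  unfold lt
  split_ifs <;> first | assumption | exact differentiableAt_const _

theorem TM_diff {κ : Type*} [Fintype κ] {m : ℂ → Bool → Bool → Matrix κ κ ℂ} {z : ℂ}
    (h : ∀ s s' h h', DifferentiableAt ℂ (fun w => m w s s' h h') z) (N : ℕ) (x y : Fin N → Bool) :
    DifferentiableAt ℂ (fun w => TM (m w) N x y) z := by
  unfold TM
  refine DifferentiableAt.fun_sum fun k _ => ?_
  exact DifferentiableAt.fun_finsetProd fun i _ => h _ _ _ _

theorem QF_diff {κ : Type*} [Fintype κ] {m : ℂ → Bool → Bool → Matrix κ κ ℂ} {z : ℂ}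
    (h : ∀ s s' h h', DifferentiableAt ℂ (fun w => m w s s' h h') z) (N : ℕ) (ψ : (Fin N → Bool) → ℝ) :
    DifferentiableAt ℂ (fun w => QF (TM (m w) N) ψ) z := by
  unfold QF
  refine DifferentiableAt.fun_sum fun x _ => DifferentiableAt.fun_sum fun y _ => ?_
  exact ((differentiableAt_const _).mul (TM_diff h N x y)).mul (differentiableAt_const _)

theorem TM_norm {κ : Type*} [Fintype κ] [DecidableEq κ] (m : Bool → Bool → Matrix κ κ ℂ) (R : ℝ)
    (h : ∀ s s' h h', ‖m s s' h h'‖ ≤ R) (N : ℕ) (x y : Fin N → Bool) :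
    ‖TM m N x y‖ ≤ (Fintype.card κ)^N * R^N := by
  unfold TM
  refine (norm_sum_le _ _).trans ?_
  have : ∀ k : Fin N → κ, ‖∏ i, m (x i) (y i) (k (predF i)) (k i)‖ ≤ R^N := by
    intro k
    rw [norm_prod]
    refine (Finset.prod_le_prod (fun i _ => norm_nonneg _) (fun i _ => h _ _ _ _)).trans ?_
    simp
  refine (Finset.sum_le_sum fun k _ => this k).trans ?_
  simp

theorem QF_norm {κ : Type*} [Fintype κ] [DecidableEq κ] (N : ℕ) (ψ : (Fin N → Bool) → ℝ) :
    ∃ K : ℝ, 0 ≤ K ∧ ∀ (m : Bool → Bool → Matrix κ κ ℂ) (R : ℝ), (∀ s s' h h', ‖m s s' h h'‖ ≤ R) →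
      ‖QF (TM m N) ψ‖ ≤ K * R^N := by
  refine ⟨∑ x : Fin N → Bool, ∑ y : Fin N → Bool, |ψ x| * (Fintype.card κ)^N * |ψ y|, by positivity, fun m R h => ?_⟩
  unfold QF
  simp only [Finset.sum_mul]
  refine (norm_sum_le _ _).trans (Finset.sum_le_sum fun x _ => ?_)
  refine (norm_sum_le _ _).trans (Finset.sum_le_sum fun y _ => ?_)
  rw [norm_mul, norm_mul, Complex.norm_real, Complex.norm_real, Real.norm_eq_abs, Real.norm_eq_abs]
  calc |ψ x| * ‖TM m N x y‖ * |ψ y| ≤ |ψ x| * ((Fintype.card κ)^N * R^N) * |ψ y| := by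
        gcongr; exact TM_norm m R h N x y
    _ = _ := by ring

theorem lt_norm (a b : ℂ) (R : ℝ) (h1 : 1 ≤ R) (ha : ‖a‖ ≤ R) (hb : ‖b‖ ≤ R) (s s' h h' : Bool) :
    ‖lt a b 1 s s' h h'‖ ≤ R := by
  unfold lt
  split_ifs <;> first | assumption | (rw [norm_one]; exact h1) | (rw [norm_zero]; linarith)

theorem norm_Gamma_le {s : ℂ} (hs : 0 < s.re) : ‖Complex.Gamma s‖ ≤ Real.Gamma s.re := by
  rw [Complex.Gamma_eq_integral hs, Real.Gamma_eq_integral hs, Complex.GammaIntegral]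
  refine (norm_integral_le_integral_norm _).trans (le_of_eq ?_)
  refine setIntegral_congr_fun measurableSet_Ioi fun x hx => ?_
  simp only [norm_mul, Complex.norm_real, Real.norm_eq_abs, Real.abs_exp]
  rw [Complex.norm_cpow_eq_rpow_re_of_pos hx]
  simp

theorem Gamma_bd : ∃ K : ℝ, 1 ≤ K ∧ ∀ s : ℂ, 1/2 ≤ s.re → s.re ≤ 3/2 → ‖Complex.Gamma s‖ ≤ K := by
  have hc : ContinuousOn Real.Gamma (Set.Icc (1/2) (3/2)) := by
    intro x hx
    refine (Real.differentiableAt_Gamma fun m => ?_).continuousAt.continuousWithinAt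
    have : (0:ℝ) ≤ m := by positivity
    have := hx.1
    intro h; linarith
  obtain ⟨K, hK⟩ := isCompact_Icc.bddAbove_image hc
  refine ⟨max K 1, le_max_right _ _, fun s h1 h2 => ?_⟩
  exact (norm_Gamma_le (by linarith)).trans ((hK ⟨s.re, ⟨h1, h2⟩, rfl⟩).trans (le_max_left _ _))

theorem norm_sin_le' (z : ℂ) : ‖Complex.sin z‖ ≤ Real.exp |z.im| := by
  rw [Complex.sin, norm_div, norm_mul, Complex.norm_I, mul_one]
  have h1 : ‖Complex.exp (-z * Complex.I)‖ ≤ Real.exp |z.im| := by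
    rw [Complex.norm_exp]; apply Real.exp_le_exp.mpr; simp; exact le_abs_self _
  have h2 : ‖Complex.exp (z * Complex.I)‖ ≤ Real.exp |z.im| := by
    rw [Complex.norm_exp]; apply Real.exp_le_exp.mpr; simp; exact neg_le_abs _
  have := norm_sub_le (Complex.exp (-z * Complex.I)) (Complex.exp (z * Complex.I))
  simp only [Complex.norm_ofNat]
  linarith

theorem Gamma_inv_bd : ∃ K : ℝ, 1 ≤ K ∧ ∀ s : ℂ, 1/2 ≤ s.re → s.re ≤ 3/2 → 1/2 ≤ |s.im| →
    ‖(Complex.Gamma s)⁻¹‖ ≤ K * Real.exp (π * |s.im|) := by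
  obtain ⟨K, hK1, hK⟩ := Gamma_bd
  refine ⟨K, hK1, fun s h1 h2 h3 => ?_⟩
  have hne : (1:ℂ) - s ≠ 0 := by
    intro h
    have : ((1:ℂ) - s).im = 0 := by rw [h]; rfl
    simp at this
    rw [this] at h3; norm_num at h3
  have e1 := Complex.Gamma_mul_Gamma_one_sub s
  have e2 := Complex.Gamma_add_one (1 - s) hne
  have hG : Complex.Gamma s ≠ 0 := Complex.Gamma_ne_zero_of_re_pos (by linarith)
  have hG2 : Complex.Gamma (1 - s + 1) ≠ 0 := Complex.Gamma_ne_zero_of_re_pos (by simp; linarith)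
  have hG3 : Complex.Gamma (1 - s) ≠ 0 := by
    intro h; rw [h, mul_zero] at e2; exact hG2 e2
  have hs : Complex.sin (π * s) ≠ 0 := by
    intro h; rw [h, div_zero] at e1
    exact mul_ne_zero hG hG3 e1
  have hpi : (π : ℂ) ≠ 0 := by exact_mod_cast Real.pi_ne_zero
  have e3 : (Complex.Gamma s)⁻¹ = Complex.sin (π * s) * Complex.Gamma (1 - s + 1) / (π * (1 - s)) := by
    rw [e2, inv_eq_one_div, div_eq_div_iff hG (mul_ne_zero hpi hne)]
    rw [eq_div_iff hs] at e1
    linear_combination (-(1-s)) * e1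
  rw [e3, norm_div, norm_mul, norm_mul]
  have b1 : ‖Complex.sin (π * s)‖ ≤ Real.exp (π * |s.im|) := by
    refine (norm_sin_le' _).trans (le_of_eq ?_)
    simp [abs_mul, abs_of_pos Real.pi_pos]
  have b2 : ‖Complex.Gamma (1 - s + 1)‖ ≤ K := hK _ (by simp; linarith) (by simp; linarith)
  have b3 : 1 ≤ ‖(π:ℂ)‖ * ‖1 - s‖ := by
    have : |s.im| ≤ ‖1 - s‖ := by
      have := Complex.abs_im_le_norm (1 - s); simpa using this
    rw [Complex.norm_real, Real.norm_eq_abs, abs_of_pos Real.pi_pos]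
    nlinarith [Real.pi_gt_three]
  rw [div_le_iff₀ (by linarith)]
  calc _ ≤ Real.exp (π * |s.im|) * K := by gcongr
    _ ≤ K * Real.exp (π * |s.im|) * (‖(π:ℂ)‖ * ‖1 - s‖) := by
      have : 0 < K * Real.exp (π * |s.im|) := by positivity
      nlinarith

/-- the minimal strip function. -/
def kap (w : ℂ) : ℂ := 2 * Complex.Gamma (1 + w/2) * Complex.Gamma (3/2 - w/2) /
  (Complex.Gamma (1/2 + w/2) * Complex.Gamma (1 - w/2))

theorem kap_half : 2 * kap (1/2) = ((2 * Real.Gamma (5/4) / Real.Gamma (3/4))^2 : ℝ) := by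
  unfold kap
  push_cast [← Complex.Gamma_ofReal]
  norm_num
  ring

theorem re_half (w : ℂ) : (w/2).re = w.re / 2 := by simp
theorem im_half (w : ℂ) : (w/2).im = w.im / 2 := by simp

theorem kap_ne {w : ℂ} (h0 : 0 ≤ w.re) (h1 : w.re ≤ 1) : kap w ≠ 0 := by
  have g : ∀ s : ℂ, 0 < s.re → Complex.Gamma s ≠ 0 := fun s hs => Complex.Gamma_ne_zero_of_re_pos hs
  unfold kap
  refine div_ne_zero (mul_ne_zero (mul_ne_zero two_ne_zero (g _ ?_)) (g _ ?_)) (mul_ne_zero (g _ ?_) (g _ ?_))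
  all_goals (simp; linarith)

theorem kap_diff {w : ℂ} (h0 : 0 ≤ w.re) (h1 : w.re ≤ 1) : DifferentiableAt ℂ kap w := by
  have g : ∀ s : ℂ, 0 < s.re → DifferentiableAt ℂ Complex.Gamma s := by
    intro s hs
    refine Complex.differentiableAt_Gamma s fun m h => ?_
    rw [h] at hs
    simp at hs
    have : (0:ℝ) ≤ m := by positivity
    linarith
  have g0 : ∀ s : ℂ, 0 < s.re → Complex.Gamma s ≠ 0 := fun s hs => Complex.Gamma_ne_zero_of_re_pos hs
  unfold kap
  have d1 : DifferentiableAt ℂ (fun w => Complex.Gamma (1 + w/2)) w :=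
    (g (1 + w/2) (by simp; linarith)).comp w (by fun_prop)
  have d2 : DifferentiableAt ℂ (fun w => Complex.Gamma (3/2 - w/2)) w :=
    (g (3/2 - w/2) (by simp; linarith)).comp w (by fun_prop)
  have d3 : DifferentiableAt ℂ (fun w => Complex.Gamma (1/2 + w/2)) w :=
    (g (1/2 + w/2) (by simp; linarith)).comp w (by fun_prop)
  have d4 : DifferentiableAt ℂ (fun w => Complex.Gamma (1 - w/2)) w :=
    (g (1 - w/2) (by simp; linarith)).comp w (by fun_prop)
  refine (((differentiableAt_const _).mul d1).mul d2).div (d3.mul d4) ?_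
  exact mul_ne_zero (g0 _ (by simp; linarith)) (g0 _ (by simp; linarith))

theorem kap_one_sub (w : ℂ) : kap (1 - w) = kap w := by
  unfold kap
  rw [show (1:ℂ) + (1 - w)/2 = 3/2 - w/2 by ring, show (3:ℂ)/2 - (1-w)/2 = 1 + w/2 by ring,
    show (1:ℂ)/2 + (1 - w)/2 = 1 - w/2 by ring, show (1:ℂ) - (1-w)/2 = 1/2 + w/2 by ring]
  ring

theorem kap_conj (w : ℂ) : kap ((starRingEnd ℂ) w) = (starRingEnd ℂ) (kap w) := by
  unfold kap
  simp only [map_div₀, map_mul, ← Complex.Gamma_conj, map_add, map_sub, map_one, map_ofNat]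

theorem kap_norm_im {w : ℂ} (h : w.re = 0) : ‖kap w‖^2 = 1 + w.im^2 := by
  have e1 : (starRingEnd ℂ) w = -w := by
    apply Complex.ext <;> simp [h]
  have e2 : kap w * kap (-w) = 1 - w^2 := by
    have g0 : ∀ s : ℂ, 0 < s.re → Complex.Gamma s ≠ 0 := fun s hs => Complex.Gamma_ne_zero_of_re_pos hs
    unfold kap
    rw [neg_div, sub_neg_eq_add, sub_neg_eq_add, ← sub_eq_add_neg, ← sub_eq_add_neg]
    rw [show (3:ℂ)/2 - w/2 = (1/2 - w/2) + 1 by ring, show (3:ℂ)/2 + w/2 = (1/2 + w/2) + 1 by ring]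
    have n1 : (1:ℂ)/2 - w/2 ≠ 0 := by intro h'; have := congrArg Complex.re h'; simp [h] at this
    have n2 : (1:ℂ)/2 + w/2 ≠ 0 := by intro h'; have := congrArg Complex.re h'; simp [h] at this
    rw [Complex.Gamma_add_one _ n1, Complex.Gamma_add_one _ n2]
    have m1 := g0 (1/2 - w/2) (by simp [h])
    have m2 := g0 (1/2 + w/2) (by simp [h])
    have m3 := g0 (1 - w/2) (by simp [h])
    have m4 := g0 (1 + w/2) (by simp [h])
    generalize Complex.Gamma (1/2 - w/2) = A at *
    generalize Complex.Gamma (1/2 + w/2) = B at *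
    generalize Complex.Gamma (1 - w/2) = C at *
    generalize Complex.Gamma (1 + w/2) = D at *
    field_simp
    ring
  rw [← e1, kap_conj, Complex.mul_conj, Complex.normSq_eq_norm_sq] at e2
  have e3 := congrArg Complex.re e2
  rw [Complex.ofReal_re] at e3
  rw [e3]
  simp [sq, h]

theorem kap_norm_re_one {w : ℂ} (h : w.re = 1) : ‖kap w‖^2 = 1 + w.im^2 := by
  rw [← kap_one_sub, kap_norm_im (by simp [h])]
  simp

theorem kap_growth : ∃ K : ℝ, 0 ≤ K ∧ ∀ w : ℂ, 0 ≤ w.re → w.re ≤ 1 → 1 ≤ |w.im| →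
    ‖kap w‖ ≤ K * Real.exp (π * |w.im|) ∧ ‖(kap w)⁻¹‖ ≤ K * Real.exp (π * |w.im|) := by
  obtain ⟨K1, hK1, h1⟩ := Gamma_bd
  obtain ⟨K2, hK2, h2⟩ := Gamma_inv_bd
  refine ⟨2 * K1 * K1 * K2 * K2, by positivity, fun w w0 w1 wi => ?_⟩
  have im1 : |(1/2:ℝ) * w.im| = |w.im| / 2 := by rw [abs_mul]; norm_num; ring
  have A : ∀ r : ℂ, r.im = 0 → 1/2 ≤ r.re + w.re/2 → r.re + w.re/2 ≤ 3/2 →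
      ‖Complex.Gamma (r + w/2)‖ ≤ K1 ∧ ‖(Complex.Gamma (r + w/2))⁻¹‖ ≤ K2 * Real.exp (π * |w.im|/2) := by
    intro r hr a1 a2
    refine ⟨h1 _ (by simpa using a1) (by simpa using a2), ?_⟩
    have := h2 (r + w/2) (by simpa using a1) (by simpa using a2)
    rw [Complex.add_im, im_half, hr, zero_add, abs_div, abs_of_pos (by norm_num : (0:ℝ) < 2)] at this
    rw [mul_div_assoc]
    exact this (by linarith)
  have B : ∀ r : ℂ, r.im = 0 → 1/2 ≤ r.re - w.re/2 → r.re - w.re/2 ≤ 3/2 →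
      ‖Complex.Gamma (r - w/2)‖ ≤ K1 ∧ ‖(Complex.Gamma (r - w/2))⁻¹‖ ≤ K2 * Real.exp (π * |w.im|/2) := by
    intro r hr a1 a2
    refine ⟨h1 _ (by simpa using a1) (by simpa using a2), ?_⟩
    have := h2 (r - w/2) (by simpa using a1) (by simpa using a2)
    rw [Complex.sub_im, im_half, hr, zero_sub, abs_neg, abs_div, abs_of_pos (by norm_num : (0:ℝ) < 2)] at this
    rw [mul_div_assoc]
    exact this (by linarith)
  obtain ⟨a1, a2⟩ := A 1 (by simp) (by simp; linarith) (by simp; linarith)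
  obtain ⟨b1, b2⟩ := B (3/2) (by simp) (by simp; linarith) (by simp; linarith)
  obtain ⟨c1, c2⟩ := A (1/2) (by simp) (by simp; linarith) (by simp; linarith)
  obtain ⟨d1, d2⟩ := B 1 (by simp) (by simp; linarith) (by simp; linarith)
  have ee : Real.exp (π * |w.im|) = Real.exp (π * |w.im|/2) * Real.exp (π * |w.im|/2) := by
    rw [← Real.exp_add]; ring_nf
  rw [ee]
  unfold kap
  constructor
  · rw [div_eq_mul_inv, mul_inv, norm_mul, norm_mul, norm_mul, norm_mul, Complex.norm_ofNat]
    calc _ ≤ 2 * K1 * K1 * ((K2 * Real.exp (π * |w.im|/2)) * (K2 * Real.exp (π * |w.im|/2))) := by gcongr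
      _ = _ := by ring
  · rw [inv_div, div_eq_mul_inv, mul_inv, mul_inv, norm_mul, norm_mul, norm_mul, norm_mul, norm_inv (2:ℂ), Complex.norm_ofNat]
    calc _ ≤ K1 * K1 * (2⁻¹ * (K2 * Real.exp (π * |w.im|/2)) * (K2 * Real.exp (π * |w.im|/2))) := by gcongr
      _ = 2⁻¹ * (K1 * K1 * K2 * K2 * (Real.exp (π * |w.im|/2) * Real.exp (π * |w.im|/2))) := by ring
      _ ≤ 2 * (K1 * K1 * K2 * K2 * (Real.exp (π * |w.im|/2) * Real.exp (π * |w.im|/2))) := by gcongr; norm_num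
      _ = _ := by ring

theorem upper_strip {N : ℕ} (hN : 0 < N) (ψ : (Fin N → Bool) → ℝ) (hψ : ∑ x, ψ x ^ 2 = 1)
    (w : ℂ) (h0 : 0 ≤ w.re) (h1 : w.re ≤ 1) :
    ‖QF (TM (lt (1-w) w 1) N) ψ‖ ≤ 2 * ‖kap w‖^N := by
  have key := pl_strip (fun w => QF (TM (lt (1-w) w 1) N) ψ * ((kap w)⁻¹)^N) 0 2 ?_ ?_ ?_ ?_ w h0 (by linarith)
  · rw [norm_mul, norm_pow, norm_inv, inv_pow, ← div_eq_mul_inv, div_le_iff₀ (by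
      have := norm_pos_iff.mpr (kap_ne h0 h1); positivity)] at key
    exact key
  · intro z z0 z1
    rw [zero_add] at z1
    refine (QF_diff (lt_diff (by fun_prop) (by fun_prop)) N ψ).mul (((kap_diff z0 z1).inv (kap_ne z0 z1)).pow N)
  · obtain ⟨K, hK0, hK⟩ := kap_growth
    obtain ⟨Q, hQ0, hQ⟩ := QF_norm (κ := Bool) N ψ
    refine ⟨Q * 3^N * K^N, N * (1 + π), fun z z0 z1 zi => ?_⟩
    rw [zero_add] at z1
    have hR : 1 + |z.im| ≤ Real.exp |z.im| := by linarith [Real.add_one_le_exp |z.im|]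
    have n1 : ‖z‖ ≤ 1 + |z.im| := by
      refine (Complex.norm_le_abs_re_add_abs_im z).trans ?_
      rw [abs_of_nonneg z0]; linarith
    have n2 : ‖1 - z‖ ≤ 3 * Real.exp |z.im| := by
      have := norm_sub_le 1 z
      rw [norm_one] at this
      linarith [abs_nonneg z.im]
    have b1 := hQ (lt (1-z) z 1) (3 * Real.exp |z.im|)
      (lt_norm _ _ _ (by linarith [abs_nonneg z.im]) n2 (by linarith [abs_nonneg z.im]))
    have b2 := (hK z z0 z1 zi).2
    rw [norm_mul, norm_pow]
    calc _ ≤ (Q * (3 * Real.exp |z.im|)^N) * (K * Real.exp (π * |z.im|))^N := by gcongr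
      _ = Q * 3^N * K^N * (Real.exp |z.im| * Real.exp (π * |z.im|))^N := by rw [mul_pow, mul_pow, mul_pow]; ring
      _ = _ := by rw [← Real.exp_add, ← Real.exp_nat_mul]; ring_nf
  · intro z hz
    have hk : ‖kap z‖^2 = 1 + z.im^2 := kap_norm_im hz
    have hp : 0 < ‖kap z‖ := norm_pos_iff.mpr (kap_ne (by linarith) (by linarith))
    rw [norm_mul, norm_pow, norm_inv, inv_pow, ← div_eq_mul_inv, div_le_iff₀ (by positivity)]
    refine QF_lt_bound hN _ _ _ hp.le hz ?_ ?_ ψ hψ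
    · rw [hk, ← Complex.normSq_eq_norm_sq, Complex.normSq_apply]; simp [hz]; nlinarith
    · rw [hk, ← Complex.normSq_eq_norm_sq, Complex.normSq_apply]; simp [hz]; nlinarith
  · intro z hz
    rw [zero_add] at hz
    have hk : ‖kap z‖^2 = 1 + z.im^2 := kap_norm_re_one hz
    have hp : 0 < ‖kap z‖ := norm_pos_iff.mpr (kap_ne (by linarith) (by linarith))
    rw [norm_mul, norm_pow, norm_inv, inv_pow, ← div_eq_mul_inv, div_le_iff₀ (by positivity), QF_lt_swap]
    refine QF_lt_bound hN _ _ _ hp.le (by simp [hz]) ?_ ?_ ψ hψ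
    · rw [hk, ← Complex.normSq_eq_norm_sq, Complex.normSq_apply]; simp [hz]; nlinarith
    · rw [hk, ← Complex.normSq_eq_norm_sq, Complex.normSq_apply]; simp [hz]; nlinarith

/-- intertwiner. -/
def Xm {R : Type*} [CommRing R] (α q : R) : Matrix (Bool × Bool) (Bool × Bool) R :=
  fun p p' => if p.1 = p.2 then (if p = p' then α else 0) else
    (if p = p' then 1 else if p'.1 ≠ p'.2 then q else 0)

theorem ybe {R : Type*} [CommRing R] (a b a' b' α q : R) (h1 : α * a = a' + q * b)
   (h2 : α * b' = b + q * a') (h3 : q = a * b' - a' * b) (s s'' : Bool) :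
    (∑ s', Matrix.kroneckerMap (· * ·) (lt a b 1 s s') (lt a' b' 1 s' s'')) * Xm α q =
     Xm α q * (∑ s', Matrix.kroneckerMap (· * ·) (lt a' b' 1 s s') (lt a b 1 s' s'')) := by
  ext ⟨p1, p2⟩ ⟨r1, r2⟩
  simp only [Matrix.mul_apply, Fintype.sum_prod_type, Fintype.sum_bool, Matrix.add_apply,
    Matrix.kroneckerMap_apply, lt, Xm]
  cases s <;> cases s'' <;> cases p1 <;> cases p2 <;> cases r1 <;> cases r2 <;> simp
  all_goals first | ring1 | linear_combination h3 | linear_combination -h3 | linear_combination h1 | linear_combination -h1 | linear_combination h2 | linear_combination -h2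

theorem Xm_inv {R : Type*} [Field R] (α q : R) (hα : α ≠ 0) (hq : 1 - q^2 ≠ 0) :
    ∃ Y : Matrix (Bool × Bool) (Bool × Bool) R, Xm α q * Y = 1 ∧ Y * Xm α q = 1 := by
  have : Xm α q * (Matrix.of fun (p p' : Bool × Bool) => if p.1 = p.2 then (if p = p' then α⁻¹ else 0) else
    (if p = p' then (1-q^2)⁻¹ else if p'.1 ≠ p'.2 then -q*(1-q^2)⁻¹ else 0) : Matrix (Bool × Bool) (Bool × Bool) R) = 1 := by
    ext ⟨p1, p2⟩ ⟨r1, r2⟩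
    simp only [Matrix.mul_apply, Fintype.sum_prod_type, Fintype.sum_bool, Xm, Matrix.one_apply, Matrix.of_apply]
    cases p1 <;> cases p2 <;> cases r1 <;> cases r2 <;> simp <;> field_simp <;> ring
  exact ⟨_, this, mul_eq_one_comm.mp this⟩

theorem TM_commute {N : ℕ} (hN : 0 < N) (a b a' b' α q : ℂ) (h1 : α * a = a' + q * b)
   (h2 : α * b' = b + q * a') (h3 : q = a * b' - a' * b) (hα : α ≠ 0) (hq : 1 - q^2 ≠ 0) :
    TM (lt a b 1) N * TM (lt a' b' 1) N = TM (lt a' b' 1) N * TM (lt a b 1) N := by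
  obtain ⟨Y, hY, hY'⟩ := Xm_inv α q hα hq
  rw [TM_mul, TM_mul]
  exact TM_similar hN _ _ (Xm α q) Y hY (ybe a b a' b' α q h1 h2 h3) hY'

/-- fused tensor. -/
def ft (a b d γ : ℂ) : Bool → Bool → Matrix (Fin 3) (Fin 3) ℂ
  | true, true => !![-a, 0, 0; 0, -b, 0; 0, 0, d]
  | false, false => !![d, 0, 0; 0, -b, 0; 0, 0, -a]
  | true, false => !![0, 0, 0; -γ, 0, 0; 0, -γ, 0]
  | false, true => !![0, γ, 0; 0, 0, γ; 0, 0, 0]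

/-- basis change for fusion. -/
def Pf (γ : ℂ) : Matrix (Bool × Bool) (Fin 3 ⊕ Unit) ℂ
  | (true, true), .inl 0 => 1
  | (true, false), .inl 1 => γ
  | (false, false), .inl 2 => 1
  | (true, false), .inr _ => 1
  | (false, true), .inr _ => 1
  | _, _ => 0

/-- inverse basis change for fusion. -/
def Pf' (γ : ℂ) : Matrix (Fin 3 ⊕ Unit) (Bool × Bool) ℂ
  | .inl 0, (true, true) => 1
  | .inl 1, (true, false) => γ⁻¹
  | .inl 1, (false, true) => -γ⁻¹
  | .inl 2, (false, false) => 1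
  | .inr _, (false, true) => 1
  | _, _ => 0

/-- lower left block. -/
def Bf (a b d γ : ℂ) (s s'' : Bool) : Matrix Unit (Fin 3) ℂ :=
  Matrix.of fun _ j => ((∑ s', Matrix.kroneckerMap (· * ·) (lt a b 1 s s') (lt (-b) d 1 s' s'')) * Pf γ) (false, true) (.inl j)

theorem blocks_inl (P : Matrix (Bool × Bool) (Fin 3 ⊕ Unit) ℂ) (D : Matrix (Fin 3) (Fin 3) ℂ)
    (B : Matrix Unit (Fin 3) ℂ) (A : Matrix Unit Unit ℂ) (p : Bool × Bool) (j : Fin 3) :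
    (P * Matrix.fromBlocks D 0 B A) p (.inl j) =
      P p (.inl 0) * D 0 j + P p (.inl 1) * D 1 j + P p (.inl 2) * D 2 j + P p (.inr ()) * B () j := by
  rw [Matrix.mul_apply, Fintype.sum_sum_type, Fin.sum_univ_three]
  simp

theorem blocks_inr (P : Matrix (Bool × Bool) (Fin 3 ⊕ Unit) ℂ) (D : Matrix (Fin 3) (Fin 3) ℂ)
    (B : Matrix Unit (Fin 3) ℂ) (A : Matrix Unit Unit ℂ) (p : Bool × Bool) (j : Unit) :
    (P * Matrix.fromBlocks D 0 B A) p (.inr j) = P p (.inr ()) * A () () := by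
  rw [Matrix.mul_apply, Fintype.sum_sum_type, Fin.sum_univ_three]
  simp

theorem fuse_local (a b d γ : ℂ) (h1 : a * d = 1 - b^2) (h2 : d - a = γ^2 * b)
    (s s'' : Bool) :
    (∑ s', Matrix.kroneckerMap (· * ·) (lt a b 1 s s') (lt (-b) d 1 s' s'')) * Pf γ =
      Pf γ * Matrix.fromBlocks (b • ft a b d γ s s'') 0 (Bf a b d γ s s'')
        ((if s = s'' then (1 - b^2) else 0) • (1 : Matrix Unit Unit ℂ)) := by
  ext ⟨p1, p2⟩ r
  rcases r with r | r
  · rw [blocks_inl]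
    simp only [Bf, Matrix.of_apply, Matrix.mul_apply, Fintype.sum_prod_type, Fintype.sum_bool, Matrix.add_apply,
      Matrix.kroneckerMap_apply, lt, Matrix.smul_apply]
    have hr : r = 0 ∨ r = 1 ∨ r = 2 := by fin_cases r <;> simp
    rcases hr with rfl | rfl | rfl <;> cases s <;> cases s'' <;> cases p1 <;> cases p2 <;> simp [Pf, ft]
    all_goals first | ring1 | linear_combination h1 | linear_combination -h1 | linear_combination h2 | linear_combination -h2 | linear_combination γ*h1 | linear_combination (-γ)*h1
  · rw [blocks_inr]
    simp only [Matrix.mul_apply, Fintype.sum_prod_type, Fintype.sum_bool, Matrix.add_apply,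
      Matrix.kroneckerMap_apply, lt, Matrix.smul_apply]
    cases s <;> cases s'' <;> cases p1 <;> cases p2 <;> simp [Pf]
    all_goals first | ring1 | linear_combination h1 | linear_combination -h1 | linear_combination h2 | linear_combination -h2

theorem Pf_inv (γ : ℂ) (hγ : γ ≠ 0) : Pf γ * Pf' γ = 1 ∧ Pf' γ * Pf γ = 1 := by
  constructor
  · ext ⟨p1, p2⟩ ⟨r1, r2⟩
    simp only [Matrix.mul_apply, Fintype.sum_sum_type, Fin.sum_univ_three, Finset.univ_unique, Finset.sum_singleton]
    cases p1 <;> cases p2 <;> cases r1 <;> cases r2 <;> simp [Pf, Pf', hγ, Matrix.one_apply]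
  · ext p r
    simp only [Matrix.mul_apply, Fintype.sum_prod_type, Fintype.sum_bool]
    rcases p with p | p <;> rcases r with r | r
    · fin_cases p <;> fin_cases r <;> simp [Pf, Pf', hγ, Matrix.one_apply]
    · fin_cases p <;> simp [Pf, Pf', hγ, Matrix.one_apply]
    · fin_cases r <;> simp [Pf, Pf', Matrix.one_apply]
    · simp [Pf, Pf', Matrix.one_apply]

theorem fusion {N : ℕ} (hN : 0 < N) (a b d γ : ℂ) (h1 : a * d = 1 - b^2) (h2 : d - a = γ^2 * b)
    (hγ : γ ≠ 0) :
    TM (lt a b 1) N * TM (lt (-b) d 1) N =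
      b^N • TM (ft a b d γ) N + (1 - b^2)^N • (1 : Matrix (Fin N → Bool) (Fin N → Bool) ℂ) := by
  rw [TM_mul, TM_similar hN _ _ (Pf γ) (Pf' γ) (Pf_inv γ hγ).1 (fuse_local a b d γ h1 h2) (Pf_inv γ hγ).2,
    TM_blocks hN, TM_smul, TM_scalar]

theorem QF_ft_swap (a b d γ : ℂ) (N : ℕ) (ψ : (Fin N → Bool) → ℝ) :
    QF (TM (ft a b d γ) N) ψ = QF (TM (ft (-d) b (-a) (-γ)) N) ψ := by
  rw [← QF_transpose (TM (ft (-d) b (-a) (-γ)) N)]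
  congr 1
  ext x y
  unfold TM
  let e : (Fin N → Fin 3) ≃ (Fin N → Fin 3) :=
    { toFun := fun h i => Fin.rev (h i)
      invFun := fun h i => Fin.rev (h i)
      left_inv := fun h => by ext; simp
      right_inv := fun h => by ext; simp }
  rw [← e.sum_comp]
  refine Finset.sum_congr rfl fun h _ => Finset.prod_congr rfl fun i _ => ?_
  simp only [e, Equiv.coe_fn_mk]
  generalize h (predF i) = p
  generalize h i = r
  have r0 : Fin.rev (0 : Fin 3) = 2 := rfl
  have r1 : Fin.rev (1 : Fin 3) = 1 := rfl
  have r2 : Fin.rev (2 : Fin 3) = 0 := rfl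
  cases x i <;> cases y i <;> fin_cases p <;> fin_cases r <;> simp [ft, r0, r1, r2]

theorem two_block' (b d x y : ℂ) (γ : ℝ) (hb : b + (starRingEnd ℂ) d = 0) :
    ‖-(b * x) + γ * y‖^2 + ‖-(γ * x) + d * y‖^2 = (‖b‖^2 + γ^2) * ‖x‖^2 + (‖d‖^2 + γ^2) * ‖y‖^2 := by
  have e1 := congrArg Complex.re hb
  have e2 := congrArg Complex.im hb
  simp at e1 e2
  have e3 : b.re = - d.re := by linarith
  have e4 : b.im = d.im := by linarith
  simp only [← Complex.normSq_eq_norm_sq, Complex.normSq_apply, Complex.add_re, Complex.add_im,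
    Complex.mul_re, Complex.mul_im, Complex.neg_re, Complex.neg_im, Complex.ofReal_re, Complex.ofReal_im, e3, e4]
  ring

theorem QF_ft_bound {N : ℕ} (hN : 0 < N) (a b d : ℂ) (γ C : ℝ) (hC : 0 ≤ C)
    (hb : b + (starRingEnd ℂ) d = 0)
    (h1 : ‖a‖^2 ≤ C^2) (h2 : ‖b‖^2 + γ^2 ≤ C^2) (h3 : ‖d‖^2 + γ^2 ≤ C^2)
    (ψ : (Fin N → Bool) → ℝ) (hψ : ∑ x, ψ x ^ 2 = 1) :
    ‖QF (TM (ft a b d γ) N) ψ‖ ≤ 3 * C ^ N := by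
  have := QF_bound hN (ft a b d γ) C hC ?_ ψ hψ
  · simpa using this
  · intro f
    have e := two_block' b d (f 1 true) (f 0 false) γ hb
    have e' := two_block' b d (f 1 false) (f 2 true) (-γ) hb
    simp only [Fintype.sum_bool, Fin.sum_univ_three]
    simp [ft]
    simp at e e'
    rw [mul_comm b, mul_comm d, mul_comm (γ:ℂ), mul_comm (γ:ℂ)] at e e'
    have e1 := mul_le_mul_of_nonneg_right h1 (sq_nonneg ‖f 0 true‖)
    have e2 := mul_le_mul_of_nonneg_right h1 (sq_nonneg ‖f 2 false‖)
    have e3 := mul_le_mul_of_nonneg_right h2 (sq_nonneg ‖f 1 true‖)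
    have e4 := mul_le_mul_of_nonneg_right h2 (sq_nonneg ‖f 1 false‖)
    have e5 := mul_le_mul_of_nonneg_right h3 (sq_nonneg ‖f 0 false‖)
    have e6 := mul_le_mul_of_nonneg_right h3 (sq_nonneg ‖f 2 true‖)
    rw [mul_pow, mul_pow]
    rw [add_comm (-(f 1 true * b)), add_comm (-(f 1 true * (γ:ℂ)))] at e
    linarith

theorem norm_sinh_sq (z : ℂ) : ‖Complex.sinh z‖^2 = Real.sinh z.re ^ 2 + Real.sin z.im ^ 2 := by
  have h : Complex.sinh z = ⟨Real.sinh z.re * Real.cos z.im, Real.cosh z.re * Real.sin z.im⟩ := by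
    conv_lhs => rw [← Complex.re_add_im z, Complex.sinh_add, Complex.cosh_mul_I, Complex.sinh_mul_I]
    apply Complex.ext
    · simp [← Complex.ofReal_sinh, ← Complex.ofReal_cosh, ← Complex.ofReal_cos, ← Complex.ofReal_sin]
    · simp [← Complex.ofReal_sinh, ← Complex.ofReal_cosh, ← Complex.ofReal_cos, ← Complex.ofReal_sin]
  rw [← Complex.normSq_eq_norm_sq, h, Complex.normSq_mk]
  have h1 := Real.cosh_sq z.re
  have h2 := Real.sin_sq_add_cos_sq z.im
  linear_combination (Real.sin z.im)^2 * h1 + (Real.sinh z.re)^2 * h2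

theorem sinh_ne_of_re {z : ℂ} (h : 0 < z.re) : Complex.sinh z ≠ 0 := by
  intro h0
  have := norm_sinh_sq z
  rw [h0, norm_zero] at this
  have h1 : 0 < Real.sinh z.re := Real.sinh_pos_iff.mpr h
  nlinarith [sq_nonneg (Real.sin z.im)]

theorem norm_sinh_le (z : ℂ) : ‖Complex.sinh z‖ ≤ Real.cosh z.re := by
  refine abs_le_of_sq_le_sq' ?_ (Real.cosh_pos _).le |>.2
  rw [norm_sinh_sq, Real.cosh_sq]
  have := Real.sin_sq_le_one z.im
  linarith

/-- first weight. -/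
def sa (l : ℝ) (w : ℂ) : ℂ := Complex.sinh (l * (1 - w)) / Complex.sinh l
/-- second weight. -/
def sb (l : ℝ) (w : ℂ) : ℂ := Complex.sinh (l * w) / Complex.sinh l

theorem sinh_l_ne {l : ℝ} (hl : 0 < l) : Complex.sinh (l:ℂ) ≠ 0 := sinh_ne_of_re (by simpa using hl)

theorem sa_add_one (l : ℝ) (w : ℂ) : sa l (w+1) = - sb l w := by
  unfold sa sb
  rw [show (l:ℂ) * (1 - (w+1)) = -(l*w) by ring, Complex.sinh_neg, neg_div]

theorem sa_one_sub (l : ℝ) (w : ℂ) : sa l (1 - w) = sb l w := by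
  unfold sa sb
  rw [show (l:ℂ) * (1 - (1 - w)) = l*w by ring]

theorem sb_one_sub (l : ℝ) (w : ℂ) : sb l (1 - w) = sa l w := rfl

theorem rel1 {l : ℝ} (hl : 0 < l) (w : ℂ) : sa l w * sb l (w+1) = 1 - sb l w ^ 2 := by
  have h := sinh_l_ne hl
  unfold sa sb
  have e : Complex.sinh (l * (1 - w)) * Complex.sinh (l*(w+1)) = Complex.sinh l ^2 - Complex.sinh (l*w)^2 := by
    rw [show (l:ℂ) * (1 - w) = l - l*w by ring, show (l:ℂ) * (w+1) = l + l*w by ring]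
    rw [Complex.sinh_sub, Complex.sinh_add]
    linear_combination (Complex.sinh l)^2 * Complex.cosh_sq (l*w) - (Complex.sinh (l*w))^2 * Complex.cosh_sq (l:ℂ)
  rw [div_mul_div_comm, e]
  field_simp

theorem rel2 {l : ℝ} (w : ℂ) :
    sb l (w+1) - sa l w = ((Real.sqrt (2 * Real.cosh l) : ℝ) : ℂ)^2 * sb l w := by
  have : ((Real.sqrt (2 * Real.cosh l) : ℝ) : ℂ)^2 = 2 * Complex.cosh l := by
    rw [← Complex.ofReal_pow, Real.sq_sqrt (by have := Real.cosh_pos l; positivity)]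
    push_cast; rfl
  rw [this]
  unfold sa sb
  rw [show (l:ℂ) * (1 - w) = l - l*w by ring, show (l:ℂ) * (w+1) = l + l*w by ring,
    Complex.sinh_sub, Complex.sinh_add]
  ring

theorem gam_ne (l : ℝ) : ((Real.sqrt (2 * Real.cosh l) : ℝ) : ℂ) ≠ 0 := by
  have := Real.cosh_pos l
  exact_mod_cast (Real.sqrt_pos.mpr (by positivity)).ne'

/-- transfer matrix family. -/
def TL (l : ℝ) (N : ℕ) (w : ℂ) : Matrix (Fin N → Bool) (Fin N → Bool) ℂ := TM (lt (sa l w) (sb l w) 1) N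

/-- fused transfer matrix family. -/
def FT (l : ℝ) (N : ℕ) (w : ℂ) : Matrix (Fin N → Bool) (Fin N → Bool) ℂ :=
  TM (ft (sa l w) (sb l w) (sb l (w+1)) (Real.sqrt (2 * Real.cosh l) : ℝ)) N

theorem TL_fusion {l : ℝ} (hl : 0 < l) {N : ℕ} (hN : 0 < N) (w : ℂ) :
    TL l N w * TL l N (w+1) = sb l w ^ N • FT l N w + (1 - sb l w ^ 2)^N • 1 := by
  unfold TL FT
  rw [sa_add_one]
  exact fusion hN _ _ _ _ (rel1 hl w) (rel2 w) (gam_ne l)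

theorem TL_commute {l : ℝ} (hl : 0 < l) {N : ℕ} (hN : 0 < N) (w : ℂ) (h0 : 0 ≤ w.re) (h1 : w.re ≤ 1) :
    TL l N w * TL l N (1/2) = TL l N (1/2) * TL l N w := by
  have h := sinh_l_ne hl
  set u : ℂ := l * w with hu
  set u' : ℂ := l * (1/2) with hu'
  have e1 : sa l w = Complex.sinh (l - u) / Complex.sinh l := by unfold sa; rw [hu]; ring_nf
  have e2 : sb l w = Complex.sinh u / Complex.sinh l := rfl
  have e3 : sa l (1/2) = Complex.sinh (l - u') / Complex.sinh l := by unfold sa; rw [hu']; ring_nf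
  have e4 : sb l (1/2) = Complex.sinh u' / Complex.sinh l := rfl
  have c1 := Complex.cosh_sq u
  have c2 := Complex.cosh_sq u'
  have c3 := Complex.cosh_sq (l:ℂ)
  have r1 : (l + u - u').re = l + l * w.re - l/2 := by simp [hu, hu']; ring
  have r2 : (l - (u - u')).re = l - l * w.re + l/2 := by simp [hu, hu']; ring
  have p1 : Complex.sinh (l + u - u') ≠ 0 := sinh_ne_of_re (by rw [r1]; nlinarith)
  have p2 : Complex.sinh (l - (u - u')) ≠ 0 := sinh_ne_of_re (by rw [r2]; nlinarith)
  unfold TL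
  refine TM_commute hN _ _ _ _ (Complex.sinh (l + u - u') / Complex.sinh l)
    (Complex.sinh (u' - u) / Complex.sinh l) ?_ ?_ ?_ (div_ne_zero p1 h) ?_
  · rw [e1, e2, e3]
    field_simp
    rw [show (l:ℂ) + u - u' = (l - u') + u by ring, show u' - u = (l - u) - (l - u') by ring]
    rw [Complex.sinh_add, Complex.sinh_sub (l - u)]
    have : Complex.sinh (l:ℂ) = Complex.sinh ((l - u) + u) := by ring_nf
    rw [this, Complex.sinh_add]
    ring
  · rw [e2, e3, e4]
    field_simp
    rw [show (l:ℂ) + u - u' = (l - u') + u by ring]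
    rw [Complex.sinh_add, Complex.sinh_sub u' u]
    have : Complex.sinh (l:ℂ) = Complex.sinh ((l - u') + u') := by ring_nf
    rw [this, Complex.sinh_add]
    ring
  · rw [e1, e2, e3, e4]
    field_simp
    rw [Complex.sinh_sub, Complex.sinh_sub, Complex.sinh_sub]
    ring
  · have : 1 - (Complex.sinh (u' - u) / Complex.sinh l)^2 =
        Complex.sinh (l + u - u') * Complex.sinh (l - (u - u')) / (Complex.sinh l)^2 := by
      field_simp
      rw [show (l:ℂ) + u - u' = l + (u - u') by ring, show u' - u = -(u - u') by ring,
        Complex.sinh_add, Complex.sinh_sub _ (u - u'), Complex.sinh_neg]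
      linear_combination (-(Complex.sinh l)^2) * Complex.cosh_sq (u - u') + (Complex.sinh (u - u'))^2 * c3
    rw [this]
    exact div_ne_zero (mul_ne_zero p1 p2) (pow_ne_zero 2 h)

/-- boundary norm squared. -/
def phi (l v : ℝ) : ℝ := 1 + Real.sin (l * v)^2 / Real.sinh l ^2

theorem phi_ge (l v : ℝ) : 1 ≤ phi l v := by unfold phi; have : 0 ≤ Real.sin (l * v)^2 / Real.sinh l ^2 := by positivity
                                             linarith

theorem sb_re_zero {l : ℝ} {w : ℂ} (h : w.re = 0) :
    sb l w = ((Real.sin (l * w.im) / Real.sinh l : ℝ) : ℂ) * Complex.I := by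
  have : (l:ℂ) * w = ((l * w.im : ℝ) : ℂ) * Complex.I := by
    apply Complex.ext <;> simp [h]
  unfold sb
  rw [this, Complex.sinh_mul_I]
  push_cast
  ring

theorem sb_norm_sq (l : ℝ) (w : ℂ) :
    ‖sb l w‖^2 = (Real.sinh (l * w.re)^2 + Real.sin (l * w.im)^2) / Real.sinh l ^ 2 := by
  unfold sb
  rw [norm_div, div_pow, norm_sinh_sq, norm_sinh_sq]
  simp

theorem sa_norm_sq (l : ℝ) (w : ℂ) :
    ‖sa l w‖^2 = (Real.sinh (l * (1 - w.re))^2 + Real.sin (l * w.im)^2) / Real.sinh l ^ 2 := by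
  rw [← sb_one_sub, sb_norm_sq]
  simp

theorem one_sub_sb_sq {l : ℝ} {w : ℂ} (h : w.re = 0) : 1 - sb l w ^ 2 = (phi l w.im : ℝ) := by
  rw [sb_re_zero h, mul_pow, Complex.I_sq]
  unfold phi
  push_cast
  ring

theorem TL_bound_zero {l : ℝ} (hl : 0 < l) {N : ℕ} (hN : 0 < N) (ψ : (Fin N → Bool) → ℝ)
    (hψ : ∑ x, ψ x ^ 2 = 1) (w : ℂ) (h : w.re = 0 ∨ w.re = 1) :
    ‖QF (TL l N w) ψ‖ ≤ 2 * (Real.sqrt (phi l w.im))^N := by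
  have hs : Real.sinh l ≠ 0 := (Real.sinh_pos_iff.mpr hl).ne'
  have hp := phi_ge l w.im
  unfold TL
  rcases h with h | h
  · refine QF_lt_bound hN _ _ _ (Real.sqrt_nonneg _) ?_ ?_ ?_ ψ hψ
    · rw [sb_re_zero h, Complex.re_ofReal_mul, Complex.I_re, mul_zero]
    · rw [Real.sq_sqrt (by linarith), sa_norm_sq, h, phi]
      apply le_of_eq; simp; field_simp
    · rw [Real.sq_sqrt (by linarith), sb_norm_sq, h, phi]
      apply le_of_eq; simp; field_simp; ring
  · rw [QF_lt_swap]
    refine QF_lt_bound hN _ _ _ (Real.sqrt_nonneg _) ?_ ?_ ?_ ψ hψ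
    · rw [← sb_one_sub, sb_re_zero (by simp [h]), Complex.re_ofReal_mul, Complex.I_re, mul_zero]
    · rw [Real.sq_sqrt (by linarith), sb_norm_sq, h, phi]
      apply le_of_eq; simp; field_simp
    · rw [Real.sq_sqrt (by linarith), sa_norm_sq, h, phi]
      apply le_of_eq; simp; field_simp; ring

theorem conj_sinh_l (l : ℝ) : (starRingEnd ℂ) (Complex.sinh l) = Complex.sinh l := by
  rw [← Complex.sinh_conj, Complex.conj_ofReal]

theorem sb_conj (l : ℝ) (w : ℂ) : (starRingEnd ℂ) (sb l w) = sb l ((starRingEnd ℂ) w) := by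
  unfold sb
  rw [map_div₀, conj_sinh_l, ← Complex.sinh_conj, map_mul, Complex.conj_ofReal]

theorem sb_neg (l : ℝ) (w : ℂ) : sb l (-w) = - sb l w := by
  unfold sb
  rw [mul_neg, Complex.sinh_neg, neg_div]

theorem sinh_three_half {l : ℝ} : Real.sinh (l * (3/2))^2 =
    Real.sinh (l * (1/2))^2 + 2 * Real.cosh l * Real.sinh l^2 := by
  have e1 : l * (3/2) = l + l/2 := by ring
  have e2 : l * (1/2) = l/2 := by ring
  have e3 : l = 2 * (l/2) := by ring
  have c := Real.cosh_sq (l/2)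
  rw [e1, e2, Real.sinh_add]
  have h1 : Real.sinh l = 2 * Real.sinh (l/2) * Real.cosh (l/2) := by
    conv_lhs => rw [e3, Real.sinh_two_mul]
  have h2 : Real.cosh l = Real.cosh (l/2)^2 + Real.sinh (l/2)^2 := by
    conv_lhs => rw [e3, Real.cosh_two_mul]
  rw [h1, h2, mul_pow _ (Real.cosh (l/2)), c]
  generalize Real.sinh (l/2) = S at *
  generalize Real.cosh (l/2) = C at *
  linear_combination (4*S^2*C^2 + 4*S^2*(2*S^2+1) + 4*S^2+4*S^4) * c

/-- boundary size for fused tensor. -/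
def Cf (l v : ℝ) : ℝ := Real.sqrt ((Real.sinh (l * (3/2))^2 + Real.sin (l * v)^2) / Real.sinh l ^ 2)

theorem FT_bound {l : ℝ} (hl : 0 < l) {N : ℕ} (hN : 0 < N) (ψ : (Fin N → Bool) → ℝ)
    (hψ : ∑ x, ψ x ^ 2 = 1) (w : ℂ) (h : w.re = -1/2 ∨ w.re = 1/2) :
    ‖QF (FT l N w) ψ‖ ≤ 3 * (Cf l w.im)^N := by
  have hs : Real.sinh l ≠ 0 := (Real.sinh_pos_iff.mpr hl).ne'
  have hc := Real.cosh_pos l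
  have hg : Real.sqrt (2 * Real.cosh l)^2 = 2 * Real.cosh l := Real.sq_sqrt (by positivity)
  have hC : Cf l w.im^2 = (Real.sinh (l * (3/2))^2 + Real.sin (l * w.im)^2) / Real.sinh l ^ 2 :=
    Real.sq_sqrt (by positivity)
  have hC2 : Cf l w.im^2 = (Real.sinh (l * (1/2))^2 + Real.sin (l * w.im)^2) / Real.sinh l ^ 2
     + 2 * Real.cosh l := by
    rw [hC, sinh_three_half]; field_simp; ring
  have hn : Real.sinh (l * (-1/2))^2 = Real.sinh (l * (1/2))^2 := by
    rw [show l * (-1/2) = -(l * (1/2)) by ring, Real.sinh_neg, neg_sq]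
  unfold FT
  rcases h with h | h
  · refine QF_ft_bound hN _ _ _ _ (Cf l w.im) (Real.sqrt_nonneg _) ?_ ?_ ?_ ?_ ψ hψ
    · rw [sb_conj, show (starRingEnd ℂ) (w+1) = -w by apply Complex.ext <;> simp [h]; norm_num, sb_neg, add_neg_cancel]
    · rw [hC, sa_norm_sq, h]; apply le_of_eq; norm_num
    · rw [hC2, hg, sb_norm_sq, h, hn]
    · rw [hC2, hg, sb_norm_sq]; apply le_of_eq; simp [h]; norm_num
  · rw [QF_ft_swap, ← Complex.ofReal_neg]
    refine QF_ft_bound hN _ _ _ _ (Cf l w.im) (Real.sqrt_nonneg _) ?_ ?_ ?_ ?_ ψ hψ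
    · rw [map_neg, ← sb_one_sub, sb_conj, show (starRingEnd ℂ) (1 - w) = w by apply Complex.ext <;> simp [h]; norm_num, add_neg_cancel]
    · rw [norm_neg, hC, sb_norm_sq]; apply le_of_eq; simp [h]; norm_num
    · rw [hC2, neg_sq, hg, sb_norm_sq, h]
    · rw [norm_neg, hC2, neg_sq, hg, sa_norm_sq]; apply le_of_eq; simp [h]; norm_num

theorem norm_sin_sq (z : ℂ) : ‖Complex.sin z‖^2 = Real.sin z.re ^ 2 + Real.sinh z.im ^ 2 := by
  have h : ‖Complex.sin z‖ = ‖Complex.sinh (z * Complex.I)‖ := by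
    rw [Complex.sinh_mul_I, norm_mul, Complex.norm_I, mul_one]
  rw [h, norm_sinh_sq]
  simp [add_comm]

theorem norm_cos_sq (z : ℂ) : ‖Complex.cos z‖^2 = Real.cos z.re ^ 2 + Real.sinh z.im ^ 2 := by
  rw [← Complex.sin_pi_div_two_sub, norm_sin_sq]
  have h1 : ((π:ℂ)/2 - z).re = π/2 - z.re := by simp
  have h2 : ((π:ℂ)/2 - z).im = - z.im := by simp
  rw [h1, h2, Real.sin_pi_div_two_sub]; simp

theorem dslope_diff {f : ℂ → ℂ} (hf : Differentiable ℂ f) : Differentiable ℂ (dslope f 0) := by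
  rw [← differentiableOn_univ] at *
  exact (Complex.differentiableOn_dslope univ_mem).mpr hf

/-- sine factor. -/
def dS : ℂ → ℂ := dslope (fun z => Complex.sin (π/2 * z)) 0
/-- hyperbolic sine factor. -/
def dH (l : ℝ) : ℂ → ℂ := dslope (fun z => Complex.sinh (l * z)) 0
/-- auxiliary function. -/
def EE (l : ℝ) (z : ℂ) : ℂ := dH l z * Complex.cos (π/2 * z) / dS z

theorem dS_of_ne {z : ℂ} (h : z ≠ 0) : dS z = Complex.sin (π/2*z) / z := by
  unfold dS
  rw [dslope_of_ne _ h, slope_def_field]; simp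

theorem dH_of_ne (l : ℝ) {z : ℂ} (h : z ≠ 0) : dH l z = Complex.sinh (l*z) / z := by
  unfold dH
  rw [dslope_of_ne _ h, slope_def_field]; simp

theorem pi2_re (z : ℂ) : ((π:ℂ)/2*z).re = π/2*z.re := by
  rw [show (π:ℂ)/2 = ((π/2:ℝ):ℂ) by push_cast; rfl, Complex.re_ofReal_mul]
theorem pi2_im (z : ℂ) : ((π:ℂ)/2*z).im = π/2*z.im := by
  rw [show (π:ℂ)/2 = ((π/2:ℝ):ℂ) by push_cast; rfl, Complex.im_ofReal_mul]

theorem sin_ne {z : ℂ} (h : z ≠ 0) (h0 : -1/2 ≤ z.re) (h1 : z.re ≤ 1/2) : Complex.sin (π/2*z) ≠ 0 := by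
  intro h2
  have h3 := norm_sin_sq (π/2*z)
  rw [h2, pi2_re, pi2_im, norm_zero] at h3
  have a1 : Real.sinh (π/2*z.im) = 0 := by nlinarith [sq_nonneg (Real.sin (π/2*z.re)), sq_nonneg (Real.sinh (π/2*z.im))]
  have a2 : Real.sin (π/2*z.re) = 0 := by nlinarith [sq_nonneg (Real.sin (π/2*z.re)), sq_nonneg (Real.sinh (π/2*z.im))]
  have hp := Real.pi_pos
  rw [Real.sinh_eq_zero] at a1
  rw [Real.sin_eq_zero_iff_of_lt_of_lt (by nlinarith) (by nlinarith)] at a2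
  apply h
  apply Complex.ext
  · simpa [hp.ne'] using a2
  · simpa [hp.ne'] using a1

theorem dS_ne {z : ℂ} (h0 : -1/2 ≤ z.re) (h1 : z.re ≤ 1/2) : dS z ≠ 0 := by
  by_cases h : z = 0
  · subst h
    unfold dS
    rw [dslope_same]
    have : HasDerivAt (fun z : ℂ => Complex.sin (π/2*z)) (Complex.cos (π/2*0) * (π/2*1)) 0 :=
      ((hasDerivAt_id' (0:ℂ)).const_mul ((π:ℂ)/2)).csin
    rw [this.deriv]
    simp [Real.pi_ne_zero]
  · rw [dS_of_ne h]
    exact div_ne_zero (sin_ne h h0 h1) h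

theorem EE_diff (l : ℝ) {z : ℂ} (h0 : -1/2 ≤ z.re) (h1 : z.re ≤ 1/2) : DifferentiableAt ℂ (EE l) z := by
  unfold EE
  refine DifferentiableAt.div (DifferentiableAt.mul ?_ (by fun_prop)) ?_ (dS_ne h0 h1)
  · exact dslope_diff (f := fun z : ℂ => Complex.sinh (l*z)) (by fun_prop) z
  · exact dslope_diff (f := fun z : ℂ => Complex.sin (π/2*z)) (by fun_prop) z

theorem EE_norm (l : ℝ) {z : ℂ} (h : z ≠ 0) :
    ‖EE l z‖ = ‖Complex.sinh (l*z)‖ * ‖Complex.cos (π/2*z)‖ / ‖Complex.sin (π/2*z)‖ := by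
  unfold EE
  rw [dS_of_ne h, dH_of_ne l h, ← norm_mul, ← norm_div]
  congr 1
  field_simp

theorem EE_bdry (l : ℝ) {z : ℂ} (h : z.re = -1/2 ∨ z.re = 1/2) :
    ‖EE l z‖ = ‖Complex.sinh (l*z)‖ := by
  have hz : z ≠ 0 := by rintro rfl; norm_num at h
  have hs : Complex.sin (π/2*z) ≠ 0 := by
    apply sin_ne hz <;> rcases h with h | h <;> rw [h] <;> norm_num
  rw [EE_norm l hz]
  have : ‖Complex.cos (π/2*z)‖ = ‖Complex.sin (π/2*z)‖ := by
    rw [← sq_eq_sq₀ (norm_nonneg _) (norm_nonneg _), norm_cos_sq, norm_sin_sq, pi2_re]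
    have : Real.cos (π/2*z.re)^2 = Real.sin (π/2*z.re)^2 := by
      rcases h with h | h <;> rw [h]
      · rw [show π/2*(-1/2) = -(π/4) by ring, Real.cos_neg, Real.sin_neg, neg_sq, Real.cos_pi_div_four, Real.sin_pi_div_four]
      · rw [show π/2*(1/2) = (π/4) by ring, Real.cos_pi_div_four, Real.sin_pi_div_four]
    rw [this]
  rw [this, mul_div_assoc, div_self (norm_ne_zero_iff.mpr hs), mul_one]

theorem EE_bounded {l : ℝ} (hl : 0 < l) : ∃ K : ℝ, 0 ≤ K ∧ ∀ z : ℂ, -1/2 ≤ z.re → z.re ≤ 1/2 → ‖EE l z‖ ≤ K := by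
  have hc : IsCompact (Set.Icc (-1/2:ℝ) (1/2) ×ℂ Set.Icc (-1:ℝ) 1) := isCompact_Icc.reProdIm isCompact_Icc
  obtain ⟨K, hK⟩ := hc.exists_bound_of_continuousOn (f := EE l) (fun z hz => by
    rw [Complex.mem_reProdIm] at hz
    exact (EE_diff l hz.1.1 hz.1.2).continuousAt.continuousWithinAt)
  have hch := Real.cosh_pos l
  refine ⟨max K (2 * Real.cosh l), le_max_of_le_right (by positivity), fun z h0 h1 => ?_⟩
  by_cases hi : |z.im| ≤ 1
  · exact (hK z (by rw [Complex.mem_reProdIm]; exact ⟨⟨h0, h1⟩, abs_le.mp hi⟩)).trans (le_max_left _ _)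
  · push Not at hi
    refine le_trans ?_ (le_max_right _ _)
    have hz : z ≠ 0 := by rintro rfl; norm_num at hi
    have hs := norm_pos_iff.mpr (sin_ne hz h0 h1)
    rw [EE_norm l hz, div_le_iff₀ hs]
    have c1 : ‖Complex.cos (π/2*z)‖ ≤ 2 * ‖Complex.sin (π/2*z)‖ := by
      refine abs_le_of_sq_le_sq' ?_ (by positivity) |>.2
      rw [mul_pow, norm_cos_sq, norm_sin_sq, pi2_im, pi2_re]
      have h3 : 1 ≤ |Real.sinh (π/2*z.im)| := by
        rw [Real.abs_sinh, abs_mul, abs_of_pos (by positivity)]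
        have h5 : 1 ≤ π/2 * |z.im| := by nlinarith [Real.pi_gt_three]
        exact h5.trans (Real.self_le_sinh_iff.mpr (by linarith))
      have h4 : 1 ≤ Real.sinh (π/2*z.im)^2 := by rw [← sq_abs]; nlinarith
      nlinarith [Real.cos_sq_le_one (π/2*z.re), sq_nonneg (Real.sin (π/2*z.re))]
    have c2 : ‖Complex.sinh (l*z)‖ ≤ Real.cosh l := by
      refine (norm_sinh_le _).trans ?_
      rw [Complex.re_ofReal_mul, Real.cosh_le_cosh, abs_mul, abs_of_pos hl]
      have : |z.re| ≤ 1 := by rw [abs_le]; constructor <;> linarith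
      nlinarith
    calc _ ≤ Real.cosh l * (2 * ‖Complex.sin (π/2*z)‖) := by gcongr
      _ = _ := by ring

theorem EE_center {l : ℝ} (hl : 0 < l) {z : ℂ} (h : z.re = 0) (hz : z ≠ 0) (hi : |z.im| ≤ π / (2*l)) :
    ‖Complex.sinh (l*z)‖ ≤ Real.tanh (π^2/(4*l)) * ‖EE l z‖ := by
  have hs := norm_pos_iff.mpr (sin_ne hz (by rw [h]; norm_num) (by rw [h]; norm_num))
  rw [EE_norm l hz]
  set t := π^2/(4*l)
  have ht : 0 < t := by positivity
  have hch := Real.cosh_pos t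
  have key : ‖Complex.sin (π/2*z)‖ ≤ Real.tanh t * ‖Complex.cos (π/2*z)‖ := by
    have e1 : ‖Complex.sin (π/2*z)‖ = Real.sinh |π/2*z.im| := by
      rw [← sq_eq_sq₀ (norm_nonneg _) (Real.sinh_nonneg_iff.mpr (abs_nonneg _)), norm_sin_sq, pi2_re, pi2_im, h, ← Real.abs_sinh]
      simp
    have e2 : ‖Complex.cos (π/2*z)‖ = Real.cosh |π/2*z.im| := by
      rw [← sq_eq_sq₀ (norm_nonneg _) (Real.cosh_pos _).le, norm_cos_sq, pi2_re, pi2_im, h, Real.cosh_abs, Real.cosh_sq]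
      simp [add_comm]
    rw [e1, e2, Real.tanh_eq_sinh_div_cosh, div_mul_eq_mul_div (Real.sinh t), le_div_iff₀ hch]
    have : |π/2*z.im| ≤ t := by
      rw [abs_mul, abs_of_pos (by positivity)]
      calc _ ≤ π/2*(π/(2*l)) := by gcongr
        _ = t := by simp only [t]; field_simp; ring
    have := Real.sinh_nonneg_iff.mpr (sub_nonneg.mpr this)
    rw [Real.sinh_sub] at this
    linarith
  rw [← mul_div_assoc, le_div_iff₀ hs]
  calc _ ≤ ‖Complex.sinh (l*z)‖ * (Real.tanh t * ‖Complex.cos (π/2*z)‖) := by gcongr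
    _ = _ := by ring

theorem sa_diff (l : ℝ) : Differentiable ℂ (sa l) := by unfold sa; fun_prop
theorem sb_diff (l : ℝ) : Differentiable ℂ (sb l) := by unfold sb; fun_prop

theorem sb_lower {l : ℝ} (hl : 0 < l) {w : ℂ} (h : 1/2 ≤ w.re) :
    Real.sinh (l/2) / Real.sinh l ≤ ‖sb l w‖ := by
  have hs : 0 < Real.sinh l := Real.sinh_pos_iff.mpr hl
  have hs2 : 0 < Real.sinh (l/2) := Real.sinh_pos_iff.mpr (by linarith)
  refine abs_le_of_sq_le_sq' ?_ (norm_nonneg _) |>.2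
  rw [sb_norm_sq, div_pow]
  gcongr
  have : Real.sinh (l/2) ≤ Real.sinh (l * w.re) := Real.sinh_le_sinh.mpr (by nlinarith)
  nlinarith [sq_nonneg (Real.sin (l * w.im))]

theorem sb_upper {l : ℝ} (hl : 0 < l) {w : ℂ} (h0 : -2 ≤ w.re) (h1 : w.re ≤ 2) :
    ‖sb l w‖ ≤ Real.cosh (2*l) / Real.sinh l := by
  have hs : 0 < Real.sinh l := Real.sinh_pos_iff.mpr hl
  unfold sb
  rw [norm_div]
  have : ‖Complex.sinh (l:ℂ)‖ = Real.sinh l := by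
    rw [← Complex.ofReal_sinh, Complex.norm_real, Real.norm_eq_abs, abs_of_pos hs]
  rw [this]
  gcongr
  refine (norm_sinh_le _).trans ?_
  rw [Complex.re_ofReal_mul, Real.cosh_le_cosh, abs_mul, abs_mul, abs_of_pos hl]
  have : |w.re| ≤ 2 := by rw [abs_le]; constructor <;> linarith
  norm_num
  nlinarith

/-- comparison function. -/
def GG (l p : ℝ) (w : ℂ) : ℂ := EE l (w - p * Complex.I) / (Complex.sinh l * (sa l w * sb l (w+1)))

theorem ft_norm (a b d γ : ℂ) (R : ℝ) (h1 : 0 ≤ R) (ha : ‖a‖ ≤ R) (hb : ‖b‖ ≤ R) (hd : ‖d‖ ≤ R) (hg : ‖γ‖ ≤ R)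
    (s s' : Bool) (h h' : Fin 3) : ‖ft a b d γ s s' h h'‖ ≤ R := by
  cases s <;> cases s' <;> fin_cases h <;> fin_cases h' <;> simp [ft] <;> assumption

theorem ft_diff {l : ℝ} {z : ℂ} (s s' : Bool) (h h' : Fin 3) :
    DifferentiableAt ℂ (fun w => ft (sa l w) (sb l w) (sb l (w+1)) (Real.sqrt (2 * Real.cosh l) : ℝ) s s' h h') z := by
  have h1 := sa_diff l
  have h2 := sb_diff l
  have h3 : Differentiable ℂ (fun w => sb l (w+1)) := h2.comp (by fun_prop)
  cases s <;> cases s' <;> fin_cases h <;> fin_cases h' <;> simp [ft] <;> fun_prop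

theorem sin_shift {l : ℝ} (hl : 0 < l) (k : ℤ) (v : ℝ) : Real.sin (l * (v - π * k / l))^2 = Real.sin (l*v)^2 := by
  rw [show l * (v - π * k / l) = l * v - k * π by field_simp, Real.sin_sub_int_mul_pi]
  rw [mul_pow, ← zpow_natCast, ← zpow_mul]
  rw [mul_comm k, zpow_mul]; simp

theorem sinh_shift {l : ℝ} (hl : 0 < l) (k : ℤ) (w : ℂ) :
    ‖Complex.sinh (l * (w - (π * k / l : ℝ) * Complex.I))‖ = ‖Complex.sinh (l * w)‖ := by
  rw [← sq_eq_sq₀ (norm_nonneg _) (norm_nonneg _), norm_sinh_sq, norm_sinh_sq]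
  rw [Complex.re_ofReal_mul, Complex.im_ofReal_mul, Complex.re_ofReal_mul, Complex.im_ofReal_mul]
  have h1 : (w - (π * k / l : ℝ) * Complex.I).re = w.re := by simp
  have h2 : (w - (π * k / l : ℝ) * Complex.I).im = w.im - π * k / l := by
    rw [Complex.sub_im, Complex.im_ofReal_mul, Complex.I_im, mul_one]
  rw [h1, h2, sin_shift hl]

theorem sb_norm_eq {l : ℝ} (hl : 0 < l) (w : ℂ) : ‖Complex.sinh (l * w)‖ = Real.sinh l * ‖sb l w‖ := by
  have hs : 0 < Real.sinh l := Real.sinh_pos_iff.mpr hl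
  unfold sb
  rw [norm_div, ← Complex.ofReal_sinh, Complex.norm_real, Real.norm_eq_abs, abs_of_pos hs]
  field_simp

theorem norm_sinh_l {l : ℝ} (hl : 0 < l) : ‖Complex.sinh (l:ℂ)‖ = Real.sinh l := by
  have hs : 0 < Real.sinh l := Real.sinh_pos_iff.mpr hl
  rw [← Complex.ofReal_sinh, Complex.norm_real, Real.norm_eq_abs, abs_of_pos hs]

theorem sb_eq_Cf (l : ℝ) {w : ℂ} (h : w.re = 3/2) : ‖sb l w‖ = Cf l w.im := by
  unfold Cf
  rw [← h, ← sb_norm_sq, Real.sqrt_sq (norm_nonneg _)]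

theorem GG_bdry {l : ℝ} (hl : 0 < l) (k : ℤ) {w : ℂ} (h : w.re = -1/2 ∨ w.re = 1/2) :
    ‖GG l (π * k / l) w‖ * Cf l w.im = 1 := by
  have hs : 0 < Real.sinh l := Real.sinh_pos_iff.mpr hl
  have hs2 : 0 < Real.sinh (l/2) := Real.sinh_pos_iff.mpr (by linarith)
  have h1 : (w - (π * k / l : ℝ) * Complex.I).re = w.re := by simp
  have hE : ‖EE l (w - (π * k / l : ℝ) * Complex.I)‖ = Real.sinh l * ‖sb l w‖ := by
    rw [EE_bdry l (by rw [h1]; exact h), sinh_shift hl, sb_norm_eq hl]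
  unfold GG
  rw [norm_div, norm_mul, norm_mul, norm_sinh_l hl, hE]
  rcases h with h | h
  · have e1 : ‖sa l w‖ = Cf l w.im := by
      rw [← sb_one_sub, sb_eq_Cf l (by simp [h]; norm_num)]
      simp [Cf]
    have e2 : ‖sb l (w+1)‖ = ‖sb l w‖ := by
      rw [← sq_eq_sq₀ (norm_nonneg _) (norm_nonneg _), sb_norm_sq, sb_norm_sq]
      have a : l * (w+1).re = -(l * w.re) := by simp [h]; ring
      rw [a]; simp
    have p1 : 0 < ‖sb l (w+1)‖ := (by positivity : 0 < Real.sinh (l/2) / Real.sinh l).trans_le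
      (sb_lower hl (by simp [h]; norm_num))
    have p2 : 0 < ‖sa l w‖ := (by positivity : 0 < Real.sinh (l/2) / Real.sinh l).trans_le
      (by rw [← sb_one_sub]; exact sb_lower hl (by simp [h]; norm_num))
    rw [e1] at *
    rw [e2] at *
    field_simp
  · have e1 : ‖sb l (w+1)‖ = Cf l w.im := by
      rw [sb_eq_Cf l (by simp [h]; norm_num)]
      simp [Cf]
    have e2 : ‖sa l w‖ = ‖sb l w‖ := by
      rw [← sq_eq_sq₀ (norm_nonneg _) (norm_nonneg _), sb_norm_sq, sa_norm_sq]
      rw [h]; norm_num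
    have p1 : 0 < ‖sb l (w+1)‖ := (by positivity : 0 < Real.sinh (l/2) / Real.sinh l).trans_le
      (sb_lower hl (by simp [h]))
    have p2 : 0 < ‖sb l w‖ := (by positivity : 0 < Real.sinh (l/2) / Real.sinh l).trans_le
      (sb_lower hl (by simp [h]))
    rw [e1] at *
    rw [e2] at *
    field_simp

theorem GG_diff {l : ℝ} (hl : 0 < l) (p : ℝ) {w : ℂ} (h0 : -1/2 ≤ w.re) (h1 : w.re ≤ 1/2) :
    DifferentiableAt ℂ (GG l p) w := by
  have hs : 0 < Real.sinh l := Real.sinh_pos_iff.mpr hl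
  have hs2 : 0 < Real.sinh (l/2) := Real.sinh_pos_iff.mpr (by linarith)
  have p1 : sb l (w+1) ≠ 0 := norm_pos_iff.mp ((by positivity : 0 < Real.sinh (l/2) / Real.sinh l).trans_le
      (sb_lower hl (by simp; linarith)))
  have p2 : sa l w ≠ 0 := norm_pos_iff.mp ((by positivity : 0 < Real.sinh (l/2) / Real.sinh l).trans_le
      (by rw [← sb_one_sub]; exact sb_lower hl (by simp; linarith)))
  have hr : (w - (p : ℝ) * Complex.I).re = w.re := by simp
  unfold GG
  refine DifferentiableAt.div ?_ ?_ (mul_ne_zero (sinh_l_ne hl) (mul_ne_zero p2 p1))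
  · exact (EE_diff l (by rw [hr]; exact h0) (by rw [hr]; exact h1)).comp w (f := fun w => w - p * Complex.I) (by fun_prop)
  · refine DifferentiableAt.mul (by fun_prop) (DifferentiableAt.mul (sa_diff l w) ?_)
    exact (sb_diff l (w+1)).comp w (f := fun w => w + 1) (by fun_prop)

theorem GG_bounded {l : ℝ} (hl : 0 < l) (p : ℝ) : ∃ K : ℝ, 0 ≤ K ∧ ∀ w : ℂ, -1/2 ≤ w.re → w.re ≤ 1/2 → ‖GG l p w‖ ≤ K := by
  have hs : 0 < Real.sinh l := Real.sinh_pos_iff.mpr hl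
  have hs2 : 0 < Real.sinh (l/2) := Real.sinh_pos_iff.mpr (by linarith)
  obtain ⟨K, hK0, hK⟩ := EE_bounded hl
  refine ⟨K / (Real.sinh l * ((Real.sinh (l/2) / Real.sinh l) * (Real.sinh (l/2) / Real.sinh l))), by positivity, fun w h0 h1 => ?_⟩
  have hr : (w - (p : ℝ) * Complex.I).re = w.re := by simp
  unfold GG
  rw [norm_div, norm_mul, norm_mul, norm_sinh_l hl]
  have p1 := sb_lower hl (w := w+1) (by simp; linarith)
  have p2 := sb_lower hl (w := 1-w) (by simp; linarith)
  rw [sb_one_sub] at p2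
  gcongr
  exact hK _ (by rw [hr]; exact h0) (by rw [hr]; exact h1)

theorem T2_bound {l : ℝ} (hl : 0 < l) {N : ℕ} (hN : 0 < N) (ψ : (Fin N → Bool) → ℝ)
    (hψ : ∑ x, ψ x ^ 2 = 1) (w : ℂ) (h : w.re = 0) :
    ‖sb l w ^ N * QF (FT l N w) ψ‖ ≤ 3 * (Real.tanh (π^2/(4*l)) * phi l w.im)^N := by
  have hs : 0 < Real.sinh l := Real.sinh_pos_iff.mpr hl
  have hph := phi_ge l w.im
  have hT : 0 ≤ Real.tanh (π^2/(4*l)) := by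
    rw [Real.tanh_eq_sinh_div_cosh]
    have := Real.sinh_nonneg_iff.mpr (by positivity : 0 ≤ π^2/(4*l))
    have := Real.cosh_pos (π^2/(4*l))
    positivity
  set k : ℤ := round (w.im * l / π) with hk
  set p : ℝ := π * k / l with hp
  have hi : |w.im - p| ≤ π / (2*l) := by
    have := abs_sub_round (w.im * l / π)
    rw [← hk] at this
    have e : w.im - p = (π / l) * (w.im * l / π - k) := by rw [hp]; field_simp
    rw [e, abs_mul, abs_of_pos (by positivity)]
    calc _ ≤ π/l*(1/2) := by gcongr
      _ = _ := by field_simp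
  have key := pl_strip (fun w => QF (FT l N w) ψ * (GG l p w)^N) (-1/2) 3 ?_ ?_ ?_ ?_ w (by rw [h]; norm_num) (by rw [h]; norm_num)
  · by_cases hz : w - p * Complex.I = 0
    · have : w.im = p := by
        have := congrArg Complex.im hz
        rw [Complex.sub_im, Complex.im_ofReal_mul, Complex.I_im, mul_one, Complex.zero_im] at this
        linarith
      have h0 : sb l w = 0 := by
        rw [sb_re_zero h, this, hp, show l * (π * k / l) = k * π by field_simp, Real.sin_int_mul_pi]
        simp
      rw [h0, zero_pow hN.ne', zero_mul, norm_zero]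
      positivity
    · have hz0 : (w - p * Complex.I).re = 0 := by simp [h]
      have hzi : (w - p * Complex.I).im = w.im - p := by
        rw [Complex.sub_im, Complex.im_ofReal_mul, Complex.I_im, mul_one]
      have c := EE_center hl hz0 hz (by rw [hzi]; exact hi)
      rw [hp, sinh_shift hl, sb_norm_eq hl, ← hp] at c
      have e : ‖EE l (w - p * Complex.I)‖ = Real.sinh l * phi l w.im * ‖GG l p w‖ := by
        unfold GG
        rw [rel1 hl, one_sub_sb_sq h, norm_div, norm_mul, norm_sinh_l hl, Complex.norm_real, Real.norm_eq_abs,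
          abs_of_pos (by linarith)]
        field_simp
      rw [e] at c
      have c' : ‖sb l w‖ ≤ Real.tanh (π^2/(4*l)) * phi l w.im * ‖GG l p w‖ := by
        refine le_of_mul_le_mul_left ?_ hs
        linarith
      rw [norm_mul, norm_pow] at key ⊢
      calc _ ≤ (Real.tanh (π^2/(4*l)) * phi l w.im * ‖GG l p w‖)^N * ‖QF (FT l N w) ψ‖ := by gcongr
        _ = (Real.tanh (π^2/(4*l)) * phi l w.im)^N * (‖QF (FT l N w) ψ‖ * ‖GG l p w‖^N) := by rw [mul_pow]; ring
        _ ≤ (Real.tanh (π^2/(4*l)) * phi l w.im)^N * 3 := by gcongr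
        _ = _ := by ring
  · intro z h0 h1
    refine (QF_diff (fun s s' h h' => ft_diff s s' h h') N ψ).mul ((GG_diff hl p h0 (by linarith)).pow N)
  · obtain ⟨K, hK0, hK⟩ := GG_bounded hl p
    obtain ⟨Q, hQ0, hQ⟩ := QF_norm (κ := Fin 3) N ψ
    set R := max (Real.cosh (2*l) / Real.sinh l) (Real.sqrt (2 * Real.cosh l))
    have hR : 0 ≤ R := le_max_of_le_right (Real.sqrt_nonneg _)
    refine ⟨Q * R^N * K^N, 0, fun z h0 h1 _ => ?_⟩
    rw [zero_mul, Real.exp_zero, mul_one, norm_mul, norm_pow]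
    have := hK z h0 (by linarith)
    have b := hQ (ft (sa l z) (sb l z) (sb l (z+1)) (Real.sqrt (2 * Real.cosh l) : ℝ)) R
      (ft_norm _ _ _ _ R hR
       (by rw [← sb_one_sub]; exact (sb_upper hl (by simp; linarith) (by simp; linarith)).trans (le_max_left _ _))
       ((sb_upper hl (by linarith) (by linarith)).trans (le_max_left _ _))
       ((sb_upper hl (by simp; linarith) (by simp; linarith)).trans (le_max_left _ _))
       (by rw [Complex.norm_real, Real.norm_eq_abs, abs_of_nonneg (Real.sqrt_nonneg _)]; exact le_max_right _ _))
    unfold FT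
    gcongr
  · intro z hz
    rw [norm_mul, norm_pow]
    have b := FT_bound hl hN ψ hψ z (Or.inl hz)
    have g := GG_bdry hl k (w := z) (Or.inl hz)
    calc _ ≤ 3 * (Cf l z.im)^N * ‖GG l p z‖^N := by gcongr
      _ = 3 * (‖GG l p z‖ * Cf l z.im)^N := by rw [mul_pow]; ring
      _ = 3 := by rw [hp, g]; simp
  · intro z hz
    have hz : z.re = 1/2 := by linarith
    rw [norm_mul, norm_pow]
    have b := FT_bound hl hN ψ hψ z (Or.inr hz)
    have g := GG_bdry hl k (w := z) (Or.inr hz)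
    calc _ ≤ 3 * (Cf l z.im)^N * ‖GG l p z‖^N := by gcongr
      _ = 3 * (‖GG l p z‖ * Cf l z.im)^N := by rw [mul_pow]; ring
      _ = 3 := by rw [hp, g]; simp

theorem predF_inj {N : ℕ} : Function.Injective (predF (N := N)) := by
  rcases N with _ | n
  · intro i; exact i.elim0
  · intro i j h
    induction i using Fin.cases with
    | zero =>
      induction j using Fin.cases with
      | zero => rfl
      | succ j => rw [predF_zero, predF_succ] at h; exact absurd h.symm (Fin.castSucc_lt_last j).ne
    | succ i =>
      induction j using Fin.cases with
      | zero => rw [predF_zero, predF_succ] at h; exact absurd h (Fin.castSucc_lt_last i).ne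
      | succ j => rw [predF_succ, predF_succ] at h; rw [Fin.castSucc_injective _ h]

/-- number of up arrows. -/
def cnt {N : ℕ} (x : Fin N → Bool) : ℕ := ∑ i, (x i).toNat

theorem TM_cnt {R : Type*} [CommRing R] (a b c : R) {N : ℕ} (x y : Fin N → Bool)
    (h : TM (lt a b c) N x y ≠ 0) : cnt x = cnt y := by
  unfold TM at h
  obtain ⟨k, _, hk⟩ := Finset.exists_ne_zero_of_sum_ne_zero h
  have h1 : ∀ i, lt a b c (x i) (y i) (k (predF i)) (k i) ≠ 0 := by
    intro i hi
    exact hk (Finset.prod_eq_zero (Finset.mem_univ i) hi)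
  have h2 : ∀ i, (x i).toNat + (k (predF i)).toNat = (y i).toNat + (k i).toNat := by
    intro i
    have := h1 i
    revert this
    generalize x i = p
    generalize y i = q
    generalize k (predF i) = r
    generalize k i = s
    cases p <;> cases q <;> cases r <;> cases s <;> simp [lt]
  have h3 := Finset.sum_congr (rfl : (Finset.univ : Finset (Fin N)) = _) (fun i _ => h2 i)
  rw [Finset.sum_add_distrib, Finset.sum_add_distrib] at h3
  have h4 : ∑ i, (k (predF i)).toNat = ∑ i, (k i).toNat :=
    (Finite.injective_iff_bijective.mp predF_inj).sum_comp (fun i => (k i).toNat)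
  unfold cnt
  omega

theorem lt_nonneg {e : ℝ} (he : 0 ≤ e) (s s' h h' : Bool) : 0 ≤ lt e e 1 s s' h h' := by
  unfold lt; split_ifs <;> first | exact he | norm_num

theorem TM_nonneg {e : ℝ} (he : 0 ≤ e) {N : ℕ} (x y : Fin N → Bool) : 0 ≤ TM (lt e e 1) N x y :=
  Finset.sum_nonneg fun _ _ => Finset.prod_nonneg fun _ _ => lt_nonneg he _ _ _ _

theorem TM_symm {R : Type*} [CommRing R] (e c : R) (N : ℕ) : (TM (lt e e c) N).transpose = TM (lt e e c) N := by
  ext x y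
  rw [Matrix.transpose_apply, TM_lt_swap]

theorem TM_adj_pos {e : ℝ} (he : 0 < e) {n : ℕ} (x : Fin (n+1) → Bool) (i : Fin n) (hx : x i.castSucc ≠ x i.succ) :
    0 < TM (lt e e 1) (n+1) x (x ∘ Equiv.swap i.castSucc i.succ) := by
  set y := x ∘ Equiv.swap i.castSucc i.succ with hy
  have hne : i.castSucc ≠ i.succ := (Fin.castSucc_lt_succ).ne
  let k : Fin (n+1) → Bool := fun j => if j = i.castSucc then x i.castSucc else !(x i.castSucc)
  have hle : ∏ j, lt e e 1 (x j) (y j) (k (predF j)) (k j) ≤ TM (lt e e 1) (n+1) x y :=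
    Finset.single_le_sum (f := fun k : Fin (n+1) → Bool => ∏ j, lt e e 1 (x j) (y j) (k (predF j)) (k j))
      (fun _ _ => Finset.prod_nonneg fun _ _ => lt_nonneg he.le _ _ _ _) (Finset.mem_univ k)
  refine lt_of_lt_of_le (Finset.prod_pos fun j _ => ?_) hle
  have hpi : predF i.succ = i.castSucc := predF_succ i
  have hb : x i.succ = !(x i.castSucc) := by
    revert hx; cases x i.castSucc <;> cases x i.succ <;> simp
  by_cases h1 : j = i.castSucc
  · have hp : predF j ≠ i.castSucc := by
      rw [← hpi]; intro h; exact hne (h1 ▸ predF_inj h)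
    have e1 : y j = x i.succ := by simp [hy, h1]
    have e2 : k (predF j) = !(x i.castSucc) := by simp [k, hp]
    have e3 : k j = x i.castSucc := by simp [k, h1]
    rw [e1, e2, e3, hb, h1]
    cases x i.castSucc <;> simp [lt]
  · by_cases h2 : j = i.succ
    · have e1 : y j = x i.castSucc := by simp [hy, h2]
      have e2 : k (predF j) = x i.castSucc := by simp [k, h2, hpi]
      have e3 : k j = !x i.castSucc := by simp [k, h1]
      rw [e1, e2, e3, h2, hb]
      cases x i.castSucc <;> simp [lt]
    · have hp : predF j ≠ i.castSucc := by
        rw [← hpi]; intro h; exact h2 (predF_inj h)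
      have e1 : y j = x j := by simp [hy, Equiv.swap_apply_of_ne_of_ne h1 h2]
      have e2 : k (predF j) = !(x i.castSucc) := by simp [k, hp]
      have e3 : k j = !x i.castSucc := by simp [k, h1]
      rw [e1, e2, e3]
      unfold lt
      simp only [if_true]
      split_ifs <;> exact he

theorem perm_closed {n : ℕ} (P : (Fin (n+1) → Bool) → Prop)
    (h : ∀ x (i : Fin n), P x → P (x ∘ Equiv.swap i.castSucc i.succ)) (σ : Equiv.Perm (Fin (n+1))) :
    ∀ x, P x → P (x ∘ σ) := by
  have hσ : σ ∈ Submonoid.closure (Set.range fun i : Fin n ↦ Equiv.swap i.castSucc i.succ) := by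
    rw [Equiv.Perm.mclosure_swap_castSucc_succ]; trivial
  induction hσ using Submonoid.closure_induction with
  | mem σ hσ => obtain ⟨i, rfl⟩ := hσ; exact fun x => h x i
  | one => intro x hx; exact hx
  | mul σ τ _ _ h1 h2 => intro x hx; exact h2 _ (h1 x hx)

theorem cnt_card {N : ℕ} (x : Fin N → Bool) : cnt x = Fintype.card {i // x i = true} := by
  unfold cnt
  rw [Fintype.card_subtype, Finset.card_filter]
  refine Finset.sum_congr rfl fun i _ => ?_
  cases x i <;> simp

theorem perm_of_cnt {N : ℕ} {x y : Fin N → Bool} (h : cnt x = cnt y) : ∃ σ : Equiv.Perm (Fin N), y = x ∘ σ := by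
  rw [cnt_card, cnt_card] at h
  obtain ⟨e⟩ := Fintype.card_eq.mp h.symm
  refine ⟨e.extendSubtype, funext fun i => ?_⟩
  by_cases hi : y i = true
  · rw [hi, Function.comp, (e.extendSubtype_mem i hi)]
  · have := e.extendSubtype_not_mem i hi
    simp only [Bool.not_eq_true] at hi this
    rw [hi, Function.comp, this]

/-- supported on the zero sector. -/
def Supp {N : ℕ} (ψ : (Fin N → Bool) → ℝ) : Prop := ∀ x, 2 * cnt x ≠ N → ψ x = 0

theorem pf_zero {e : ℝ} (he : 0 < e) {N : ℕ} {μ : ℝ} {ψ : (Fin N → Bool) → ℝ} (h0 : ∀ x, 0 ≤ ψ x)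
    (hs : Supp ψ) (hA : (TM (lt e e 1) N).mulVec ψ = μ • ψ) {x : Fin N → Bool} (hx : 2 * cnt x = N) (hz : ψ x = 0) :
    ψ = 0 := by
  rcases N with _ | n
  · ext y; rw [Subsingleton.elim y x, hz]; rfl
  have step : ∀ x (i : Fin n), ψ x = 0 → ψ (x ∘ Equiv.swap i.castSucc i.succ) = 0 := by
    intro x i hx
    by_cases hi : x i.castSucc = x i.succ
    · have : x ∘ Equiv.swap i.castSucc i.succ = x := by
        ext j
        by_cases h1 : j = i.castSucc
        · simp [h1, hi]
        · by_cases h2 : j = i.succ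
          · simp [h2, hi]
          · simp [Equiv.swap_apply_of_ne_of_ne h1 h2]
      rw [this]; exact hx
    · have hp := TM_adj_pos he x i hi
      have h1 := congrFun hA x
      simp only [Matrix.mulVec, dotProduct, Pi.smul_apply, smul_eq_mul, hx, mul_zero] at h1
      rw [Finset.sum_eq_zero_iff_of_nonneg (fun y _ => mul_nonneg (TM_nonneg he.le _ _) (h0 y))] at h1
      have := h1 _ (Finset.mem_univ (x ∘ Equiv.swap i.castSucc i.succ))
      rcases mul_eq_zero.mp this with h | h
      · exact absurd h hp.ne'
      · exact h
  ext y
  by_cases hy : 2 * cnt y = n+1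
  · obtain ⟨σ, rfl⟩ := perm_of_cnt (x := x) (y := y) (by omega)
    exact perm_closed (fun x => ψ x = 0) step σ x hz
  · exact hs y hy

theorem exists_sector {N : ℕ} (hN : Even N) : ∃ x : Fin N → Bool, 2 * cnt x = N := by
  obtain ⟨k, rfl⟩ := hN
  refine ⟨fun i => decide (i.1 < k), ?_⟩
  unfold cnt
  rw [Fin.sum_univ_add]
  simp; ring

theorem pf_mult {e : ℝ} (he : 0 < e) {N : ℕ} (hN : Even N) {μ : ℝ} {ψ χ : (Fin N → Bool) → ℝ} (h0 : ∀ x, 0 ≤ ψ x)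
    (hne : ψ ≠ 0) (hs : Supp ψ) (hA : (TM (lt e e 1) N).mulVec ψ = μ • ψ)
    (hs' : Supp χ) (hA' : (TM (lt e e 1) N).mulVec χ = μ • χ) : ∃ t : ℝ, χ = t • ψ := by
  obtain ⟨x0, hx0⟩ := exists_sector hN
  have hpos : ∀ x, 2 * cnt x = N → 0 < ψ x := fun x hx =>
    lt_of_le_of_ne (h0 x) fun h => hne (pf_zero he h0 hs hA hx h.symm)
  obtain ⟨x, hx, hmin⟩ := Finset.exists_min_image (Finset.univ.filter fun x : Fin N → Bool => 2 * cnt x = N)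
    (fun x => χ x / ψ x) ⟨x0, by simp [hx0]⟩
  simp only [Finset.mem_filter, Finset.mem_univ, true_and] at hx hmin
  refine ⟨χ x / ψ x, ?_⟩
  have : χ - (χ x / ψ x) • ψ = 0 := by
    refine pf_zero he (μ := μ) (x := x) ?_ ?_ ?_ hx ?_
    · intro y
      simp only [Pi.sub_apply, Pi.smul_apply, smul_eq_mul]
      by_cases hy : 2 * cnt y = N
      · have := hmin y hy
        rw [le_div_iff₀ (hpos y hy)] at this
        linarith
      · rw [hs y hy, hs' y hy]; simp
    · intro y hy
      simp [hs y hy, hs' y hy]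
    · rw [Matrix.mulVec_sub, Matrix.mulVec_smul, hA, hA', smul_sub, smul_comm]
    · have := (hpos x hx).ne'
      simp; field_simp; ring
  exact sub_eq_zero.mp this

/-- Perron vectors. -/
def PV (e : ℝ) {N : ℕ} (ψ : (Fin N → Bool) → ℝ) : Prop :=
  (∀ x, 0 ≤ ψ x) ∧ ∑ x, ψ x ^ 2 = 1 ∧ Supp ψ ∧ (TM (lt e e 1) N).mulVec ψ = rq (TM (lt e e 1) N) ψ • ψ

theorem PV.ne {e : ℝ} {N : ℕ} {ψ : (Fin N → Bool) → ℝ} (h : PV e ψ) : ψ ≠ 0 := by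
  rintro rfl
  have := h.2.1
  simp at this

theorem PV.pos {e : ℝ} (he : 0 < e) {N : ℕ} {ψ : (Fin N → Bool) → ℝ} (h : PV e ψ) {x : Fin N → Bool}
    (hx : 2 * cnt x = N) : 0 < ψ x :=
  lt_of_le_of_ne (h.1 x) fun h' => h.ne (pf_zero he h.1 h.2.2.1 h.2.2.2 hx h'.symm)

theorem PV.unique {e : ℝ} (he : 0 < e) {N : ℕ} (hN : Even N) {ψ χ : (Fin N → Bool) → ℝ} (h : PV e ψ) (h' : PV e χ) :
    χ = ψ := by
  obtain ⟨x0, hx0⟩ := exists_sector hN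
  have hdp : 0 < ψ ⬝ᵥ χ := by
    refine Finset.sum_pos' (fun x _ => mul_nonneg (h.1 x) (h'.1 x)) ⟨x0, Finset.mem_univ _, mul_pos (h.pos he hx0) (h'.pos he hx0)⟩
  have e1 := bil_symm (TM_symm e 1 N) ψ χ
  rw [h.2.2.2, h'.2.2.2, dotProduct_smul, dotProduct_smul, dotProduct_comm χ ψ, smul_eq_mul, smul_eq_mul] at e1
  have e2 := mul_right_cancel₀ hdp.ne' e1
  have h3 := h'.2.2.2
  rw [e2] at h3
  obtain ⟨t, ht⟩ := pf_mult he hN h.1 h.ne h.2.2.1 h.2.2.2 h'.2.2.1 h3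
  have h4 := h'.2.1
  rw [ht] at h4
  simp only [Pi.smul_apply, smul_eq_mul, mul_pow] at h4
  rw [← Finset.mul_sum, h.2.1, mul_one] at h4
  have h5 : 0 < t := by
    have := h'.pos he hx0
    rw [ht] at this
    simp only [Pi.smul_apply, smul_eq_mul] at this
    exact pos_of_mul_pos_left this (h.1 x0)
  have : t = 1 := by nlinarith
  rw [ht, this, one_smul]

theorem PV.exists {e : ℝ} (he : 0 < e) {N : ℕ} (hN : Even N) : ∃ ψ : (Fin N → Bool) → ℝ, PV e ψ := by
  obtain ⟨x0, hx0⟩ := exists_sector hN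
  set A := TM (lt e e 1) N with hA
  set B : Matrix (Fin N → Bool) (Fin N → Bool) ℝ := fun x y => if 2 * cnt x = N then A x y else 0 with hB
  have hsy : ∀ x y, A x y = A y x := fun x y => congrFun (congrFun (TM_symm e 1 N) y) x
  have hz : ∀ x y, cnt x ≠ cnt y → A x y = 0 := fun x y h => by
    by_contra h'; exact h (TM_cnt e e 1 x y h')
  have hBs : B.transpose = B := by
    ext x y
    rw [Matrix.transpose_apply]
    simp only [hB]
    by_cases hc : cnt x = cnt y
    · rw [hc, hsy]
    · rw [hz x y hc, hz y x (Ne.symm hc)]; simp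
  have hB0 : ∀ x y, 0 ≤ B x y := by
    intro x y
    simp only [hB]
    split_ifs
    · exact TM_nonneg he.le _ _
    · exact le_rfl
  obtain ⟨μ, ψ, p0, p1, p2, p3, p4⟩ := rayleigh hBs hB0
  have hxx : 0 < A x0 x0 := by
    have hle : ∏ j, lt e e 1 (x0 j) (x0 j) true true ≤ A x0 x0 :=
      Finset.single_le_sum (f := fun k : Fin N → Bool => ∏ j, lt e e 1 (x0 j) (x0 j) (k (predF j)) (k j))
        (fun _ _ => Finset.prod_nonneg fun _ _ => lt_nonneg he.le _ _ _ _) (Finset.mem_univ (fun _ => true))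
    refine lt_of_lt_of_le (Finset.prod_pos fun j _ => ?_) hle
    unfold lt; simp; exact he
  have hμ : 0 < μ := by
    have := p4 (Pi.single x0 1)
    rw [rq_eq] at this
    simp [Pi.single_apply, Finset.sum_ite_eq'] at this
    have h2 : B x0 x0 = A x0 x0 := by simp [hB, hx0]
    linarith
  have hs : Supp ψ := by
    intro x hx
    have := congrFun p2 x
    simp only [Matrix.mulVec, dotProduct, hB, hx, if_false, zero_mul, Finset.sum_const_zero, Pi.smul_apply, smul_eq_mul] at this
    rcases mul_eq_zero.mp this.symm with h | h
    · exact absurd h hμ.ne'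
    · exact h
  have hAB : A.mulVec ψ = B.mulVec ψ := by
    ext x
    simp only [Matrix.mulVec, dotProduct, hB]
    refine Finset.sum_congr rfl fun y _ => ?_
    by_cases hx : 2 * cnt x = N
    · simp [hx]
    · simp only [hx, if_false, zero_mul]
      by_cases hc : cnt x = cnt y
      · rw [hs y (by rwa [← hc]), mul_zero]
      · rw [hz x y hc, zero_mul]
  refine ⟨ψ, p0, p1, hs, ?_⟩
  rw [← hA, rq_eq, hAB, p2, dotProduct_smul, dp_sq, p1, smul_eq_mul, mul_one]

/-- midpoint weight. -/
def ev (l : ℝ) : ℝ := 1 / (2 * Real.cosh (l/2))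

theorem ev_pos (l : ℝ) : 0 < ev l := by
  have := Real.cosh_pos (l/2); unfold ev; positivity

theorem ev_le (l : ℝ) : ev l ≤ 1/2 := by
  have := Real.one_le_cosh (l/2)
  unfold ev
  apply one_div_le_one_div_of_le <;> linarith

theorem sb_half {l : ℝ} (hl : 0 < l) : sb l (1/2) = (ev l : ℂ) := by
  unfold sb ev
  have h : Real.sinh (l/2) ≠ 0 := (Real.sinh_pos_iff.mpr (by linarith)).ne'
  have h2 : Real.cosh (l/2) ≠ 0 := (Real.cosh_pos _).ne'
  rw [show (l:ℂ) * (1/2) = ((l/2 : ℝ):ℂ) by push_cast; ring, ← Complex.ofReal_sinh, ← Complex.ofReal_sinh, ← Complex.ofReal_div]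
  congr 1
  rw [show Real.sinh l = Real.sinh (2 * (l/2)) by ring_nf, Real.sinh_two_mul]
  field_simp

theorem sa_half {l : ℝ} (hl : 0 < l) : sa l (1/2) = (ev l : ℂ) := by
  rw [← sb_one_sub, ← sb_half hl]; norm_num

theorem TM_ofReal (a b c : ℝ) (N : ℕ) (x y : Fin N → Bool) :
    TM (lt (a:ℂ) (b:ℂ) (c:ℂ)) N x y = ((TM (lt a b c) N x y : ℝ) : ℂ) := by
  unfold TM
  push_cast
  refine Finset.sum_congr rfl fun k _ => Finset.prod_congr rfl fun i _ => ?_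
  unfold lt
  split_ifs <;> simp

theorem TL_half {l : ℝ} (hl : 0 < l) (N : ℕ) (x y : Fin N → Bool) :
    TL l N (1/2) x y = ((TM (lt (ev l) (ev l) 1) N x y : ℝ) : ℂ) := by
  unfold TL
  rw [sa_half hl, sb_half hl, ← TM_ofReal]
  simp

/-- complexification. -/
def cx {X : Type*} (ψ : X → ℝ) : X → ℂ := fun x => (ψ x : ℂ)

theorem QF_eq {X : Type*} [Fintype X] (T : Matrix X X ℂ) (ψ : X → ℝ) : QF T ψ = cx ψ ⬝ᵥ T.mulVec (cx ψ) := by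
  simp [QF, cx, dotProduct, Matrix.mulVec, Finset.mul_sum, mul_assoc]

theorem cx_dot {X : Type*} [Fintype X] {ψ : X → ℝ} (h : ∑ x, ψ x ^2 = 1) : cx ψ ⬝ᵥ cx ψ = 1 := by
  have : ((∑ x, ψ x^2 : ℝ) : ℂ) = 1 := by rw [h]; simp
  rw [← this]
  simp [cx, dotProduct, pow_two]

theorem TL_eig {l : ℝ} (hl : 0 < l) {N : ℕ} (hN : 0 < N) (he : Even N) {ψ : (Fin N → Bool) → ℝ} (h : PV (ev l) ψ)
    (w : ℂ) (h0 : 0 ≤ w.re) (h1 : w.re ≤ 1) :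
    (TL l N w).mulVec (cx ψ) = QF (TL l N w) ψ • cx ψ := by
  set χ := (TL l N w).mulVec (cx ψ) with hχ
  set A := TM (lt (ev l) (ev l) 1) N with hA
  set μ := rq A ψ with hμ
  have hψ : (TL l N (1/2)).mulVec (cx ψ) = (μ:ℂ) • cx ψ := by
    ext x
    have := congrFun h.2.2.2 x
    simp only [Matrix.mulVec, dotProduct, Pi.smul_apply, smul_eq_mul, cx, TL_half hl] at this ⊢
    rw [← hμ, ← hA] at *
    rw [← Complex.ofReal_mul, ← this]
    push_cast
    rfl
  have hc : (TL l N (1/2)).mulVec χ = (μ:ℂ) • χ := by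
    rw [hχ, Matrix.mulVec_mulVec, ← TL_commute hl hN w h0 h1, ← Matrix.mulVec_mulVec, hψ, Matrix.mulVec_smul]
  have hsup : ∀ x, 2 * cnt x ≠ N → χ x = 0 := by
    intro x hx
    rw [hχ]
    simp only [Matrix.mulVec, dotProduct]
    refine Finset.sum_eq_zero fun y _ => ?_
    by_cases hc : cnt x = cnt y
    · simp [cx, h.2.2.1 y (by rwa [← hc])]
    · have : TL l N w x y = 0 := by
        by_contra h'; exact hc (TM_cnt _ _ _ x y h')
      rw [this, zero_mul]
  have hre : A.mulVec (fun x => (χ x).re) = μ • (fun x => (χ x).re) := by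
    ext x
    have := congrArg Complex.re (congrFun hc x)
    simp only [Matrix.mulVec, dotProduct, Pi.smul_apply, smul_eq_mul, TL_half hl, Complex.re_sum, Complex.re_ofReal_mul] at this ⊢
    exact this
  have him : A.mulVec (fun x => (χ x).im) = μ • (fun x => (χ x).im) := by
    ext x
    have := congrArg Complex.im (congrFun hc x)
    simp only [Matrix.mulVec, dotProduct, Pi.smul_apply, smul_eq_mul, TL_half hl, Complex.im_sum, Complex.im_ofReal_mul] at this ⊢
    exact this
  obtain ⟨t1, ht1⟩ := pf_mult (ev_pos l) he h.1 h.ne h.2.2.1 h.2.2.2 (χ := fun x => (χ x).re)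
    (fun x hx => by simp [hsup x hx]) hre
  obtain ⟨t2, ht2⟩ := pf_mult (ev_pos l) he h.1 h.ne h.2.2.1 h.2.2.2 (χ := fun x => (χ x).im)
    (fun x hx => by simp [hsup x hx]) him
  have ht : χ = (⟨t1, t2⟩ : ℂ) • cx ψ := by
    ext x
    apply Complex.ext
    · have := congrFun ht1 x
      simp only [Pi.smul_apply, smul_eq_mul] at this
      simp [cx, this]
    · have := congrFun ht2 x
      simp only [Pi.smul_apply, smul_eq_mul] at this
      simp [cx, this]
  have : QF (TL l N w) ψ = ⟨t1, t2⟩ := by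
    rw [QF_eq, ← hχ, ht, dotProduct_smul, cx_dot h.2.1]; simp
  rw [this]; exact ht

theorem TL_prod {l : ℝ} (hl : 0 < l) {N : ℕ} (hN : 0 < N) (he : Even N) {ψ : (Fin N → Bool) → ℝ} (h : PV (ev l) ψ)
    (w : ℂ) (h0 : w.re = 0) :
    QF (TL l N w) ψ * QF (TL l N (w+1)) ψ = sb l w ^ N * QF (FT l N w) ψ + ((phi l w.im : ℝ):ℂ)^N := by
  have e1 : QF (TL l N w * TL l N (w+1)) ψ = QF (TL l N w) ψ * QF (TL l N (w+1)) ψ := by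
    rw [QF_eq (TL l N w * TL l N (w+1)), ← Matrix.mulVec_mulVec, TL_eig hl hN he h (w+1) (by simp [h0]) (by simp [h0]), Matrix.mulVec_smul,
      TL_eig hl hN he h w h0.ge (by simp [h0]), dotProduct_smul, dotProduct_smul, cx_dot h.2.1]
    simp; ring
  rw [← e1, TL_fusion hl hN, QF_eq, QF_eq, Matrix.add_mulVec, Matrix.smul_mulVec, Matrix.smul_mulVec, Matrix.one_mulVec,
    dotProduct_add, dotProduct_smul, dotProduct_smul, cx_dot h.2.1, one_sub_sb_sq h0]
  simp

theorem bdry_lower0 {l : ℝ} (hl : 0 < l) {N : ℕ} (hN : 0 < N) (he : Even N) {ψ : (Fin N → Bool) → ℝ} (h : PV (ev l) ψ)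
    (hk : 3 * Real.tanh (π^2/(4*l))^N ≤ 1/2) (w : ℂ) (h0 : w.re = 0) :
    Real.sqrt (phi l w.im)^N ≤ 4 * ‖QF (TL l N w) ψ‖ ∧ Real.sqrt (phi l w.im)^N ≤ 4 * ‖QF (TL l N (w+1)) ψ‖ := by
  have hp := TL_prod hl hN he h w h0
  have hph := phi_ge l w.im
  set s := Real.sqrt (phi l w.im) with hs
  have hs0 : 0 < s := Real.sqrt_pos.mpr (by linarith)
  have hss : phi l w.im = s * s := (Real.mul_self_sqrt (by linarith)).symm
  have b1 := TL_bound_zero hl hN ψ h.2.1 w (Or.inl h0)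
  have b2 := TL_bound_zero hl hN ψ h.2.1 (w+1) (Or.inr (by simp [h0]))
  rw [show (w+1).im = w.im by simp] at b2
  rw [← hs] at b1 b2
  have b3 := T2_bound hl hN ψ h.2.1 w h0
  have hl2 : s^N * s^N ≤ 2 * (‖QF (TL l N w) ψ‖ * ‖QF (TL l N (w+1)) ψ‖) := by
    have e : ‖((phi l w.im : ℝ):ℂ)^N‖ = s^N * s^N := by
      rw [norm_pow, Complex.norm_real, Real.norm_eq_abs, abs_of_pos (by linarith), hss, mul_pow]
    have : ((phi l w.im : ℝ):ℂ)^N = QF (TL l N w) ψ * QF (TL l N (w+1)) ψ - sb l w ^ N * QF (FT l N w) ψ := by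
      rw [hp]; ring
    rw [← e]
    rw [mul_pow, hss, mul_pow] at b3
    have h4 := norm_sub_le (QF (TL l N w) ψ * QF (TL l N (w+1)) ψ) (sb l w ^ N * QF (FT l N w) ψ)
    rw [← this, norm_mul (QF _ _), e] at h4
    have h5 : 0 < s^N * s^N := by positivity
    rw [e]
    nlinarith
  have hq : 0 < s^N := by positivity
  constructor
  · by_contra hc
    push Not at hc
    nlinarith [norm_nonneg (QF (TL l N w) ψ), norm_nonneg (QF (TL l N (w+1)) ψ)]
  · by_contra hc
    push Not at hc
    nlinarith [norm_nonneg (QF (TL l N w) ψ), norm_nonneg (QF (TL l N (w+1)) ψ)]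

theorem bdry_lower {l : ℝ} (hl : 0 < l) {N : ℕ} (hN : 0 < N) (he : Even N) {ψ : (Fin N → Bool) → ℝ} (h : PV (ev l) ψ)
    (hk : 3 * Real.tanh (π^2/(4*l))^N ≤ 1/2) (w : ℂ) (h0 : w.re = 0 ∨ w.re = 1) :
    Real.sqrt (phi l w.im)^N ≤ 4 * ‖QF (TL l N w) ψ‖ := by
  rcases h0 with h0 | h0
  · exact (bdry_lower0 hl hN he h hk w h0).1
  · have := (bdry_lower0 hl hN he h hk (w-1) (by simp [h0])).2
    simpa using this

theorem sinh_period (z : ℂ) (k : ℤ) : Complex.sinh (z - k * (2 * π * Complex.I)) = Complex.sinh z := by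
  have h := Complex.exp_periodic.sub_int_mul_eq (x := z) k
  have h2 := Complex.exp_periodic.int_mul k (-z)
  rw [Complex.sinh, Complex.sinh, h, ← h2]
  ring_nf

theorem TL_period {l : ℝ} (hl : 0 < l) (N : ℕ) (w : ℂ) :
    ∃ w' : ℂ, w'.re = w.re ∧ 0 ≤ w'.im ∧ w'.im ≤ 2*π/l ∧ TL l N w' = TL l N w := by
  set k : ℤ := ⌊w.im / (2*π/l)⌋ with hk
  have hp : 0 < 2*π/l := by positivity
  have k1 : (k:ℝ) * (2*π/l) ≤ w.im := by rw [← le_div_iff₀ hp]; exact Int.floor_le _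
  have k2 : w.im ≤ ((k:ℝ)+1) * (2*π/l) := by rw [← div_le_iff₀ hp]; exact (Int.lt_floor_add_one _).le
  have hi : (w - (k * (2*π/l) : ℝ) * Complex.I).im = w.im - k * (2*π/l) := by
    rw [Complex.sub_im, Complex.im_ofReal_mul, Complex.I_im, mul_one]
  refine ⟨w - (k * (2*π/l) : ℝ) * Complex.I, by simp, by rw [hi]; linarith, by rw [hi]; linarith, ?_⟩
  have hlc : (l:ℂ) ≠ 0 := by exact_mod_cast hl.ne'
  have e2 : sb l (w - (k * (2*π/l) : ℝ) * Complex.I) = sb l w := by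
    unfold sb
    rw [← sinh_period (l*w) k]
    congr 2; push_cast; field_simp
  have e1 : sa l (w - (k * (2*π/l) : ℝ) * Complex.I) = sa l w := by
    unfold sa
    rw [← sinh_period (l*(1-w)) (-k)]
    congr 2; push_cast; field_simp; ring
  unfold TL
  rw [e1, e2]

theorem TL_diff {l : ℝ} (N : ℕ) (ψ : (Fin N → Bool) → ℝ) (z : ℂ) : DifferentiableAt ℂ (fun w => QF (TL l N w) ψ) z :=
  QF_diff (lt_diff (sa_diff l z) (sb_diff l z)) N ψ

theorem pl_lower {l : ℝ} (hl : 0 < l) {N : ℕ} (hN : 0 < N) (he : Even N) {ψ : (Fin N → Bool) → ℝ} (h : PV (ev l) ψ)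
    (hk : 3 * Real.tanh (π^2/(4*l))^N ≤ 1/2)
    (hz : ∀ w : ℂ, 0 ≤ w.re → w.re ≤ 1 → QF (TL l N w) ψ ≠ 0) (g : ℂ → ℂ)
    (gd : ∀ w : ℂ, 0 ≤ w.re → w.re ≤ 1 → DifferentiableAt ℂ g w)
    (gg : ∃ K B : ℝ, ∀ w : ℂ, 0 ≤ w.re → w.re ≤ 1 → 1 ≤ |w.im| → ‖g w‖ ≤ K * Real.exp (B * |w.im|))
    (gb : ∀ w : ℂ, w.re = 0 ∨ w.re = 1 → ‖g w‖^2 ≤ phi l w.im) (w : ℂ) (h0 : 0 ≤ w.re) (h1 : w.re ≤ 1) :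
    ‖g w‖^N ≤ 4 * ‖QF (TL l N w) ψ‖ := by
  have bd : ∀ w : ℂ, w.re = 0 ∨ w.re = 1 → ‖g w‖^N ≤ 4 * ‖QF (TL l N w) ψ‖ := by
    intro w hw
    refine le_trans ?_ (bdry_lower hl hN he h hk w hw)
    gcongr
    exact Real.le_sqrt_of_sq_le (gb w hw)
  have key := pl_strip (fun w => g w ^ N * (QF (TL l N w) ψ)⁻¹) 0 4 ?_ ?_ ?_ ?_ w h0 (by linarith)
  · rw [norm_mul, norm_pow, norm_inv, ← div_eq_mul_inv, div_le_iff₀ (norm_pos_iff.mpr (hz w h0 h1))] at key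
    exact key
  · intro z z0 z1
    rw [zero_add] at z1
    exact ((gd z z0 z1).pow N).mul ((TL_diff N ψ z).inv (hz z z0 z1))
  · obtain ⟨K, B, hKB⟩ := gg
    have hc : IsCompact (Set.Icc (0:ℝ) 1 ×ℂ Set.Icc (0:ℝ) (2*π/l)) := isCompact_Icc.reProdIm isCompact_Icc
    obtain ⟨M, hM⟩ := hc.exists_bound_of_continuousOn (f := fun w => (QF (TL l N w) ψ)⁻¹) (fun z hz' => by
      rw [Complex.mem_reProdIm] at hz'
      exact ((TL_diff N ψ z).inv (hz z hz'.1.1 hz'.1.2)).continuousAt.continuousWithinAt)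
    refine ⟨K^N * M, N * B, fun z z0 z1 zi => ?_⟩
    rw [zero_add] at z1
    obtain ⟨w', a1, a2, a3, a4⟩ := TL_period hl N z
    have b := hM w' (by rw [Complex.mem_reProdIm, a1]; exact ⟨⟨z0, z1⟩, a2, a3⟩)
    rw [a4] at b
    have c := hKB z z0 z1 zi
    have hM0 := (norm_nonneg _).trans b
    have hK0 := (norm_nonneg _).trans c
    rw [norm_mul, norm_pow]
    calc _ ≤ (K * Real.exp (B * |z.im|))^N * M := by
          have := pow_nonneg hK0 N
          gcongr
      _ = _ := by rw [mul_pow, ← Real.exp_nat_mul]; ring_nf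
  · intro z hz'
    rw [norm_mul, norm_pow, norm_inv, ← div_eq_mul_inv, div_le_iff₀ (norm_pos_iff.mpr (hz z (by linarith) (by linarith)))]
    exact bd z (Or.inl hz')
  · intro z hz'
    rw [zero_add] at hz'
    rw [norm_mul, norm_pow, norm_inv, ← div_eq_mul_inv, div_le_iff₀ (norm_pos_iff.mpr (hz z (by linarith) (by linarith)))]
    exact bd z (Or.inr hz')

/-- alternating rows. -/
def Alt {N : ℕ} (x : Fin N → Bool) : Prop := ∀ i, x (predF i) = !(x i)

theorem Alt.not {N : ℕ} {x : Fin N → Bool} (h : Alt x) : Alt (fun i => !(x i)) := fun i => by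
  show (!(x (predF i))) = !(!(x i))
  rw [h i]

theorem Alt.exists {N : ℕ} (h2 : 2 ≤ N) (he : Even N) : ∃ x : Fin N → Bool, Alt x := by
  refine ⟨fun i => decide (i.1 % 2 = 0), fun i => ?_⟩
  have hi := i.2
  obtain ⟨m, rfl⟩ := he
  have : (predF i).1 % 2 = (i.1 + 1) % 2 := by
    unfold predF
    simp only
    rw [Nat.mod_mod_of_dvd _ (by omega : 2 ∣ m + m)]
    omega
  show decide ((predF i).1 % 2 = 0) = !(decide (i.1 % 2 = 0))
  rw [this]
  rcases Nat.mod_two_eq_zero_or_one i.1 with h | h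
  · have : (i.1 + 1) % 2 = 1 := by omega
    simp [h, this]
  · have : (i.1 + 1) % 2 = 0 := by omega
    simp [h, this]

theorem Alt.cases {N : ℕ} {x y : Fin N → Bool} (hx : Alt x) (hy : Alt y) : y = x ∨ y = fun i => !(x i) := by
  rcases N with _ | n
  · left; exact Subsingleton.elim _ _
  have key : ∀ i : Fin (n+1), xor (x i) (y i) = xor (x 0) (y 0) := by
    intro i
    induction i using Fin.induction with
    | zero => rfl
    | succ i ih =>
      have h1 := hx i.succ
      have h2 := hy i.succ
      rw [predF_succ] at h1 h2
      rw [h1, h2] at ih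
      rw [← ih]; simp
  rcases h : xor (x 0) (y 0) with _ | _
  · left; ext i
    have := key i
    rw [h] at this
    revert this; cases x i <;> cases y i <;> simp
  · right; ext i
    have := key i
    rw [h] at this
    revert this; cases x i <;> cases y i <;> simp

theorem alt_cnt {N : ℕ} {x : Fin N → Bool} (hx : Alt x) : 2 * cnt x = N := by
  have h1 : cnt (fun i => !(x i)) = cnt x := by
    have : cnt (fun i => !(x i)) = cnt (x ∘ predF) := by
      unfold cnt
      refine Finset.sum_congr rfl fun i _ => ?_
      simp [hx i]
    rw [this]
    exact (Finite.injective_iff_bijective.mp predF_inj).sum_comp (fun i => (x i).toNat)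
  have h2 : cnt x + cnt (fun i => !(x i)) = N := by
    unfold cnt
    rw [← Finset.sum_add_distrib]
    have : ∀ i, (x i).toNat + (!(x i)).toNat = 1 := by intro i; cases x i <;> simp
    simp [this]
  omega

theorem TM_alt {R : Type*} [CommRing R] (a b : R) {N : ℕ} {x : Fin N → Bool} (hx : Alt x) :
    TM (lt a b 1) N x (fun i => !(x i)) = 1 := by
  unfold TM
  rw [Finset.sum_eq_single x]
  · refine Finset.prod_eq_one fun i _ => ?_
    beta_reduce
    rw [hx i]
    generalize x i = p
    cases p <;> simp [lt]
  · intro k _ hk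
    obtain ⟨i, hi⟩ := Function.ne_iff.mp hk
    refine Finset.prod_eq_zero (Finset.mem_univ i) ?_
    revert hi
    beta_reduce
    generalize x i = p
    generalize k i = q
    generalize k (predF i) = r
    cases p <;> cases q <;> cases r <;> simp [lt]
  · intro h; exact absurd (Finset.mem_univ _) h

theorem prod_two {N : ℕ} (f : Fin N → ℂ) (R : ℝ) (hR : 1 ≤ R) (hf : ∀ i, ‖f i‖ ≤ R) {i j : Fin N} (hij : i ≠ j) (D : ℝ)
    (hD : ‖f i * f j‖ ≤ D) : ‖∏ i, f i‖ ≤ D * R^N := by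
  rw [← Finset.mul_prod_erase _ _ (Finset.mem_univ i), ← Finset.mul_prod_erase _ _ (Finset.mem_erase.mpr ⟨hij.symm, Finset.mem_univ j⟩),
    ← mul_assoc, norm_mul]
  have h2 : ‖∏ x ∈ (Finset.univ.erase i).erase j, f x‖ ≤ R^N := by
    rw [norm_prod]
    refine (Finset.prod_le_prod (fun i _ => norm_nonneg _) (fun i _ => hf i)).trans ?_
    rw [Finset.prod_const]
    refine pow_le_pow_right₀ hR ?_
    refine (Finset.card_le_univ _).trans (by simp)
  have := (norm_nonneg _).trans hD
  gcongr

theorem pred_ne {N : ℕ} (h : 2 ≤ N) (i : Fin N) : i ≠ predF i := by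
  rcases N with _ | n
  · omega
  induction i using Fin.cases with
  | zero => rw [predF_zero]; intro h'; have := congrArg Fin.val h'; simp at this; omega
  | succ i => rw [predF_succ]; exact (Fin.castSucc_lt_succ).ne'

theorem TM_alt_diag (a b : ℂ) (R D : ℝ) (hR : 1 ≤ R) (ha : ‖a‖ ≤ R) (hb : ‖b‖ ≤ R) (hD : ‖a * b‖ ≤ D)
    {N : ℕ} (hN : 2 ≤ N) {x : Fin N → Bool} (hx : Alt x) :
    ‖TM (lt a b 1) N x x‖ ≤ 2^N * (D * R^N) := by
  unfold TM
  refine (norm_sum_le _ _).trans ?_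
  refine (Finset.sum_le_card_nsmul _ _ (D * R^N) fun k _ => ?_).trans ?_
  · let i : Fin N := ⟨0, by omega⟩
    refine prod_two _ R hR (fun i => lt_norm a b R hR ha hb _ _ _ _) (pred_ne hN i) D ?_
    have hD' : ‖b * a‖ ≤ D := by rwa [mul_comm]
    have hD0 := (norm_nonneg _).trans hD
    rw [hx i]
    generalize x i = p
    generalize k (predF i) = q
    generalize k i = r
    generalize k (predF (predF i)) = s
    cases p <;> cases q <;> cases r <;> cases s <;> simp only [lt] <;> simp <;> first | exact hD0 | simpa using hD | simpa using hD'
  · simp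

theorem TM_nonalt {e : ℝ} (he : 0 < e) (he1 : e ≤ 1) {N : ℕ} (hN : 2 ≤ N) {x : Fin N → Bool} (hx : ¬ Alt x) (y : Fin N → Bool) :
    TM (lt e e 1) N x y ≤ 2^N * e := by
  unfold Alt at hx
  push Not at hx
  obtain ⟨i, hi⟩ := hx
  have hi : x (predF i) = x i := by revert hi; cases x i <;> cases x (predF i) <;> simp
  have : ‖TM (lt (e:ℂ) e 1) N x y‖ ≤ 2^N * e := by
    unfold TM
    refine (norm_sum_le _ _).trans ?_
    refine (Finset.sum_le_card_nsmul _ _ (e * 1^N) fun k _ => ?_).trans ?_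
    · have hn : ‖(e:ℂ)‖ = e := by rw [Complex.norm_real, Real.norm_eq_abs, abs_of_pos he]
      refine prod_two _ 1 le_rfl (fun i => lt_norm _ _ 1 le_rfl (by rw [hn]; exact he1) (by rw [hn]; exact he1) _ _ _ _) (pred_ne hN i) e ?_
      rw [hi]
      generalize x i = p
      generalize k (predF i) = q
      generalize k i = r
      generalize k (predF (predF i)) = s
      generalize y i = t
      generalize y (predF i) = u
      have h1 : e * e ≤ e := by nlinarith
      cases p <;> cases q <;> cases r <;> cases s <;> cases t <;> cases u <;> simp only [lt] <;> simp [abs_of_pos he] <;> first | exact he.le | exact h1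
    · simp
  have e2 := TM_ofReal e e 1 N x y
  rw [Complex.ofReal_one] at e2
  rw [e2, Complex.norm_real, Real.norm_eq_abs] at this
  exact (le_abs_self _).trans this

theorem sb_ub {l : ℝ} (hl : 1 ≤ l) {w : ℂ} (h0 : 0 ≤ w.re) (h1 : w.re ≤ 1) : ‖sb l w‖ ≤ 2 := by
  have hs : l ≤ Real.sinh l := Real.self_le_sinh_iff.mpr (by linarith)
  have h := sb_norm_eq (by linarith : 0 < l) w
  have h2 := norm_sinh_le (l * w)
  rw [h, Complex.re_ofReal_mul] at h2
  have h3 : Real.cosh (l * w.re) ≤ Real.cosh l := by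
    rw [Real.cosh_le_cosh, abs_of_nonneg (by positivity), abs_of_pos (by linarith)]; nlinarith
  have h4 : Real.cosh l ≤ 2 * Real.sinh l := by
    have := Real.cosh_sub_sinh l
    have : Real.exp (-l) ≤ 1 := Real.exp_le_one_iff.mpr (by linarith)
    linarith
  have : Real.sinh l * ‖sb l w‖ ≤ Real.sinh l * 2 := by linarith
  exact le_of_mul_le_mul_left this (by linarith)

theorem sab_ub {l : ℝ} (hl : 1 ≤ l) {w : ℂ} (h0 : 0 ≤ w.re) (h1 : w.re ≤ 1) : ‖sa l w * sb l w‖ ≤ 2 / l := by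
  have hl0 : 0 < l := by linarith
  have hs : l ≤ Real.sinh l := Real.self_le_sinh_iff.mpr (by linarith)
  have a1 := norm_sinh_le (l * w)
  have a2 := norm_sinh_le (l * (1 - w))
  rw [sb_norm_eq hl0, Complex.re_ofReal_mul] at a1 a2
  rw [sb_one_sub, Complex.sub_re, Complex.one_re] at a2
  have h4 : Real.cosh l ≤ 2 * Real.sinh l := by
    have := Real.cosh_sub_sinh l
    have : Real.exp (-l) ≤ 1 := Real.exp_le_one_iff.mpr (by linarith)
    linarith
  have h5 : Real.cosh (l * w.re) * Real.cosh (l * (1 - w.re)) ≤ Real.cosh l := by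
    have e : Real.cosh l = Real.cosh (l * w.re + l * (1 - w.re)) := by ring_nf
    rw [e, Real.cosh_add]
    have b1 := Real.sinh_nonneg_iff.mpr (by positivity : 0 ≤ l * w.re)
    have b2 := Real.sinh_nonneg_iff.mpr (mul_nonneg hl0.le (by linarith : 0 ≤ 1 - w.re))
    nlinarith
  have h6 : (Real.sinh l * ‖sb l w‖) * (Real.sinh l * ‖sa l w‖) ≤ 2 * Real.sinh l := by
    refine (mul_le_mul a1 a2 (by positivity) (by positivity)).trans (h5.trans h4)
  have h7 : Real.sinh l * (Real.sinh l * ‖sa l w * sb l w‖) ≤ Real.sinh l * 2 := by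
    rw [norm_mul]; linarith
  have h8 := le_of_mul_le_mul_left h7 (by linarith)
  rw [le_div_iff₀ hl0]
  nlinarith [norm_nonneg (sa l w * sb l w)]

theorem start_zero_free {N : ℕ} (h2 : 2 ≤ N) (he : Even N) {l : ℝ} (hl : 1 ≤ l)
    (hl2 : 2^N * (2 * 8^N + 32^N) < l) {ψ : (Fin N → Bool) → ℝ} (h : PV (ev l) ψ) (w : ℂ) (h0 : 0 ≤ w.re) (h1 : w.re ≤ 1) :
    QF (TL l N w) ψ ≠ 0 := by
  intro hz
  have hl0 : 0 < l := by linarith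
  have hev : ev l ≤ 1 / l := by
    unfold ev
    have h1 : l / 2 ≤ Real.sinh (l/2) := Real.self_le_sinh_iff.mpr (by linarith)
    have h2 := Real.sinh_lt_cosh (x := l/2)
    apply one_div_le_one_div_of_le hl0; linarith
  have hep := ev_pos l
  have he1 : ev l ≤ 1 := by have := ev_le l; linarith
  set A := TM (lt (ev l) (ev l) 1) N with hA
  set μ := rq A ψ with hμ
  have hψ1 : ∀ x, ψ x ≤ 1 := by
    intro x
    have : ψ x ^2 ≤ ∑ x, ψ x^2 := Finset.single_le_sum (f := fun x => ψ x^2) (fun _ _ => sq_nonneg _) (Finset.mem_univ x)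
    rw [h.2.1] at this
    nlinarith [h.1 x]
  have hrow : ∀ x, ∑ y, A x y * ψ y = μ * ψ x := fun x => congrFun h.2.2.2 x
  have hA0 : ∀ x y, 0 ≤ A x y := fun x y => TM_nonneg hep.le x y
  have hstep : ∀ x, Alt x → ψ (fun i => !(x i)) ≤ μ * ψ x := by
    intro x hx
    rw [← hrow x]
    refine le_trans ?_ (Finset.single_le_sum (f := fun y => A x y * ψ y) (fun y _ => mul_nonneg (hA0 x y) (h.1 y)) (Finset.mem_univ (fun i => !(x i))))
    rw [hA, TM_alt _ _ hx, one_mul]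
  obtain ⟨x0, hx0⟩ := Alt.exists h2 he
  have hμ1 : 1 ≤ μ := by
    have a1 := hstep x0 hx0
    have a2 := hstep _ hx0.not
    simp only [Bool.not_not] at a2
    have b1 := h.pos hep (alt_cnt hx0)
    have b2 := h.pos hep (alt_cnt hx0.not)
    by_contra hc
    push Not at hc
    nlinarith
  have hna : ∀ x, ¬ Alt x → ψ x ≤ 4^N * ev l := by
    intro x hx
    have : ∑ y, A x y * ψ y ≤ ∑ y : Fin N → Bool, 2^N * ev l := by
      refine Finset.sum_le_sum fun y _ => ?_
      have := TM_nonalt hep he1 h2 hx y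
      calc A x y * ψ y ≤ A x y * 1 := mul_le_mul_of_nonneg_left (hψ1 y) (hA0 x y)
        _ ≤ _ := by rw [mul_one]; exact this
    rw [hrow] at this
    simp only [Finset.sum_const, Finset.card_univ, Fintype.card_fun, Fintype.card_bool, Fintype.card_fin, nsmul_eq_mul] at this
    push_cast at this
    have e4 : (4:ℝ)^N = 2^N * 2^N := by rw [← mul_pow]; norm_num
    rw [e4]
    nlinarith [h.1 x]
  have hal : ∀ x, Alt x → ψ (fun i => !(x i)) ≤ (2 * 8^N + 32^N) / l := by
    intro x hx
    have hr := congrFun (TL_eig hl0 (by omega) he h w h0 h1) x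
    rw [hz, zero_smul] at hr
    simp only [Matrix.mulVec, dotProduct, Pi.zero_apply] at hr
    have hne : (fun i => !(x i)) ≠ x := by
      intro h'
      have := congrFun h' ⟨0, by omega⟩
      simp at this
    rw [← Finset.add_sum_erase _ _ (Finset.mem_univ (fun i => !(x i))),
      ← Finset.add_sum_erase _ _ (Finset.mem_erase.mpr ⟨hne.symm, Finset.mem_univ x⟩)] at hr
    have t1 : TL l N w x (fun i => !(x i)) = 1 := TM_alt _ _ hx
    rw [t1, one_mul] at hr
    have sa2 : ‖sa l w‖ ≤ 2 := by
      rw [← sb_one_sub]; exact sb_ub hl (by simp; linarith) (by simp; linarith)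
    have sb2 := sb_ub hl h0 h1
    have t2 : ‖TL l N w x x‖ ≤ 2^N * (2/l * 2^N) := TM_alt_diag _ _ 2 (2/l) (by norm_num) sa2 sb2 (sab_ub hl h0 h1) h2 hx
    have t3 : ∀ y, ‖TL l N w x y‖ ≤ 2^N * 2^N := fun y => by
      have := TM_norm (lt (sa l w) (sb l w) 1) 2 (lt_norm _ _ 2 (by norm_num) sa2 sb2) N x y
      unfold TL; simpa using this
    have hcn : ∀ y, ‖cx ψ y‖ = ψ y := fun y => by
      rw [cx, Complex.norm_real, Real.norm_eq_abs, abs_of_nonneg (h.1 y)]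
    have t4 : ‖∑ y ∈ (Finset.univ.erase (fun i => !(x i))).erase x, TL l N w x y * cx ψ y‖ ≤ 2^N * (2^N * 2^N * (4^N * ev l)) := by
      refine (norm_sum_le _ _).trans ?_
      refine (Finset.sum_le_card_nsmul _ _ (2^N * 2^N * (4^N * ev l)) fun y hy => ?_).trans ?_
      · rw [norm_mul, hcn]
        have hy1 : ¬ Alt y := by
          intro hay
          simp only [Finset.mem_erase, Finset.mem_univ, and_true] at hy
          rcases hx.cases hay with h' | h'
          · exact hy.1 h'
          · exact hy.2 h'
        exact mul_le_mul (t3 y) (hna y hy1) (h.1 y) (by positivity)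
      · rw [nsmul_eq_mul]
        gcongr
        have : ((Finset.univ.erase (fun i => !(x i))).erase x).card ≤ 2^N := (Finset.card_le_univ _).trans (by simp)
        exact_mod_cast this
    have t5 : cx ψ (fun i => !(x i)) = -(TL l N w x x * cx ψ x + ∑ y ∈ (Finset.univ.erase (fun i => !(x i))).erase x, TL l N w x y * cx ψ y) :=
      eq_neg_of_add_eq_zero_left hr
    have t6 := congrArg norm t5
    rw [hcn, norm_neg] at t6
    have t7 := norm_add_le (TL l N w x x * cx ψ x) (∑ y ∈ (Finset.univ.erase (fun i => !(x i))).erase x, TL l N w x y * cx ψ y)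
    rw [← t6, norm_mul, hcn] at t7
    have t8 : ‖TL l N w x x‖ * ψ x ≤ ‖TL l N w x x‖ * 1 := mul_le_mul_of_nonneg_left (hψ1 x) (norm_nonneg _)
    have e4 : (4:ℝ)^N = 2^N * 2^N := by rw [← mul_pow]; norm_num
    have e8 : (8:ℝ)^N = 2^N * 2^N * 2^N := by rw [← mul_pow, ← mul_pow]; norm_num
    have e32 : (32:ℝ)^N = 2^N * (2^N * 2^N * 4^N) := by rw [← mul_pow, ← mul_pow, ← mul_pow]; norm_num
    have hev2 : 2^N * (2^N * 2^N * (4^N * ev l)) ≤ 32^N / l := by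
      rw [e32]
      calc _ ≤ (2:ℝ)^N * (2^N * 2^N * (4^N * (1/l))) := by gcongr
        _ = _ := by ring
    have hq : (2:ℝ)^N * (2/l * 2^N) ≤ 2 * 8^N / l := by
      rw [e8]
      have : (1:ℝ) ≤ 2^N := one_le_pow₀ (by norm_num)
      calc (2:ℝ)^N * (2/l * 2^N) = 2 * (2^N * 2^N * 1) / l := by ring
        _ ≤ _ := by gcongr
    rw [add_div]
    linarith
  have hall : ∀ x, ψ x ≤ (2 * 8^N + 32^N) / l := by
    intro x
    by_cases hx : Alt x
    · have := hal _ hx.not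
      simpa using this
    · refine (hna x hx).trans ?_
      have : (4:ℝ)^N ≤ 32^N := by gcongr; norm_num
      calc (4:ℝ)^N * ev l ≤ 32^N * (1/l) := by gcongr
        _ = 32^N / l := by ring
        _ ≤ _ := by gcongr; have : (0:ℝ) ≤ 2 * 8^N := by positivity
                    linarith
  have hs : (2 * 8^N + 32^N) / l < 1 / 2^N := by
    rw [div_lt_div_iff₀ hl0 (by positivity)]; linarith
  have hx2 : ∀ x, ψ x^2 ≤ ((2 * 8^N + 32^N) / l)^2 := fun x => pow_le_pow_left₀ (h.1 x) (hall x) 2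
  have hsum := Finset.sum_le_sum (fun x (_ : x ∈ Finset.univ) => hx2 x)
  rw [h.2.1] at hsum
  simp only [Finset.sum_const, Finset.card_univ, Fintype.card_fun, Fintype.card_bool, Fintype.card_fin, nsmul_eq_mul] at hsum
  push_cast at hsum
  have h2N : (1:ℝ) ≤ 2^N := one_le_pow₀ (by norm_num)
  have hpos : 0 ≤ (2 * 8^N + 32^N) / l := by positivity
  rw [lt_div_iff₀ (by positivity)] at hs
  generalize (2 * 8^N + 32^N) / l = S at *
  have : S ≤ S * 2^N := by nlinarith
  nlinarith

theorem TM_cont {Y R : Type*} [TopologicalSpace Y] [CommRing R] [TopologicalSpace R] [IsTopologicalRing R] {a b : Y → R}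
    (ha : Continuous a) (hb : Continuous b) {N : ℕ} (x y : Fin N → Bool) :
    Continuous (fun p => TM (lt (a p) (b p) 1) N x y) := by
  unfold TM
  refine continuous_finset_sum _ fun k _ => continuous_finset_prod _ fun i _ => ?_
  unfold lt
  split_ifs <;> first | exact ha | exact hb | exact continuous_const

theorem ev_cont : Continuous ev := by
  unfold ev
  refine continuous_const.div (by fun_prop) fun l => ?_
  have := Real.cosh_pos (l/2); positivity

theorem QF_cont {l0 : ℝ} (hl0 : 0 < l0) (N : ℕ) :
    Continuous (fun p : ℝ × ((Fin N → Bool) → ℝ) × ℂ => QF (TL (max p.1 l0) N p.2.2) p.2.1) := by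
  have hne : ∀ p : ℝ × ((Fin N → Bool) → ℝ) × ℂ, Complex.sinh ((max p.1 l0 : ℝ) : ℂ) ≠ 0 := fun p =>
    sinh_l_ne (lt_of_lt_of_le hl0 (le_max_right _ _))
  have c0 : Continuous (fun p : ℝ × ((Fin N → Bool) → ℝ) × ℂ => ((max p.1 l0 : ℝ) : ℂ)) :=
    Complex.continuous_ofReal.comp (continuous_fst.max continuous_const)
  have ca : Continuous (fun p : ℝ × ((Fin N → Bool) → ℝ) × ℂ => sa (max p.1 l0) p.2.2) := by
    unfold sa
    exact (Complex.continuous_sinh.comp (c0.mul (by fun_prop))).div (Complex.continuous_sinh.comp c0) hne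
  have cb : Continuous (fun p : ℝ × ((Fin N → Bool) → ℝ) × ℂ => sb (max p.1 l0) p.2.2) := by
    unfold sb
    exact (Complex.continuous_sinh.comp (c0.mul (by fun_prop))).div (Complex.continuous_sinh.comp c0) hne
  unfold QF TL
  refine continuous_finset_sum _ fun x _ => continuous_finset_sum _ fun y _ => ?_
  refine (Continuous.mul ?_ (TM_cont ca cb x y)).mul ?_ <;> fun_prop

theorem PV_closed (N : ℕ) : IsClosed {p : ℝ × ((Fin N → Bool) → ℝ) | PV (ev p.1) p.2} := by
  have ct : ∀ x y, Continuous (fun p : ℝ × ((Fin N → Bool) → ℝ) => TM (lt (ev p.1) (ev p.1) 1) N x y) := fun x y =>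
    TM_cont (ev_cont.comp continuous_fst) (ev_cont.comp continuous_fst) x y
  have cq : Continuous (fun p : ℝ × ((Fin N → Bool) → ℝ) => rq (TM (lt (ev p.1) (ev p.1) 1) N) p.2) := by
    unfold rq
    refine continuous_finset_sum _ fun x _ => continuous_finset_sum _ fun y _ => ?_
    refine (Continuous.mul ?_ (ct x y)).mul ?_ <;> fun_prop
  unfold PV
  simp only [Set.setOf_and]
  refine IsClosed.inter ?_ (IsClosed.inter ?_ (IsClosed.inter ?_ ?_))
  · simp only [Set.setOf_forall]
    exact isClosed_iInter fun x => isClosed_le continuous_const (by fun_prop)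
  · exact isClosed_eq (by fun_prop) continuous_const
  · unfold Supp
    simp only [Set.setOf_forall]
    exact isClosed_iInter fun x => isClosed_iInter fun _ => isClosed_eq (by fun_prop) continuous_const
  · refine isClosed_eq ?_ ?_
    · refine continuous_pi fun x => ?_
      simp only [Matrix.mulVec, dotProduct]
      refine continuous_finset_sum _ fun y _ => (ct x y).mul (by fun_prop)
    · exact cq.smul continuous_snd

theorem tanh_mono {x y : ℝ} (h : x ≤ y) : Real.tanh x ≤ Real.tanh y := by
  rw [Real.tanh_eq_sinh_div_cosh, Real.tanh_eq_sinh_div_cosh, div_le_div_iff₀ (Real.cosh_pos _) (Real.cosh_pos _)]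
  have := Real.sinh_sub y x
  have h2 := Real.sinh_nonneg_iff.mpr (sub_nonneg.mpr h)
  linarith

theorem zero_free {N : ℕ} (h2 : 2 ≤ N) (he : Even N) {l0 : ℝ} (hl0 : 0 < l0) (hk : 3 * Real.tanh (π^2/(4*l0))^N ≤ 1/2)
    {ψ : (Fin N → Bool) → ℝ} (h : PV (ev l0) ψ) (w : ℂ) (h0 : 0 ≤ w.re) (h1 : w.re ≤ 1) :
    QF (TL l0 N w) ψ ≠ 0 := by
  set S : Set ((Fin N → Bool) → ℝ) := {v | ∑ x, v x^2 = 1}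
  have hS : IsCompact S := sphere_compact
  obtain ⟨l1, hl1⟩ : ∃ l1 : ℝ, l0 ≤ l1 ∧ 1 ≤ l1 ∧ 2^N * (2 * 8^N + 32^N) < l1 :=
    ⟨max l0 (max 1 (2^N * (2 * 8^N + 32^N) + 1)), le_max_left _ _, (le_max_left _ _).trans (le_max_right _ _),
      lt_of_lt_of_le (lt_add_one _) ((le_max_right _ _).trans (le_max_right _ _))⟩
  set I := Set.Icc l0 l1
  set G : Set (ℝ × ((Fin N → Bool) → ℝ)) := (I ×ˢ S) ∩ ({p | PV (ev p.1) p.2} ∩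
    {p | ∀ w : ℂ, 0 ≤ w.re → w.re ≤ 1 → 1/4 ≤ ‖QF (TL (max p.1 l0) N w) p.2‖})
  set Q : Set ℂ := Set.Icc 0 1 ×ℂ Set.Icc 0 (2*π/l0)
  set Bd : Set (ℝ × ((Fin N → Bool) → ℝ) × ℂ) := (I ×ˢ (S ×ˢ Q)) ∩ ({p | PV (ev p.1) p.2.1} ∩
    {p | QF (TL (max p.1 l0) N p.2.2) p.2.1 = 0})
  have cF := QF_cont hl0 N
  have hG : IsCompact G := by
    refine (isCompact_Icc.prod hS).inter_right ((PV_closed N).inter ?_)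
    simp only [Set.setOf_forall]
    refine isClosed_iInter fun w => isClosed_iInter fun _ => isClosed_iInter fun _ => isClosed_le continuous_const ?_
    exact (cF.comp (f := fun p : ℝ × ((Fin N → Bool) → ℝ) => (p.1, p.2, w)) (by fun_prop)).norm
  have hQ : IsCompact Q := IsCompact.reProdIm isCompact_Icc isCompact_Icc
  have hB : IsCompact Bd := by
    refine (isCompact_Icc.prod (hS.prod hQ)).inter_right (IsClosed.inter ?_ (isClosed_eq cF continuous_const))
    exact (PV_closed N).preimage (f := fun p : ℝ × ((Fin N → Bool) → ℝ) × ℂ => (p.1, p.2.1)) (by fun_prop)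
  have hG' := (hG.image continuous_fst).isClosed
  have hB' := (hB.image continuous_fst).isClosed
  have mB : ∀ l ∈ I, ∀ χ, PV (ev l) χ → ∀ w : ℂ, 0 ≤ w.re → w.re ≤ 1 → QF (TL l N w) χ = 0 → l ∈ Prod.fst '' Bd := by
    intro l hl χ hχ w h0 h1 hw
    obtain ⟨w', e1, e2, e3, e4⟩ := TL_period (lt_of_lt_of_le hl0 hl.1) N w
    refine ⟨(l, χ, w'), ⟨⟨hl, hχ.2.1, ?_⟩, hχ, ?_⟩, rfl⟩
    · refine ⟨⟨?_, ?_⟩, ⟨e2, e3.trans ?_⟩⟩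
      · show 0 ≤ w'.re
        rw [e1]; exact h0
      · show w'.re ≤ 1
        rw [e1]; exact h1
      · have := hl.1; gcongr
    · show QF (TL (max l l0) N w') χ = 0
      rw [max_eq_left hl.1, e4, hw]
  have hcov : I ⊆ Prod.fst '' G ∪ Prod.fst '' Bd := by
    intro l hl
    have hlp := lt_of_lt_of_le hl0 hl.1
    obtain ⟨χ, hχ⟩ := PV.exists (ev_pos l) he
    by_cases hz : ∀ w : ℂ, 0 ≤ w.re → w.re ≤ 1 → QF (TL l N w) χ ≠ 0
    · left
      refine ⟨(l, χ), ⟨⟨hl, hχ.2.1⟩, hχ, fun w h0 h1 => ?_⟩, rfl⟩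
      show 1/4 ≤ ‖QF (TL (max l l0) N w) χ‖
      rw [max_eq_left hl.1]
      have hk' : 3 * Real.tanh (π^2/(4*l))^N ≤ 1/2 := by
        refine le_trans ?_ hk
        have a1 : Real.tanh (π^2/(4*l)) ≤ Real.tanh (π^2/(4*l0)) := tanh_mono (by have := hl.1; gcongr)
        have a0 : 0 ≤ Real.tanh (π^2/(4*l)) := by
          have := tanh_mono (by positivity : 0 ≤ π^2/(4*l)); rwa [Real.tanh_zero] at this
        gcongr
      have := pl_lower hlp (by omega) he hχ hk' hz (fun _ => 1) (fun _ _ _ => differentiableAt_const _)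
        ⟨1, 1, fun w _ _ h => by simp⟩ (fun w _ => by simpa using phi_ge l w.im) w h0 h1
      simp at this
      linarith
    · right
      push Not at hz
      obtain ⟨w, h0, h1, hw⟩ := hz
      exact mB l hl χ hχ w h0 h1 hw
  have hdis : ∀ l, l ∈ Prod.fst '' G → l ∈ Prod.fst '' Bd → False := by
    rintro l ⟨⟨l', χ⟩, hg, rfl⟩ ⟨⟨l'', χ', w⟩, hb, hh⟩
    obtain rfl : l'' = l' := hh
    have hu := PV.unique (ev_pos l'') he hg.2.1 (hb.2.1 : PV (ev l'') χ')
    obtain rfl : χ' = χ := hu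
    have a1 := hg.2.2 w hb.1.2.2.1.1 hb.1.2.2.1.2
    have a2 : QF (TL (max l'' l0) N w) χ' = 0 := hb.2.2
    simp only at a1
    rw [a2] at a1
    norm_num at a1
  intro hw
  have b0 := mB l0 ⟨le_rfl, hl1.1⟩ ψ h w h0 h1 hw
  have g1 : l1 ∈ Prod.fst '' G := by
    rcases hcov (⟨hl1.1, le_rfl⟩ : l1 ∈ I) with h' | h'
    · exact h'
    · obtain ⟨⟨l'', χ', w⟩, hb, hh⟩ := h'
      obtain rfl : l'' = l1 := hh
      have a2 : QF (TL (max l'' l0) N w) χ' = 0 := hb.2.2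
      rw [max_eq_left hl1.1] at a2
      exact absurd a2 (start_zero_free h2 he hl1.2.1 hl1.2.2 hb.2.1 w hb.1.2.2.1.1 hb.1.2.2.1.2)
  obtain ⟨l, -, hl⟩ := isPreconnected_closed_iff.mp (isPreconnected_Icc : IsPreconnected I) _ _ hG' hB' hcov
    ⟨l1, ⟨hl1.1, le_rfl⟩, g1⟩ ⟨l0, ⟨le_rfl, hl1.1⟩, b0⟩
  exact hdis l hl.1 hl.2

def Af (l : ℝ) : ℝ := Real.exp (-l/4) * (l / Real.sinh l)

theorem Af_pos {l : ℝ} (hl : 0 < l) : 0 < Af l := by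
  have := Real.sinh_pos_iff.mpr hl
  unfold Af; positivity

theorem bd_real {l : ℝ} (hl : 0 < l) (hl1 : l ≤ 1) (v : ℝ) :
    l^2 * (1 + v^2) * Real.exp (-(2 * l * v^2)) ≤ Real.sinh l^2 + Real.sin (l*v)^2 := by
  have hs : l ≤ Real.sinh l := Real.self_le_sinh_iff.mpr hl.le
  have hs2 : l^2 ≤ Real.sinh l^2 := pow_le_pow_left₀ hl.le hs 2
  rw [Real.exp_neg, ← div_eq_mul_inv, div_le_iff₀ (Real.exp_pos _)]
  by_cases hx : |l * v| ≤ 1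
  · have hsin : (l*v)^2 * (1 - (l*v)^2/2) ≤ Real.sin (l*v)^2 := by
      generalize l * v = x at hx
      have h1 : |x| - |x|^3/4 ≤ |Real.sin x| := by
        rcases eq_or_ne x 0 with rfl | h0
        · simp
        have := Real.sin_gt_sub_cube (abs_pos.mpr h0)
        have h' : Real.sin |x| ≤ |Real.sin x| := by
          rcases abs_choice x with h | h
          · rw [h]; exact le_abs_self _
          · rw [h, Real.sin_neg]; exact neg_le_abs _
        have hc : 0 ≤ |x|^3 := by positivity
        linarith [this]
      have h3 : 0 ≤ |x| - |x|^3/4 := by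
        have : |x|^3 ≤ |x| := by
          have := abs_nonneg x
          nlinarith [mul_nonneg this (by nlinarith : 0 ≤ 1 - |x|^2)]
        have := abs_nonneg x
        linarith
      have h2 := pow_le_pow_left₀ h3 h1 2
      rw [sq_abs] at h2
      rw [← sq_abs x]
      refine le_trans ?_ h2
      nlinarith [sq_nonneg (|x|^3)]
    have hE : 1 + 2 * (l*v)^2 ≤ Real.exp (2 * l * v^2) := by
      have a := Real.add_one_le_exp (2 * l * v^2)
      have : (l*v)^2 ≤ l * v^2 := by nlinarith [sq_nonneg v, mul_nonneg hl.le (sq_nonneg v)]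
      linarith
    have hx2 : (l*v)^2 ≤ 1 := by rw [← sq_abs]; have := abs_nonneg (l*v); nlinarith
    have e1 : l^2 * (1 + v^2) = l^2 + (l*v)^2 := by ring
    rw [e1]
    set t := (l*v)^2 with ht
    have ht0 : 0 ≤ t := sq_nonneg _
    calc l^2 + t ≤ (l^2 + t * (1 - t/2)) * (1 + 2 * t) := by
          nlinarith [mul_nonneg ht0 (sq_nonneg l), mul_nonneg (mul_nonneg ht0 ht0) (sub_nonneg.mpr hx2)]
      _ ≤ _ := by
          refine mul_le_mul (by linarith) hE (by positivity) (by positivity)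
  · push Not at hx
    have h1 : |v| ≤ l * v^2 := by
      rw [abs_mul, abs_of_pos hl] at hx
      rw [← sq_abs v]
      nlinarith [abs_nonneg v]
    have h2 := Real.quadratic_le_exp_of_nonneg (by positivity : 0 ≤ 2 * l * v^2)
    have h3 : 1 + v^2 ≤ Real.exp (2 * l * v^2) := by
      have h4 : v^2 ≤ (l * v^2)^2 := by
        rw [← sq_abs v]; rw [← sq_abs v] at h1
        exact pow_le_pow_left₀ (abs_nonneg _) h1 2
      have : 0 ≤ l * v^2 := by positivity
      nlinarith
    have h5 : 0 ≤ Real.sin (l*v)^2 := sq_nonneg _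
    exact mul_le_mul (by linarith) h3 (by positivity) (by positivity) |>.trans (le_of_eq rfl)

theorem QF_lower {N : ℕ} (h2 : 2 ≤ N) (he : Even N) {l : ℝ} (hl : 0 < l) (hl1 : l ≤ 1) (hk : 3 * Real.tanh (π^2/(4*l))^N ≤ 1/2)
    {ψ : (Fin N → Bool) → ℝ} (h : PV (ev l) ψ) :
    (Af l * ‖kap (1/2)‖)^N ≤ 4 * ‖QF (TL l N (1/2)) ψ‖ := by
  have hsp := Real.sinh_pos_iff.mpr hl
  have hA := Af_pos hl
  have hre : ∀ w : ℂ, ((l:ℂ) * (w - 1/2)^2).re = l * ((w.re - 1/2)^2 - w.im^2) := by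
    intro w
    rw [Complex.re_ofReal_mul, sq, Complex.mul_re]
    simp
    left; ring
  have hn : ∀ w : ℂ, ‖(Af l : ℂ) * kap w * Complex.exp (l * (w - 1/2)^2)‖ = Af l * ‖kap w‖ * Real.exp (l * ((w.re - 1/2)^2 - w.im^2)) := by
    intro w
    rw [norm_mul, norm_mul, Complex.norm_real, Real.norm_eq_abs, abs_of_pos hA, Complex.norm_exp, hre]
  obtain ⟨K, hK, hgr⟩ := kap_growth
  have key := pl_lower hl (by omega) he h hk (fun w => zero_free h2 he hl hk h w)
    (fun w => (Af l : ℂ) * kap w * Complex.exp (l * (w - 1/2)^2)) ?_ ⟨Af l * K * Real.exp l, π, ?_⟩ ?_ (1/2) (by norm_num) (by norm_num)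
  · simpa [hn, abs_of_pos hA] using key
  · intro w w0 w1
    exact ((differentiableAt_const _).mul (kap_diff w0 w1)).mul (by fun_prop)
  · intro w w0 w1 wi
    rw [hn]
    have a1 := (hgr w w0 w1 wi).1
    have a2 : Real.exp (l * ((w.re - 1/2)^2 - w.im^2)) ≤ Real.exp l := by
      apply Real.exp_le_exp.mpr
      have : (w.re - 1/2)^2 - w.im^2 ≤ 1 := by nlinarith [sq_nonneg w.im]
      nlinarith
    calc Af l * ‖kap w‖ * Real.exp (l * ((w.re - 1/2)^2 - w.im^2)) ≤ Af l * (K * Real.exp (π * |w.im|)) * Real.exp l := by gcongr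
      _ = _ := by ring
  · intro w hw
    beta_reduce
    rw [hn]
    have hkn : ‖kap w‖^2 = 1 + w.im^2 := by
      rcases hw with hw | hw
      · exact kap_norm_im hw
      · exact kap_norm_re_one hw
    have hr : (w.re - 1/2)^2 = 1/4 := by rcases hw with hw | hw <;> rw [hw] <;> norm_num
    rw [hr, mul_pow, mul_pow, hkn]
    have hb := bd_real hl hl1 w.im
    have e1 : Af l^2 * (1 + w.im^2) * Real.exp (l * (1/4 - w.im^2))^2 =
        (l^2 * (1 + w.im^2) * Real.exp (-(2 * l * w.im^2))) / Real.sinh l^2 := by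
      unfold Af
      have e2 : Real.exp (-l/4)^2 * Real.exp (l * (1/4 - w.im^2))^2 = Real.exp (-(2 * l * w.im^2)) := by
        rw [← mul_pow, ← Real.exp_add, ← Real.exp_nat_mul]; congr 1; push_cast; ring
      rw [← e2]
      field_simp
    rw [e1, phi, div_le_iff₀ (by positivity), add_mul, div_mul_cancel₀ _ (by positivity)]
    linarith

theorem Af_ge {l : ℝ} (hl : 0 < l) : Real.exp (-(2*l)) ≤ Af l := by
  have hsp := Real.sinh_pos_iff.mpr hl
  have h1 : Real.sinh l ≤ l * Real.exp l := by
    rw [Real.sinh_eq]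
    have e : Real.exp (-l) = Real.exp l * Real.exp (-(2*l)) := by rw [← Real.exp_add]; congr 1; ring
    rw [e]
    have := Real.add_one_le_exp (-(2*l))
    nlinarith [Real.exp_pos l]
  unfold Af
  have h2 : Real.exp (-l) ≤ l / Real.sinh l := by
    rw [le_div_iff₀ hsp, Real.exp_neg, inv_mul_le_iff₀ (Real.exp_pos _)]; linarith
  calc Real.exp (-(2*l)) ≤ Real.exp (-l/4) * Real.exp (-l) := by
        rw [← Real.exp_add]; apply Real.exp_le_exp.mpr; linarith
    _ ≤ _ := by gcongr

theorem B_eq (N : ℕ) : TM (lt (1:ℝ) 1 2) N = (2:ℝ)^N • TM (lt (1/2:ℝ) (1/2) 1) N := by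
  rw [← TM_smul]
  congr 1
  ext s s' h h'
  simp only [lt, Matrix.smul_apply, smul_eq_mul]
  split_ifs <;> norm_num

theorem rq_QF {X : Type*} [Fintype X] (A : Matrix X X ℝ) (T : Matrix X X ℂ) (h : ∀ x y, T x y = ((A x y : ℝ):ℂ)) (v : X → ℝ) :
    QF T v = ((rq A v : ℝ) : ℂ) := by
  unfold QF rq
  push_cast
  simp only [h]

theorem TM_mono {e e' : ℝ} (he : 0 ≤ e) (h : e ≤ e') {N : ℕ} (x y : Fin N → Bool) :
    TM (lt e e 1) N x y ≤ TM (lt e' e' 1) N x y := by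
  unfold TM
  refine Finset.sum_le_sum fun k _ => Finset.prod_le_prod (fun i _ => lt_nonneg he _ _ _ _) fun i _ => ?_
  unfold lt
  split_ifs <;> first | exact h | exact le_rfl

theorem B_diag (N : ℕ) (x : Fin N → Bool) : 1 ≤ TM (lt (1:ℝ) 1 2) N x x := by
  unfold TM
  have hnn : ∀ s s' h h', 0 ≤ lt (1:ℝ) 1 2 s s' h h' := by
    intro s s' h h'; unfold lt; split_ifs <;> norm_num
  refine le_trans ?_ (Finset.single_le_sum (f := fun h : Fin N → Bool => ∏ i, lt (1:ℝ) 1 2 (x i) (x i) (h (predF i)) (h i))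
    (fun k _ => Finset.prod_nonneg fun i _ => hnn _ _ _ _) (Finset.mem_univ (fun _ => true)))
  refine le_of_eq (Finset.prod_eq_one fun i _ => ?_).symm
  simp [lt]

theorem mu_exists (N : ℕ) : ∃ μ : ℝ,
    Tendsto (fun M : ℕ => Real.log (Z N M 1 1 2) / (M * N)) atTop (nhds (Real.log μ / N)) ∧
    (∀ v : (Fin N → Bool) → ℝ, ∑ x, v x^2 = 1 → rq (TM (lt (1:ℝ) 1 2) N) v ≤ μ) ∧
    ∃ ψ : (Fin N → Bool) → ℝ, ∑ x, ψ x^2 = 1 ∧ rq (TM (lt (1:ℝ) 1 2) N) ψ = μ := by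
  have hs := TM_symm (1:ℝ) 2 N
  have h0 : ∀ x y, 0 ≤ TM (lt (1:ℝ) 1 2) N x y := by
    intro x y
    rw [B_eq]
    exact mul_nonneg (by positivity) (TM_nonneg (by norm_num) x y)
  obtain ⟨μ, ψ, a1, a2, a3, a4, a5⟩ := rayleigh hs h0
  refine ⟨μ, ?_, fun v hv => ?_, ψ, a2, a4⟩
  · refine (trace_lim hs h0 (B_diag N) ψ a2 a3 a5 N).congr' ?_
    filter_upwards [eventually_gt_atTop 0] with M hM
    rw [Z_eq_trace hM]
  · have := a5 v; rwa [hv, mul_one] at this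

theorem rq_B (N : ℕ) (v : (Fin N → Bool) → ℝ) : rq (TM (lt (1:ℝ) 1 2) N) v = 2^N * rq (TM (lt (1/2:ℝ) (1/2) 1) N) v := by
  rw [B_eq]
  simp only [rq, Matrix.smul_apply, smul_eq_mul, Finset.mul_sum]
  refine Finset.sum_congr rfl fun x _ => Finset.sum_congr rfl fun y _ => by ring

theorem mu_upper {N : ℕ} (hN : 0 < N) {ψ : (Fin N → Bool) → ℝ} (h : ∑ x, ψ x^2 = 1) :
    rq (TM (lt (1:ℝ) 1 2) N) ψ ≤ 2 * (2 * ‖kap (1/2)‖)^N := by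
  have h1 := upper_strip hN ψ h (1/2) (by norm_num) (by norm_num)
  rw [rq_QF (TM (lt (1/2:ℝ) (1/2) 1) N) _ (fun x y => by rw [← TM_ofReal]; norm_num) ψ, Complex.norm_real, Real.norm_eq_abs] at h1
  have h2 := (le_abs_self _).trans h1
  rw [rq_B, mul_pow]
  calc _ ≤ (2:ℝ)^N * (2 * ‖kap (1/2)‖^N) := by gcongr
    _ = _ := by ring

theorem mu_lower {N : ℕ} (h2 : 2 ≤ N) (he : Even N) {l : ℝ} (hl : 0 < l) (hl1 : l ≤ 1) (hk : 3 * Real.tanh (π^2/(4*l))^N ≤ 1/2) :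
    ∃ v : (Fin N → Bool) → ℝ, ∑ x, v x^2 = 1 ∧ (2 * ‖kap (1/2)‖ * Real.exp (-(2*l)))^N / 4 ≤ rq (TM (lt (1:ℝ) 1 2) N) v := by
  obtain ⟨ψ, h⟩ := PV.exists (ev_pos l) he (N := N)
  refine ⟨ψ, h.2.1, ?_⟩
  have h3 := QF_lower h2 he hl hl1 hk h
  rw [rq_QF _ _ (TL_half hl N) ψ, Complex.norm_real, Real.norm_eq_abs] at h3
  have nn : 0 ≤ rq (TM (lt (ev l) (ev l) 1) N) ψ := Finset.sum_nonneg fun x _ => Finset.sum_nonneg fun y _ =>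
    mul_nonneg (mul_nonneg (h.1 x) (TM_nonneg (ev_pos l).le x y)) (h.1 y)
  rw [abs_of_nonneg nn] at h3
  have h4 : rq (TM (lt (ev l) (ev l) 1) N) ψ ≤ rq (TM (lt (1/2:ℝ) (1/2) 1) N) ψ := by
    unfold rq
    refine Finset.sum_le_sum fun x _ => Finset.sum_le_sum fun y _ => ?_
    have := TM_mono (ev_pos l).le (ev_le l) x y
    have := h.1 x
    have := h.1 y
    gcongr
  have h5 : (‖kap (1/2)‖ * Real.exp (-(2*l)))^N ≤ (Af l * ‖kap (1/2)‖)^N := by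
    rw [mul_comm (Af l)]
    have := Af_ge hl
    gcongr
  rw [rq_B, mul_assoc, mul_pow 2]
  have : (‖kap (1/2)‖ * Real.exp (-(2*l)))^N / 4 ≤ rq (TM (lt (1/2:ℝ) (1/2) 1) N) ψ := by linarith
  calc _ = (2:ℝ)^N * ((‖kap (1/2)‖ * Real.exp (-(2*l)))^N / 4) := by ring
    _ ≤ _ := by gcongr

theorem kap_log : Real.log (2 * ‖kap (1/2)‖) = 2 * Real.log (2 * Real.Gamma (5/4) / Real.Gamma (3/4)) := by
  have h : 2 * ‖kap (1/2)‖ = (2 * Real.Gamma (5/4) / Real.Gamma (3/4))^2 := by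
    have := congrArg norm kap_half
    rw [norm_mul, Complex.norm_real, Real.norm_eq_abs, abs_of_nonneg (sq_nonneg _)] at this
    simpa using this
  rw [h, Real.log_pow]; norm_num

theorem main_aux : FreeEnergyIs 1 1 2 (2 * Real.log (2 * Real.Gamma (5/4) / Real.Gamma (3/4))) := by
  choose μ m1 m2 m3 using mu_exists
  refine ⟨fun N => Real.log (μ N) / N, fun N _ _ => m1 N, ?_⟩
  rw [← kap_log]
  set κ := 2 * ‖kap (1/2)‖ with hκ
  have hκp : 0 < κ := by
    have := norm_pos_iff.mpr (kap_ne (w := 1/2) (by norm_num) (by norm_num)); positivity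
  rw [Metric.tendsto_nhds]
  intro ε hε
  rw [eventually_inf_principal]
  obtain ⟨l, hl, hl1, hle⟩ : ∃ l : ℝ, 0 < l ∧ l ≤ 1 ∧ 2 * l ≤ ε / 2 :=
    ⟨min 1 (ε/4), by positivity, min_le_left _ _, by have := min_le_right 1 (ε/4); linarith⟩
  have ht0 : 0 ≤ Real.tanh (π^2/(4*l)) := by
    have := tanh_mono (by positivity : 0 ≤ π^2/(4*l)); rwa [Real.tanh_zero] at this
  have ht1 : Real.tanh (π^2/(4*l)) < 1 := Real.tanh_lt_one _
  have e1 : ∀ᶠ N : ℕ in atTop, Real.tanh (π^2/(4*l))^N < 1/6 :=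
    (tendsto_pow_atTop_nhds_zero_of_lt_one ht0 ht1).eventually (gt_mem_nhds (by norm_num))
  have e2 : ∀ᶠ N : ℕ in atTop, Real.log 4 / (N:ℝ) < ε / 2 :=
    (tendsto_const_div_atTop_nhds_zero_nat _).eventually (gt_mem_nhds (by positivity))
  filter_upwards [e1, e2, eventually_ge_atTop 2] with N n1 n2 n3 hev
  have hNp : (0:ℝ) < N := by exact_mod_cast (by omega : 0 < N)
  obtain ⟨ψ, p1, p2⟩ := m3 N
  have hu := mu_upper (by omega) p1
  rw [p2] at hu
  obtain ⟨v, v1, v2⟩ := mu_lower n3 hev hl hl1 (by linarith)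
  have hlow := v2.trans (m2 N v v1)
  rw [← hκ] at hu hlow
  have hlp : 0 < (κ * Real.exp (-(2*l)))^N / 4 := by positivity
  have hμ : 0 < μ N := hlp.trans_le hlow
  have u1 := Real.log_le_log hμ hu
  have u2 := Real.log_le_log hlp hlow
  rw [Real.log_mul (by norm_num) (by positivity), Real.log_pow] at u1
  rw [Real.log_div (by positivity) (by norm_num), Real.log_pow, Real.log_mul hκp.ne' (Real.exp_pos _).ne', Real.log_exp] at u2
  have l24 : Real.log 2 ≤ Real.log 4 := Real.log_le_log (by norm_num) (by norm_num)
  rw [div_lt_iff₀ hNp] at n2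
  rw [Real.dist_eq, abs_lt]
  constructor
  · rw [lt_sub_iff_add_lt, lt_div_iff₀ hNp]
    nlinarith
  · rw [sub_lt_iff_lt_add, div_lt_iff₀ hNp]
    nlinarith

end SixVertexFE

namespace SixVertexFE

/-- **Free energy of the six-vertex model at a = b = 1, c = 2**:
the free energy exists and equals `2 log(2 Γ(5/4) / Γ(3/4))`. -/
theorem free_energy_c_two :
    FreeEnergyIs 1 1 2 (2 * Real.log (2 * Real.Gamma (5/4) / Real.Gamma (3/4))) := by
  exact main_aux

end SixVertexFE
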